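/- arXiv:2310.01048 — 2 statements merged into one kernel-verified Lean document; each statement's English description precedes it below -/
import Mathlib

section
/- L¹–L∞ continuity estimate (Proposition 1.4): For every real μ ≥ 1 there exists a constant C > 0, independent of W, such that the following holds: for every choice of continuous ν, a : ℝ → ℝ with 1/μ ≤ ν(x) ≤ μ and 1/μ ≤ a(x) ≤ μ for all x, every real W ≥ 0, every fundamental solution P of the canonical equation, and all p₀, q₀ ∈ L∞(ℝ) with p₀ − q₀ ∈ L¹(ℝ), the functions p(t,x) := ∫_ℝ ν(y)P(t,x,y)p₀(y)dy and q(t,x) := ∫_ℝ ν(y)P(t,x,y)q₀(y)dy satisfy sup_{x ∈ ℝ} |p(t,x) − q(t,x)| ≤ (C/√t)·‖p₀ − q₀‖_{L¹(ℝ)} for every t > 0. -/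
open MeasureTheory Filter

/-- Two-sided ellipticity bounds `1/μ ≤ f ≤ μ`. -/
def Elliptic (μ : ℝ) (f : ℝ → ℝ) : Prop := ∀ x : ℝ, 1 / μ ≤ f x ∧ f x ≤ μ

/-- A classical solution of the canonical equation
`ν(x)∂ₜp − ∂ₓ(ν(x)a(x)∂ₓp) + W∂ₓp = 0` for every time `t ∈ s` and every `x ∈ ℝ`. -/
def IsCanonicalSolOn (ν a : ℝ → ℝ) (W : ℝ) (u : ℝ → ℝ → ℝ) (s : Set ℝ) : Prop :=
  ∃ ut ux q : ℝ → ℝ → ℝ, ∀ t ∈ s, ∀ x : ℝ,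
    HasDerivAt (fun τ => u τ x) (ut t x) t ∧
    HasDerivAt (fun ξ => u t ξ) (ux t x) x ∧
    HasDerivAt (fun ξ => ν ξ * a ξ * ux t ξ) (q t x) x ∧
    ν x * ut t x - q t x + W * ux t x = 0

/-- A corrector: `T(0) = 0`, `−(aνT')' + WT' = Wν` and `1/μ⁵ ≤ T' ≤ μ⁵`. -/
def IsCorrector (μ : ℝ) (ν a : ℝ → ℝ) (W : ℝ) (T : ℝ → ℝ) : Prop :=
  T 0 = 0 ∧ ∃ T' : ℝ → ℝ,
    (∀ x, HasDerivAt T (T' x) x) ∧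
    (∀ x, HasDerivAt (fun y => a y * ν y * T' y) (W * T' x - W * ν x) x) ∧
    (∀ x, 1 / μ ^ 5 ≤ T' x ∧ T' x ≤ μ ^ 5)

/-- An adjoint corrector: `T̃(0) = 0`, `(aνT̃')' + WT̃' = Wν` and `1/μ⁵ ≤ T̃' ≤ μ⁵`. -/
def IsAdjointCorrector (μ : ℝ) (ν a : ℝ → ℝ) (W : ℝ) (T : ℝ → ℝ) : Prop :=
  T 0 = 0 ∧ ∃ T' : ℝ → ℝ,
    (∀ x, HasDerivAt T (T' x) x) ∧
    (∀ x, HasDerivAt (fun y => a y * ν y * T' y) (W * ν x - W * T' x) x) ∧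
    (∀ x, 1 / μ ^ 5 ≤ T' x ∧ T' x ≤ μ ^ 5)

/-- A fundamental solution of the canonical equation. -/
def IsFundSol (ν a : ℝ → ℝ) (W : ℝ) (P : ℝ → ℝ → ℝ → ℝ) : Prop :=
  (∀ y : ℝ, IsCanonicalSolOn ν a W (fun t x => P t x y) (Set.Ioi 0)) ∧
  (∀ y : ℝ, ∀ t : ℝ, 0 < t → ∀ x : ℝ, 0 ≤ P t x y) ∧
  (∀ y : ℝ, ∀ t : ℝ, 0 < t → ∫ x : ℝ, ν x * P t x y = 1) ∧
  (∀ y : ℝ, ∀ φ : ℝ → ℝ, Continuous φ → (∃ B : ℝ, ∀ x, |φ x| ≤ B) →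
    Tendsto (fun t => ∫ x : ℝ, ν x * P t x y * φ x)
      (nhdsWithin 0 (Set.Ioi 0)) (nhds (φ y))) ∧
  (∀ s t : ℝ, 0 < s → 0 < t → ∀ x y : ℝ,
    P (t + s) x y = ∫ z : ℝ, ν z * P t x z * P s z y)

/-!
The bound on `p - q` reduces to a bound `P t x y ≤ C / √t` on the kernel together with its
measurability in `y`. Along the flow `θ' = (ν a) ∘ θ` the equation becomes `ρ ∂ₜv = ∂²v - W ∂v`
with `ρ` bounded above and below and `∫ ρ v = 1`. A constant drift contributes nothing to the
energy identity, so Nash's argument gives a bound on `v` which does not see `W`.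

The difficulty is regularity: `∂ₜv` and the space derivatives are only assumed to exist
pointwise, so the energy identity is not available for `v`. Time integrals `∫ v(s, ·) ds` are
better: regularizing `v` by infimal convolution in time shows that the difference between the
integrated equation and its classical counterpart is convex in the scale variable of the drift,
and the finite mass of `v` forces it to solve the homogeneous equation. The energy argument is
then applied to Steklov averages.

Semicontinuity of `v`, which these comparisons need, comes from Chapman–Kolmogorov and Fatou's
lemma. Positivity of `P` comes from comparison with a travelling bump, and makes `P t x ·`
measurable as a quotient of an integrable function by a continuous one.
-/

namespace DriftHeat

open Set Topology

/-- The scale function of the operator `∂² - W ∂`: the primitive of `exp (W y)` vanishing at `0`. -/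
noncomputable def scale (W y : ℝ) : ℝ := if W = 0 then y else (Real.exp (W * y) - 1) / W

/-- A second difference of `g` at `y` with step `k` adapted to the operator `∂² - W ∂`: it vanishes
on the kernel of that operator, not only in the limit `k → 0`. -/
noncomputable def driftDiff (W : ℝ) (g : ℝ → ℝ) (y k : ℝ) : ℝ :=
  Real.exp (-(W * k / 2)) * (g (y + k) - g y) + Real.exp (W * k / 2) * (g (y - k) - g y)

/-- Convexity of `g` as a function of the scale variable, written with secant slopes. -/
def ScaleConvex (W : ℝ) (g : ℝ → ℝ) : Prop :=
  ∀ ⦃a b c : ℝ⦄, a < b → b < c →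
    (g b - g a) * (scale W c - scale W b) ≤ (g c - g b) * (scale W b - scale W a)

section Scale

variable {W : ℝ}

theorem mul_scale (W y : ℝ) : W * scale W y = Real.exp (W * y) - 1 := by
  by_cases hW : W = 0
  · simp [hW]
  · simp only [scale, hW, if_false]
    field_simp

theorem hasDerivAt_scale (W y : ℝ) : HasDerivAt (scale W) (Real.exp (W * y)) y := by
  by_cases hW : W = 0
  · subst hW
    have hscale : scale 0 = id := by
      funext z
      simp [scale]
    simpa [hscale] using hasDerivAt_id y
  · have hderiv := ((((hasDerivAt_id y).const_mul W).exp).sub_const 1).div_const W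
    have hscale : scale W = fun y => (Real.exp (W * y) - 1) / W := by
      funext z
      simp [scale, hW]
    rw [hscale]
    refine hderiv.congr_deriv ?_
    simp only [id_eq, mul_one]
    field_simp

theorem continuous_scale (W : ℝ) : Continuous (scale W) :=
  continuous_iff_continuousAt.2 fun y => (hasDerivAt_scale W y).continuousAt

theorem strictMono_scale (W : ℝ) : StrictMono (scale W) :=
  strictMono_of_hasDerivAt_pos (hasDerivAt_scale W) fun _ => Real.exp_pos _

theorem driftDiff_add (W : ℝ) (f g : ℝ → ℝ) (y k : ℝ) :
    driftDiff W (fun x => f x + g x) y k = driftDiff W f y k + driftDiff W g y k := by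
  simp only [driftDiff]
  ring

theorem driftDiff_neg (W : ℝ) (f : ℝ → ℝ) (y k : ℝ) :
    driftDiff W (fun x => -f x) y k = -driftDiff W f y k := by
  simp only [driftDiff]
  ring

theorem driftDiff_le_driftDiff {f g : ℝ → ℝ} {y : ℝ} (hle : ∀ x, f x - f y ≤ g x - g y) (k : ℝ) :
    driftDiff W f y k ≤ driftDiff W g y k := by
  exact add_le_add (mul_le_mul_of_nonneg_left (hle _) (Real.exp_pos _).le)
    (mul_le_mul_of_nonneg_left (hle _) (Real.exp_pos _).le)

theorem driftDiff_scale (W y k : ℝ) : driftDiff W (scale W) y k = 0 := by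
  by_cases hW : W = 0
  · simp [hW, driftDiff, scale]
  · have hplus : Real.exp (W * (y + k)) =
        Real.exp (W * y) * Real.exp (W * k / 2) * Real.exp (W * k / 2) := by
      rw [← Real.exp_add, ← Real.exp_add]
      ring_nf
    have hminus : Real.exp (W * (y - k)) =
        Real.exp (W * y) * Real.exp (-(W * k / 2)) * Real.exp (-(W * k / 2)) := by
      rw [← Real.exp_add, ← Real.exp_add]
      ring_nf
    have hinv : Real.exp (W * k / 2) * Real.exp (-(W * k / 2)) = 1 := by
      rw [← Real.exp_add, add_neg_cancel, Real.exp_zero]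
    simp only [driftDiff, scale, hW, if_false]
    rw [hplus, hminus]
    field_simp
    linear_combination Real.exp (W * y) *
      (Real.exp (W * k / 2) + Real.exp (-(W * k / 2))) * hinv

theorem exists_hasDerivAt_driftDiff {f f' : ℝ → ℝ} {y f'' : ℝ}
    (hf : ∀ᶠ z in 𝓝 y, HasDerivAt f (f' z) z) (hf' : HasDerivAt f' f'' y) :
    ∃ N' : ℝ → ℝ, (∀ᶠ k in 𝓝 0, HasDerivAt (driftDiff W f y) (N' k) k) ∧ N' 0 = 0 ∧
      HasDerivAt N' (2 * (f'' - W * f' y)) 0 := by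
  have hE₁ (k : ℝ) : HasDerivAt (fun k : ℝ => Real.exp (-(W * k / 2)))
      (Real.exp (-(W * k / 2)) * (-(W / 2))) k := by
    simpa using ((((hasDerivAt_id k).const_mul W).div_const 2).neg).exp
  have hE₂ (k : ℝ) : HasDerivAt (fun k : ℝ => Real.exp (W * k / 2))
      (Real.exp (W * k / 2) * (W / 2)) k := by
    simpa using (((hasDerivAt_id k).const_mul W).div_const 2).exp
  refine ⟨fun k => Real.exp (-(W * k / 2)) * (-(W / 2)) * (f (y + k) - f y) +
      Real.exp (-(W * k / 2)) * f' (y + k) +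
      (Real.exp (W * k / 2) * (W / 2) * (f (y - k) - f y) + Real.exp (W * k / 2) * (-f' (y - k))),
    ?_, by simp, ?_⟩
  · have hadd : Tendsto (fun k : ℝ => y + k) (𝓝 0) (𝓝 y) := by
      simpa using (continuous_const_add y).tendsto (0 : ℝ)
    have hsub : Tendsto (fun k : ℝ => y - k) (𝓝 0) (𝓝 y) := by
      simpa using (continuous_sub_left y).tendsto (0 : ℝ)
    filter_upwards [hadd.eventually hf, hsub.eventually hf] with k hk₁ hk₂
    exact ((hE₁ k).mul ((hk₁.comp_const_add y k).sub_const (f y))).add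
      ((hE₂ k).mul ((hk₂.comp_const_sub y k).sub_const (f y)))
  · have hf₁ : HasDerivAt f (f' y) (y + 0) := by simpa using hf.self_of_nhds
    have hf₂ : HasDerivAt f (f' y) (y - 0) := by simpa using hf.self_of_nhds
    have hf'₁ : HasDerivAt f' f'' (y + 0) := by simpa using hf'
    have hf'₂ : HasDerivAt f' f'' (y - 0) := by simpa using hf'
    refine ((((hE₁ 0).mul_const _).mul ((hf₁.comp_const_add y 0).sub_const _)).add
      ((hE₁ 0).mul (hf'₁.comp_const_add y 0))).add
      ((((hE₂ 0).mul_const _).mul ((hf₂.comp_const_sub y 0).sub_const _)).add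
      ((hE₂ 0).mul (hf'₂.comp_const_sub y 0).neg)) |>.congr_deriv ?_
    simp only [mul_zero, zero_div, neg_zero, Real.exp_zero, one_mul, add_zero, sub_zero, sub_self,
      Pi.neg_apply]
    ring

theorem tendsto_driftDiff_div_sq {f f' : ℝ → ℝ} {y f'' : ℝ}
    (hf : ∀ᶠ z in 𝓝 y, HasDerivAt f (f' z) z) (hf' : HasDerivAt f' f'' y) :
    Tendsto (fun k => driftDiff W f y k / k ^ 2) (𝓝[>] 0) (𝓝 (f'' - W * f' y)) := by
  obtain ⟨N', hN, hN'0, hN'⟩ := exists_hasDerivAt_driftDiff (W := W) hf hf'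
  refine HasDerivAt.lhopital_zero_nhdsGT (f' := N') (g' := fun k => 2 * k)
    (hN.filter_mono nhdsWithin_le_nhds) (.of_forall fun k => by simpa using hasDerivAt_pow 2 k)
    (by filter_upwards [self_mem_nhdsWithin] with k (hk : 0 < k); positivity) ?_ ?_ ?_
  · simpa [driftDiff] using hN.self_of_nhds.continuousAt.tendsto.mono_left nhdsWithin_le_nhds
  · simpa using ((continuous_pow 2).tendsto (0 : ℝ)).mono_left nhdsWithin_le_nhds
  · have hslope := (hasDerivAt_iff_tendsto_slope_zero.1 hN').mono_left
      (nhdsWithin_mono (s := Ioi 0) 0 fun k hk => ne_of_gt hk)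
    simp only [zero_add, hN'0, sub_zero, smul_eq_mul] at hslope
    convert hslope.const_mul (1 / 2) using 2
    · ring
    · ring

theorem eventually_driftDiff_le {f f' : ℝ → ℝ} {y f'' : ℝ}
    (hf : ∀ᶠ z in 𝓝 y, HasDerivAt f (f' z) z) (hf' : HasDerivAt f' f'' y) {b : ℝ}
    (hb : f'' - W * f' y < b) : ∀ᶠ k in 𝓝[>] 0, driftDiff W f y k ≤ b * k ^ 2 := by
  filter_upwards [(tendsto_driftDiff_div_sq hf hf').eventually_le_const hb, self_mem_nhdsWithin]
    with k hk (hk₀ : 0 < k)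
  exact (div_le_iff₀ (by positivity)).1 hk

theorem eventually_le_driftDiff {f f' : ℝ → ℝ} {y f'' : ℝ}
    (hf : ∀ᶠ z in 𝓝 y, HasDerivAt f (f' z) z) (hf' : HasDerivAt f' f'' y) {b : ℝ}
    (hb : b < f'' - W * f' y) : ∀ᶠ k in 𝓝[>] 0, b * k ^ 2 ≤ driftDiff W f y k := by
  filter_upwards [(tendsto_driftDiff_div_sq hf hf').eventually_const_le hb, self_mem_nhdsWithin]
    with k hk (hk₀ : 0 < k)
  exact (le_div_iff₀ (by positivity)).1 hk

end Scale

section ScaleConvex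

variable {W : ℝ} {g : ℝ → ℝ}

theorem ScaleConvex.of_tendsto {ι : Type*} {l : Filter ι} [l.NeBot] {f : ι → ℝ → ℝ}
    (hf : ∀ᶠ i in l, ScaleConvex W (f i)) (hlim : ∀ y, Tendsto (f · y) l (𝓝 (g y))) :
    ScaleConvex W g := fun a b c hab hbc =>
  le_of_tendsto_of_tendsto (((hlim b).sub (hlim a)).mul_const _)
    (((hlim c).sub (hlim b)).mul_const _) (hf.mono fun _ hi => hi hab hbc)

theorem ScaleConvex.convexOn_comp_invFun (hg : ScaleConvex W g) :
    ConvexOn ℝ (range (scale W)) (g ∘ Function.invFun (scale W)) := by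
  have hmono := strictMono_scale W
  refine convexOn_of_slope_mono_adjacent
    (isPreconnected_range (continuous_scale W)).ordConnected.convex ?_
  rintro _ y _ ⟨a, rfl⟩ ⟨c, rfl⟩ hay hyc
  obtain ⟨b, rfl⟩ := (isPreconnected_range (continuous_scale W)).ordConnected.out
    (mem_range_self a) (mem_range_self c) ⟨hay.le, hyc.le⟩
  simp only [Function.comp, Function.leftInverse_invFun hmono.injective _]
  rw [div_le_div_iff₀ (sub_pos.2 hay) (sub_pos.2 hyc)]
  exact hg (hmono.lt_iff_lt.1 hay) (hmono.lt_iff_lt.1 hyc)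

theorem ScaleConvex.continuous (hg : ScaleConvex W g) : Continuous g := by
  have hmono := strictMono_scale W
  have hopen : IsOpen (range (scale W)) :=
    (isOpenMap_of_hasStrictDerivAt (fun y => hasStrictDerivAt_of_hasDerivAt_of_continuousAt
      (.of_forall (hasDerivAt_scale W)) (by fun_prop)) fun y => (Real.exp_pos _).ne').isOpen_range
  have hcomp : g = (g ∘ Function.invFun (scale W)) ∘ scale W := by
    funext y
    simp only [Function.comp, Function.leftInverse_invFun hmono.injective _]
  rw [hcomp]
  exact (hg.convexOn_comp_invFun.continuousOn hopen).comp_continuous (continuous_scale W)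
    mem_range_self

theorem ScaleConvex.exists_support_line (hg : ScaleConvex W g) (y₀ : ℝ) :
    ∃ m, ∀ y, g y₀ + m * (scale W y - scale W y₀) ≤ g y := by
  set slope : ℝ → ℝ := fun a => (g y₀ - g a) / (scale W y₀ - scale W a)
  have hslope {a c : ℝ} (ha : a < y₀) (hc : y₀ < c) :
      slope a ≤ (g c - g y₀) / (scale W c - scale W y₀) :=
    (div_le_div_iff₀ (sub_pos.2 (strictMono_scale W ha)) (sub_pos.2 (strictMono_scale W hc))).2
      (hg ha hc)
  have hbdd : BddAbove (slope '' Iio y₀) :=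
    ⟨_, forall_mem_image.2 fun a ha => hslope ha (lt_add_one y₀)⟩
  refine ⟨sSup (slope '' Iio y₀), fun y => ?_⟩
  rcases lt_trichotomy y y₀ with hy | rfl | hy
  · have := (div_le_iff₀ (sub_pos.2 (strictMono_scale W hy))).1
      (le_csSup hbdd (mem_image_of_mem slope hy))
    linarith
  · simp
  · have := (le_div_iff₀ (sub_pos.2 (strictMono_scale W hy))).1
      (csSup_le (nonempty_Iio.image slope) (forall_mem_image.2 fun a ha => hslope ha hy))
    linarith

end ScaleConvex

section SecondOrderCriterion

variable {W : ℝ} {g : ℝ → ℝ}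

theorem le_max_of_frequently_driftDiff_pos {a b c : ℝ} (hg : UpperSemicontinuousOn g (Icc a c))
    (hpos : ∀ y ∈ Ioo a c, ∃ᶠ k in 𝓝[>] (0 : ℝ), 0 < driftDiff W g y k) (hb : b ∈ Icc a c) :
    g b ≤ max (g a) (g c) := by
  obtain ⟨y, hy, hmax⟩ := hg.exists_isMaxOn ⟨b, hb⟩ isCompact_Icc
  refine (hmax hb).trans ?_
  rcases hy.1.eq_or_lt with rfl | hay
  · exact le_max_left _ _
  rcases hy.2.eq_or_lt with rfl | hyc
  · exact le_max_right _ _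
  have hsmall : ∀ᶠ k in 𝓝[>] (0 : ℝ), k ∈ Ioo 0 (min (y - a) (c - y)) :=
    Ioo_mem_nhdsGT (lt_min (sub_pos.2 hay) (sub_pos.2 hyc))
  obtain ⟨k, hk, hk₀, hk'⟩ := ((hpos y ⟨hay, hyc⟩).and_eventually hsmall).exists
  obtain ⟨hka, hkc⟩ := lt_min_iff.1 hk'
  have hplus : g (y + k) ≤ g y := hmax ⟨by linarith, by linarith⟩
  have hminus : g (y - k) ≤ g y := hmax ⟨by linarith, by linarith⟩
  exact absurd hk (not_lt.2 (add_nonpos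
    (mul_nonpos_of_nonneg_of_nonpos (Real.exp_pos _).le (sub_nonpos.2 hplus))
    (mul_nonpos_of_nonneg_of_nonpos (Real.exp_pos _).le (sub_nonpos.2 hminus))))

theorem exists_eventually_le_driftDiff_exp (hW : 0 ≤ W) (y : ℝ) :
    ∃ b > 0, ∀ᶠ k in 𝓝[>] (0 : ℝ),
      b * k ^ 2 ≤ driftDiff W (fun x => Real.exp ((W + 1) * x)) y k := by
  have hderiv (x : ℝ) : HasDerivAt (fun x => Real.exp ((W + 1) * x))
      ((W + 1) * Real.exp ((W + 1) * x)) x := by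
    simpa [mul_comm] using ((hasDerivAt_id x).const_mul (W + 1)).exp
  have hpos := Real.exp_pos ((W + 1) * y)
  exact ⟨Real.exp ((W + 1) * y) / 2, half_pos hpos, eventually_le_driftDiff (.of_forall hderiv)
    ((hderiv y).const_mul (W + 1)) (by nlinarith)⟩

theorem scaleConvex_of_forall_lt (h : ∀ ⦃a b c : ℝ⦄, a < b → b < c → ∀ m : ℝ,
    g a + m * scale W a = g c + m * scale W c →
      g b + m * scale W b ≤ g c + m * scale W c) : ScaleConvex W g := by
  intro a b c hab hbc
  have hac := sub_pos.2 (strictMono_scale W (hab.trans hbc))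
  set m := (g a - g c) / (scale W c - scale W a) with hm
  have hma : g a - g c = m * (scale W c - scale W a) := by rw [hm]; field_simp
  have hb := h hab hbc m (by linarith)
  have := mul_le_mul_of_nonneg_right hb hac.le
  have hbc := sub_pos.2 (strictMono_scale W hbc)
  have hab := sub_pos.2 (strictMono_scale W hab)
  have hb' : g b - g c ≤ m * (scale W c - scale W b) := by linarith
  have hb'' : g b - g a ≤ - m * (scale W b - scale W a) := by linarith
  nlinarith [mul_le_mul_of_nonneg_right hb' hab.le, mul_le_mul_of_nonneg_right hb'' hbc.le]

/-- The second order condition is only needed frequently, because a strict maximum principle for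
the perturbation `ε exp ((W + 1) y)` already excludes an interior maximum. -/
theorem scaleConvex_of_frequently (hW : 0 ≤ W) (hg : UpperSemicontinuous g)
    (hfreq : ∀ y, ∀ ε > 0, ∃ᶠ k in 𝓝[>] (0 : ℝ), -ε * k ^ 2 ≤ driftDiff W g y k) :
    ScaleConvex W g := by
  refine scaleConvex_of_forall_lt fun a b c hab hbc m hm => ?_
  set q : ℝ → ℝ := fun x => Real.exp ((W + 1) * x)
  have hperturbed (ε : ℝ) (hε : 0 < ε) :
      g b + m * scale W b ≤ g c + m * scale W c + ε * max (q a) (q c) := by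
    have husc : UpperSemicontinuous fun x => g x + (m * scale W x + ε * q x) := by
      have := continuous_scale W
      exact hg.add (Continuous.upperSemicontinuous (by fun_prop))
    have hpos (y : ℝ) : ∃ᶠ k in 𝓝[>] (0 : ℝ),
        0 < driftDiff W (fun x => g x + (m * scale W x + ε * q x)) y k := by
      obtain ⟨β, hβ, hq⟩ := exists_eventually_le_driftDiff_exp hW y
      refine ((hfreq y (ε * β / 2) (by positivity)).and_eventually
        (hq.and self_mem_nhdsWithin)).mono ?_
      rintro k ⟨hg, hq, hk : 0 < k⟩
      have hdecomp : driftDiff W (fun x => g x + (m * scale W x + ε * q x)) y k =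
          driftDiff W g y k + m * driftDiff W (scale W) y k + ε * driftDiff W q y k := by
        simp only [driftDiff]
        ring
      rw [hdecomp, driftDiff_scale]
      have := mul_le_mul_of_nonneg_left hq hε.le
      nlinarith [mul_pos (mul_pos hε hβ) (pow_pos hk 2)]
    have hmax := le_max_of_frequently_driftDiff_pos (b := b) (husc.upperSemicontinuousOn (Icc a c))
      (fun y _ => hpos y) ⟨hab.le, hbc.le⟩
    have hqb : 0 ≤ ε * q b := by positivity
    have hqa := mul_le_mul_of_nonneg_left (le_max_left (q a) (q c)) hε.le
    have hqc := mul_le_mul_of_nonneg_left (le_max_right (q a) (q c)) hε.le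
    rcases le_max_iff.1 hmax with h | h <;> linarith
  have hlim : Tendsto (fun ε : ℝ => g c + m * scale W c + ε * max (q a) (q c)) (𝓝[>] 0)
      (𝓝 (g c + m * scale W c)) := by
    refine Tendsto.mono_left ?_ nhdsWithin_le_nhds
    convert (by fun_prop : Continuous fun ε : ℝ =>
      g c + m * scale W c + ε * max (q a) (q c)).tendsto 0 using 2
    ring
  exact ge_of_tendsto hlim (eventually_mem_nhdsWithin.mono fun ε hε => hperturbed ε hε)

theorem scaleConvex_add_of_frequently {F F' f : ℝ → ℝ} (hW : 0 ≤ W) (hg : UpperSemicontinuous g)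
    (hF : ∀ y, HasDerivAt F (F' y) y) (hF' : ∀ y, HasDerivAt F' (W * F' y + f y) y)
    (hfreq : ∀ y, ∀ ε > 0, ∃ᶠ k in 𝓝[>] (0 : ℝ), -(f y + ε) * k ^ 2 ≤ driftDiff W g y k) :
    ScaleConvex W (fun y => g y + F y) := by
  have hFcont : Continuous F := continuous_iff_continuousAt.2 fun y => (hF y).continuousAt
  refine scaleConvex_of_frequently hW (hg.add hFcont.upperSemicontinuous) fun y ε hε => ?_
  refine ((hfreq y (ε / 2) (by positivity)).and_eventually
    (eventually_le_driftDiff (b := f y - ε / 2) (.of_forall hF) (hF' y)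
      (by linarith : _ < W * F' y + f y - W * F' y))).mono ?_
  rintro k ⟨hg, hF⟩
  rw [driftDiff_add]
  linarith

end SecondOrderCriterion

section DriftGreen

variable {W : ℝ} {f : ℝ → ℝ}

/-- The solution `F` of `F'' - W F' = f` with `F 0 = F' 0 = 0`, by variation of constants. -/
noncomputable def driftGreen (W : ℝ) (f : ℝ → ℝ) (y : ℝ) : ℝ :=
  ∫ x in 0..y, (scale W y - scale W x) * (Real.exp (-(W * x)) * f x)

theorem hasDerivAt_driftGreen (hf : Continuous f) (y : ℝ) :
    HasDerivAt (driftGreen W f) (Real.exp (W * y) * ∫ x in 0..y, Real.exp (-(W * x)) * f x) y := by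
  have hscale := continuous_scale W
  have hcont : Continuous fun x => Real.exp (-(W * x)) * f x := by fun_prop
  have hcont' : Continuous fun x => scale W x * (Real.exp (-(W * x)) * f x) := by fun_prop
  have hsplit : driftGreen W f = fun y => scale W y * (∫ x in 0..y, Real.exp (-(W * x)) * f x) -
      ∫ x in 0..y, scale W x * (Real.exp (-(W * x)) * f x) := by
    funext z
    rw [← intervalIntegral.integral_const_mul, ← intervalIntegral.integral_sub
      ((hcont.const_mul _).intervalIntegrable _ _)
      (hcont'.intervalIntegrable _ _)]
    simp only [driftGreen, sub_mul]
  rw [hsplit]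
  refine (((hasDerivAt_scale W y).mul (hcont.integral_hasStrictDerivAt 0 y).hasDerivAt).sub
    (hcont'.integral_hasStrictDerivAt 0 y).hasDerivAt).congr_deriv ?_
  ring

theorem hasDerivAt_deriv_driftGreen (hf : Continuous f) (y : ℝ) :
    HasDerivAt (fun y => Real.exp (W * y) * ∫ x in 0..y, Real.exp (-(W * x)) * f x)
      (W * (Real.exp (W * y) * ∫ x in 0..y, Real.exp (-(W * x)) * f x) + f y) y := by
  have hcont : Continuous fun x => Real.exp (-(W * x)) * f x := by fun_prop
  have hexp : HasDerivAt (fun y => Real.exp (W * y)) (Real.exp (W * y) * W) y := by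
    simpa using ((hasDerivAt_id y).const_mul W).exp
  refine (hexp.mul (hcont.integral_hasStrictDerivAt 0 y).hasDerivAt).congr_deriv ?_
  have hinv : Real.exp (W * y) * Real.exp (-(W * y)) = 1 := by
    rw [← Real.exp_add, add_neg_cancel, Real.exp_zero]
  linear_combination f y * hinv

theorem continuous_driftGreen (hf : Continuous f) : Continuous (driftGreen W f) :=
  continuous_iff_continuousAt.2 fun y => (hasDerivAt_driftGreen hf y).continuousAt

theorem tendsto_driftGreen {F : ℕ → ℝ → ℝ} {B : ℝ → ℝ} (hF : ∀ n, Continuous (F n))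
    (hB : Continuous B) (hFB : ∀ n x, |F n x| ≤ B x)
    (hlim : ∀ x, Tendsto (F · x) atTop (𝓝 (f x))) (y : ℝ) :
    Tendsto (fun n => driftGreen W (F n) y) atTop (𝓝 (driftGreen W f y)) := by
  have hscale := continuous_scale W
  refine intervalIntegral.tendsto_integral_filter_of_dominated_convergence
    (fun x => |scale W y - scale W x| * (Real.exp (-(W * x)) * B x))
    (.of_forall fun n => by have := hF n; fun_prop)
    (.of_forall fun n => .of_forall fun x _ => ?_)
    (Continuous.intervalIntegrable (by fun_prop) _ _)
    (.of_forall fun x _ => ((hlim x).const_mul _).const_mul _)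
  rw [norm_mul, norm_mul, Real.norm_eq_abs, Real.norm_eq_abs, Real.norm_eq_abs, Real.abs_exp]
  gcongr
  exact hFB n x

theorem scaleConvex_add_driftGreen {g : ℝ → ℝ} (hW : 0 ≤ W) (hg : UpperSemicontinuous g)
    (hf : Continuous f)
    (hfreq : ∀ y, ∀ ε > 0, ∃ᶠ k in 𝓝[>] (0 : ℝ), -(f y + ε) * k ^ 2 ≤ driftDiff W g y k) :
    ScaleConvex W fun y => g y + driftGreen W f y :=
  scaleConvex_add_of_frequently hW hg (hasDerivAt_driftGreen hf) (hasDerivAt_deriv_driftGreen hf)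
    hfreq

theorem driftGreen_sub_mul_integral (hf : Continuous f) (y : ℝ) :
    driftGreen W f y - W * ∫ x in 0..y, driftGreen W f x =
      ∫ x in 0..y, ∫ z in 0..x, f z := by
  set D : ℝ → ℝ := fun y => Real.exp (W * y) * ∫ x in 0..y, Real.exp (-(W * x)) * f x with hD
  have hfirst (x : ℝ) : D x - W * driftGreen W f x = ∫ z in 0..x, f z := by
    have hderiv (z : ℝ) : HasDerivAt (fun x => D x - W * driftGreen W f x) (f z) z :=
      ((hasDerivAt_deriv_driftGreen hf z).sub
        ((hasDerivAt_driftGreen hf z).const_mul W)).congr_deriv (by ring)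
    rw [intervalIntegral.integral_eq_sub_of_hasDerivAt (fun z _ => hderiv z)
      (hf.intervalIntegrable _ _)]
    simp [hD, driftGreen]
  have hD' : Continuous D :=
    continuous_iff_continuousAt.2 fun y => (hasDerivAt_deriv_driftGreen hf y).continuousAt
  simp only [← hfirst]
  rw [intervalIntegral.integral_sub (hD'.intervalIntegrable _ _)
    (((continuous_driftGreen hf).const_mul W).intervalIntegrable _ _),
    intervalIntegral.integral_const_mul, intervalIntegral.integral_eq_sub_of_hasDerivAt
      (fun z _ => hasDerivAt_driftGreen hf z) (hD'.intervalIntegrable _ _)]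
  simp [driftGreen]

end DriftGreen

/-- A nonnegative pointwise solution on `(0, ∞) × ℝ` of `ρ ∂ₜv = ∂²v - W ∂v`. The only joint
regularity is lower semicontinuity: neither `∂ₜv` nor `∂²v` is assumed continuous. -/
structure NonnegSolution (W : ℝ) (ρ : ℝ → ℝ) (v : ℝ → ℝ → ℝ) : Prop where
  drift_nonneg : 0 ≤ W
  continuous_weight : Continuous ρ
  weight_pos : ∀ y, 0 < ρ y
  exists_deriv : ∃ vt vx vxx : ℝ → ℝ → ℝ, ∀ t, 0 < t → ∀ y,
    HasDerivAt (fun s => v s y) (vt t y) t ∧ HasDerivAt (v t) (vx t y) y ∧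
    HasDerivAt (vx t) (vxx t y) y ∧ ρ y * vt t y = vxx t y - W * vx t y
  nonneg : ∀ t, 0 < t → ∀ y, 0 ≤ v t y
  lowerSemicontinuousAt : ∀ t, 0 < t → ∀ y,
    LowerSemicontinuousAt (fun p : ℝ × ℝ => v p.1 p.2) (t, y)

section TimeInfConv

variable {W M T₁ T₂ ε t y : ℝ} {ρ : ℝ → ℝ} {v w : ℝ → ℝ → ℝ}

/-- Inf-convolution of `w` in time over the window `[T₁, T₂]`. -/
noncomputable def timeInfConv (w : ℝ → ℝ → ℝ) (T₁ T₂ ε t y : ℝ) : ℝ :=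
  sInf ((fun s => w s y + (t - s) ^ 2 / (2 * ε)) '' Icc T₁ T₂)

/-- Inf-convolution in time of `v` truncated at height `M`. -/
noncomputable def truncInfConv (v : ℝ → ℝ → ℝ) (M T₁ T₂ ε : ℝ) : ℝ → ℝ → ℝ :=
  timeInfConv (fun s y => min (v s y) M) T₁ T₂ ε

theorem exists_isLeast_timeInfConv (hT : T₁ ≤ T₂)
    (hw : ∀ s ∈ Icc T₁ T₂, ∀ y, LowerSemicontinuousAt (fun p : ℝ × ℝ => w p.1 p.2) (s, y))
    (ε t y : ℝ) :
    ∃ σ ∈ Icc T₁ T₂, timeInfConv w T₁ T₂ ε t y = w σ y + (t - σ) ^ 2 / (2 * ε) ∧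
      ∀ s ∈ Icc T₁ T₂, timeInfConv w T₁ T₂ ε t y ≤ w s y + (t - s) ^ 2 / (2 * ε) := by
  have hlsc : LowerSemicontinuousOn (fun s => w s y + (t - s) ^ 2 / (2 * ε)) (Icc T₁ T₂) := by
    refine LowerSemicontinuousOn.add (fun s hs => ?_)
      ((by fun_prop : Continuous fun s => (t - s) ^ 2 / (2 * ε)).lowerSemicontinuous
        |>.lowerSemicontinuousOn _)
    exact ((hw s hs y).comp (g := fun s => (s, y))
      (by fun_prop : ContinuousAt (fun s : ℝ => (s, y)) s)).lowerSemicontinuousWithinAt _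
  obtain ⟨σ, hσ, hmin⟩ := hlsc.exists_isMinOn (nonempty_Icc.2 hT) isCompact_Icc
  have hleast : timeInfConv w T₁ T₂ ε t y = w σ y + (t - σ) ^ 2 / (2 * ε) :=
    IsLeast.csInf_eq ⟨mem_image_of_mem _ hσ, forall_mem_image.2 fun s hs => hmin hs⟩
  exact ⟨σ, hσ, hleast, fun s hs => hleast.trans_le (hmin hs)⟩

theorem lowerSemicontinuous_timeInfConv (hT : T₁ ≤ T₂)
    (hw : ∀ s ∈ Icc T₁ T₂, ∀ y, LowerSemicontinuousAt (fun p : ℝ × ℝ => w p.1 p.2) (s, y))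
    (ε t : ℝ) : LowerSemicontinuous (timeInfConv w T₁ T₂ ε t) := by
  intro y c hc
  obtain ⟨-, -, -, hle⟩ := exists_isLeast_timeInfConv hT hw ε t y
  have hnear : ∀ᶠ y' in 𝓝 y, ∀ s ∈ Icc T₁ T₂, c < w s y' + (t - s) ^ 2 / (2 * ε) := by
    refine isCompact_Icc.eventually_forall_of_forall_eventually fun s hs => ?_
    have hlsc := (hw s hs y).add
      ((by fun_prop : Continuous fun p : ℝ × ℝ => (t - p.1) ^ 2 / (2 * ε)).lowerSemicontinuous _)
    exact (continuous_swap.tendsto (y, s)).eventually (hlsc c (hc.trans_le (hle s hs)))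
  filter_upwards [hnear] with y' hy'
  obtain ⟨σ, hσ, heq, -⟩ := exists_isLeast_timeInfConv hT hw ε t y'
  exact heq ▸ hy' σ hσ

theorem abs_timeInfConv_sub_le (hε : 0 < ε)
    (hw : ∀ s ∈ Icc T₁ T₂, ∀ y, LowerSemicontinuousAt (fun p : ℝ × ℝ => w p.1 p.2) (s, y))
    (y : ℝ) {s : ℝ} (hs : s ∈ Icc T₁ T₂) (ht : t ∈ Icc T₁ T₂) :
    |timeInfConv w T₁ T₂ ε t y - timeInfConv w T₁ T₂ ε s y| ≤ (T₂ - T₁) / ε * |t - s| := by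
  have hT : T₁ ≤ T₂ := hs.1.trans hs.2
  have hle {s t : ℝ} (hs : s ∈ Icc T₁ T₂) (ht : t ∈ Icc T₁ T₂) :
      timeInfConv w T₁ T₂ ε t y - timeInfConv w T₁ T₂ ε s y ≤ (T₂ - T₁) / ε * |t - s| := by
    obtain ⟨σ, hσ, heq, -⟩ := exists_isLeast_timeInfConv hT hw ε s y
    obtain ⟨-, -, -, hle⟩ := exists_isLeast_timeInfConv hT hw ε t y
    calc timeInfConv w T₁ T₂ ε t y - timeInfConv w T₁ T₂ ε s y
        ≤ (t - σ) ^ 2 / (2 * ε) - (s - σ) ^ 2 / (2 * ε) := by linarith [hle σ hσ]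
      _ = (((t - σ) + (s - σ)) / 2 * (t - s)) / ε := by
          field_simp
          ring
      _ ≤ ((T₂ - T₁) * |t - s|) / ε := by
          refine div_le_div_of_nonneg_right ((le_abs_self _).trans ?_) hε.le
          rw [abs_mul]
          refine mul_le_mul_of_nonneg_right (abs_le.2 ⟨?_, ?_⟩) (abs_nonneg _) <;>
            linarith [hs.1, hs.2, ht.1, ht.2, hσ.1, hσ.2]
      _ = (T₂ - T₁) / ε * |t - s| := by ring
  exact abs_sub_le_iff.2 ⟨hle hs ht, abs_sub_comm s t ▸ hle ht hs⟩

end TimeInfConv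

namespace NonnegSolution

variable {W : ℝ} {ρ : ℝ → ℝ} {v : ℝ → ℝ → ℝ} {M T₁ T₂ ε t y : ℝ}

theorem continuous_space (h : NonnegSolution W ρ v) (ht : 0 < t) : Continuous (v t) := by
  obtain ⟨vt, vx, vxx, hderiv⟩ := h.exists_deriv
  exact continuous_iff_continuousAt.2 fun y => (hderiv t ht y).2.1.continuousAt

theorem continuousAt_time (h : NonnegSolution W ρ v) (ht : 0 < t) (y : ℝ) :
    ContinuousAt (fun s => v s y) t := by
  obtain ⟨vt, vx, vxx, hderiv⟩ := h.exists_deriv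
  exact (hderiv t ht y).1.continuousAt

theorem continuousOn_time (h : NonnegSolution W ρ v) (y : ℝ) :
    ContinuousOn (fun s => v s y) (Ioi 0) :=
  fun _ ht => (h.continuousAt_time ht y).continuousWithinAt

theorem eventually_driftDiff_le (h : NonnegSolution W ρ v) (ht : 0 < t) {p b : ℝ}
    (hp : HasDerivAt (fun s => v s y) p t) (hb : ρ y * p < b) :
    ∀ᶠ k in 𝓝[>] 0, driftDiff W (v t) y k ≤ b * k ^ 2 := by
  obtain ⟨vt, vx, vxx, hderiv⟩ := h.exists_deriv
  refine DriftHeat.eventually_driftDiff_le (.of_forall fun z => (hderiv t ht z).2.1)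
    (hderiv t ht y).2.2.1 ?_
  rwa [← (hderiv t ht y).2.2.2, (hderiv t ht y).1.unique hp]

theorem lowerSemicontinuousAt_min (h : NonnegSolution W ρ v) (M : ℝ) (ht : 0 < t) (y : ℝ) :
    LowerSemicontinuousAt (fun p : ℝ × ℝ => min (v p.1 p.2) M) (t, y) :=
  (h.lowerSemicontinuousAt t ht y).inf lowerSemicontinuousAt_const

/-- The first order condition for the minimising time `σ`: where the truncation is active it
forces `t = σ`. -/
theorem hasDerivAt_or_eq_of_isLeast (h : NonnegSolution W ρ v) (hε : 0 < ε) {σ : ℝ} (hσ : 0 < σ)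
    (hmin : ∀ᶠ s in 𝓝 σ, min (v σ y) M + (t - σ) ^ 2 / (2 * ε) ≤
      min (v s y) M + (t - s) ^ 2 / (2 * ε)) :
    v σ y ≤ M ∧ HasDerivAt (fun s => v s y) ((t - σ) / ε) σ ∨ M < v σ y ∧ t = σ := by
  have hquad : HasDerivAt (fun s => (t - s) ^ 2 / (2 * ε)) (-((t - σ) / ε)) σ := by
    refine ((((hasDerivAt_id σ).const_sub t).pow 2).div_const (2 * ε)).congr_deriv ?_
    simp only [id_eq]
    field_simp
    ring
  rcases le_or_gt (v σ y) M with hM | hM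
  · refine .inl ⟨hM, ?_⟩
    obtain ⟨vt, _, _, hderiv⟩ := h.exists_deriv
    have hvt := (hderiv σ hσ y).1
    have hlocal : IsLocalMin (fun s => v s y + (t - s) ^ 2 / (2 * ε)) σ := by
      filter_upwards [hmin] with s hs
      rw [min_eq_left hM] at hs
      exact hs.trans (add_le_add_left (min_le_left _ _) _)
    have hzero := hlocal.hasDerivAt_eq_zero (hvt.add hquad)
    rwa [← add_neg_eq_zero.1 hzero]
  · refine .inr ⟨hM, ?_⟩
    have hlocal : IsLocalMin (fun s => (t - s) ^ 2 / (2 * ε)) σ := by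
      filter_upwards [hmin, (h.continuousAt_time hσ y).eventually_const_lt hM] with s hs hsM
      rw [min_eq_right hM.le, min_eq_right hsM.le] at hs
      exact (add_le_add_iff_left M).1 hs
    have hzero := hlocal.hasDerivAt_eq_zero hquad
    have : t - σ = 0 := by simpa [hε.ne'] using hzero
    linarith

theorem sq_sub_le_of_isLeast (h : NonnegSolution W ρ v) (hM : 0 ≤ M) (hε : 0 < ε) {σ : ℝ}
    (hσ : 0 < σ)
    (hle : min (v σ y) M + (t - σ) ^ 2 / (2 * ε) ≤ min (v t y) M) : (t - σ) ^ 2 ≤ 2 * ε * M := by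
  have hnonneg : 0 ≤ min (v σ y) M := le_min (h.nonneg σ hσ y) hM
  have : (t - σ) ^ 2 / (2 * ε) ≤ M := by linarith [min_le_right (v t y) M]
  rwa [div_le_iff₀ (by positivity), mul_comm] at this

theorem exists_isLeast_truncInfConv (h : NonnegSolution W ρ v) (hT₁ : 0 < T₁) (hT : T₁ ≤ T₂)
    (M ε t y : ℝ) :
    ∃ σ ∈ Icc T₁ T₂, truncInfConv v M T₁ T₂ ε t y = min (v σ y) M + (t - σ) ^ 2 / (2 * ε) ∧
      ∀ s ∈ Icc T₁ T₂, truncInfConv v M T₁ T₂ ε t y ≤ min (v s y) M + (t - s) ^ 2 / (2 * ε) :=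
  exists_isLeast_timeInfConv (w := fun s y => min (v s y) M) hT
    (fun _ hs => h.lowerSemicontinuousAt_min M (hT₁.trans_le hs.1)) ε t y

/-- The inf-convolution is a supersolution: `p` is a superdifferential of it in time. -/
theorem exists_eventually_driftDiff_truncInfConv_le (h : NonnegSolution W ρ v) (hM : 0 ≤ M)
    (hε : 0 < ε) (hT₁ : 0 < T₁) (ht₁ : 2 * ε * M < (t - T₁) ^ 2) (ht₂ : 2 * ε * M < (T₂ - t) ^ 2)
    (ht : t ∈ Icc T₁ T₂) (y : ℝ) :
    ∃ p ≤ (T₂ - T₁) / ε,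
      (∀ δ, δ * p ≤ truncInfConv v M T₁ T₂ ε t y -
        truncInfConv v M T₁ T₂ ε (t - δ) y + δ ^ 2 / (2 * ε)) ∧
      ∀ η > 0, ∀ᶠ k in 𝓝[>] 0,
        driftDiff W (truncInfConv v M T₁ T₂ ε t) y k ≤ (ρ y * p + η) * k ^ 2 := by
  have hexists := h.exists_isLeast_truncInfConv hT₁ (ht.1.trans ht.2) M ε
  obtain ⟨σ, hσ, heq, hle⟩ := hexists t y
  have hσ₀ : 0 < σ := hT₁.trans_le hσ.1
  have hsq := h.sq_sub_le_of_isLeast hM hε hσ₀ (by simpa [heq] using hle t ht)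
  have hσ' : σ ∈ Ioo T₁ T₂ :=
    ⟨by nlinarith [hσ.1, ht.1], by nlinarith [hσ.2, ht.2]⟩
  have hmin : ∀ᶠ s in 𝓝 σ, min (v σ y) M + (t - σ) ^ 2 / (2 * ε) ≤
      min (v s y) M + (t - s) ^ 2 / (2 * ε) := by
    filter_upwards [Icc_mem_nhds hσ'.1 hσ'.2] with s hs
    exact heq ▸ hle s hs
  refine ⟨(t - σ) / ε, by gcongr <;> linarith [hσ.1, ht.2], fun δ => ?_, fun η hη => ?_⟩
  · obtain ⟨-, -, -, hle'⟩ := hexists (t - δ) y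
    have hσδ : (t - δ - σ) ^ 2 / (2 * ε) =
        (t - σ) ^ 2 / (2 * ε) - δ * ((t - σ) / ε) + δ ^ 2 / (2 * ε) := by
      field_simp
      ring
    linarith [hle' σ hσ]
  · have hcompare (x : ℝ) : truncInfConv v M T₁ T₂ ε t x -
        truncInfConv v M T₁ T₂ ε t y ≤ min (v σ x) M - min (v σ y) M := by
      obtain ⟨-, -, -, hle'⟩ := hexists t x
      linarith [hle' σ hσ]
    rcases h.hasDerivAt_or_eq_of_isLeast hε hσ₀ hmin with ⟨hvM, hderiv⟩ | ⟨hvM, rfl⟩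
    · filter_upwards [h.eventually_driftDiff_le hσ₀ hderiv (lt_add_of_pos_right _ hη)] with k hk
      refine (driftDiff_le_driftDiff (fun x => (hcompare x).trans ?_) k).trans hk
      rw [min_eq_left hvM]
      exact sub_le_sub_right (min_le_left _ _) _
    · filter_upwards with k
      refine (driftDiff_le_driftDiff (g := fun _ => 0) (fun x => (hcompare x).trans ?_) k).trans ?_
      · rw [min_eq_right hvM.le]
        simp
      · simp only [driftDiff, sub_self, mul_zero, add_zero, zero_div, zero_add]
        positivity

end NonnegSolution

section RiemannSum

theorem abs_mul_sub_integral_le {φ : ℝ → ℝ} {a b C : ℝ} (hab : a ≤ b)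
    (hint : IntervalIntegrable φ volume a b) (hφ : ∀ t ∈ Icc a b, |φ b - φ t| ≤ C) :
    |(b - a) * φ b - ∫ t in a..b, φ t| ≤ C * (b - a) := by
  have hconst : (b - a) * φ b = ∫ _ in a..b, φ b := by
    rw [intervalIntegral.integral_const, smul_eq_mul]
  rw [hconst, ← intervalIntegral.integral_sub intervalIntegrable_const hint]
  refine (intervalIntegral.norm_integral_le_of_norm_le_const (f := fun t => φ b - φ t)
    fun t ht => ?_).trans_eq (by rw [abs_of_nonneg (sub_nonneg.2 hab)])
  exact hφ t (Ioc_subset_Icc_self (uIoc_of_le hab ▸ ht))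

theorem abs_riemannSum_sub_integral_le {φ : ℝ → ℝ} {K a δ : ℝ} (hK : 0 ≤ K) (hδ : 0 ≤ δ) (N : ℕ)
    (hφ : ∀ s ∈ Icc a (a + N * δ), ∀ t ∈ Icc a (a + N * δ), |φ t - φ s| ≤ K * |t - s|) :
    |δ * ∑ j ∈ Finset.range N, φ (a + (j + 1 : ℕ) * δ) - ∫ t in a..(a + N * δ), φ t| ≤
      N * (K * δ * δ) := by
  have hcont : ContinuousOn φ (Icc a (a + N * δ)) := by
    refine LipschitzOnWith.continuousOn (K := K.toNNReal) (LipschitzOnWith.of_dist_le_mul ?_)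
    exact fun t ht s hs => (hφ s hs t ht).trans
      (mul_le_mul_of_nonneg_right (Real.le_coe_toNNReal K) (abs_nonneg _))
  have hsub {j : ℕ} (hj : j < N) :
      Icc (a + j * δ) (a + (j + 1 : ℕ) * δ) ⊆ Icc a (a + N * δ) := by
    have : (j + 1 : ℕ) * δ ≤ N * δ := mul_le_mul_of_nonneg_right (by exact_mod_cast hj) hδ
    exact Icc_subset_Icc (by nlinarith [mul_nonneg j.cast_nonneg hδ]) (by linarith)
  have hlen (j : ℕ) : a + (j + 1 : ℕ) * δ - (a + j * δ) = δ := by push_cast; ring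
  have hstep (j : ℕ) : a + j * δ ≤ a + (j + 1 : ℕ) * δ := by linarith [hlen j]
  have hint (j : ℕ) (hj : j < N) :
      IntervalIntegrable φ volume (a + j * δ) (a + (j + 1 : ℕ) * δ) :=
    (hcont.mono (uIcc_of_le (hstep j) ▸ hsub hj)).intervalIntegrable
  have hsum := intervalIntegral.sum_integral_adjacent_intervals
    (a := fun j : ℕ => a + j * δ) hint
  simp only [Nat.cast_zero, zero_mul, add_zero] at hsum
  rw [← hsum, Finset.mul_sum, ← Finset.sum_sub_distrib]
  refine (Finset.abs_sum_le_sum_abs _ _).trans ?_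
  refine (Finset.sum_le_card_nsmul _ _ (K * δ * δ) fun j hj => ?_).trans_eq (by simp)
  have hj := Finset.mem_range.1 hj
  have hcell := abs_mul_sub_integral_le (C := K * δ) (hstep j) (hint j hj) fun t ht => by
    refine (hφ t (hsub hj ht) _ (hsub hj (right_mem_Icc.2 (hstep j)))).trans ?_
    gcongr
    rw [abs_of_nonneg (by linarith [ht.2])]
    linarith [ht.1, hlen j]
  rwa [hlen] at hcell

end RiemannSum

section ScaleConvexity

variable {W : ℝ}

theorem driftDiff_const_mul_sum {ι : Type*} (r : ℝ) (s : Finset ι) (f : ι → ℝ → ℝ) (y k : ℝ) :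
    driftDiff W (fun x => r * ∑ i ∈ s, f i x) y k = r * ∑ i ∈ s, driftDiff W (f i) y k := by
  simp only [driftDiff, ← mul_sub, ← Finset.sum_sub_distrib, Finset.sum_add_distrib,
    ← Finset.mul_sum]
  ring

theorem scaleConvex_driftGreen_sub_integral {ρ : ℝ → ℝ} {z : ℝ → ℝ → ℝ} {t₁ t₂ K C : ℝ}
    (ht : t₁ < t₂) (hρ : Continuous ρ) (hz₁ : Continuous (z t₁)) (hz₂ : Continuous (z t₂))
    (hK : 0 ≤ K) (hlip : ∀ y, ∀ s ∈ Icc t₁ t₂, ∀ t ∈ Icc t₁ t₂, |z t y - z s y| ≤ K * |t - s|)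
    (hconv : ∀ N : ℕ, 0 < N → ∀ δ > 0, t₁ + N * δ = t₂ → ScaleConvex W fun y =>
      -δ * ∑ j ∈ Finset.range N, z (t₁ + (j + 1 : ℕ) * δ) y +
      driftGreen W (fun x => ρ x * (z t₂ x - z t₁ x + N * δ * δ / C)) y) :
    ScaleConvex W fun y =>
      driftGreen W (fun x => ρ x * (z t₂ x - z t₁ x)) y - ∫ s in t₁..t₂, z s y := by
  set δ : ℕ → ℝ := fun n => (t₂ - t₁) / (n + 1 : ℕ)
  have hδ (n : ℕ) : 0 < δ n := div_pos (sub_pos.2 ht) (by positivity)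
  have hδ_mul (n : ℕ) : (n + 1 : ℕ) * δ n = t₂ - t₁ := by simp only [δ]; field_simp
  have hδ_lim : Tendsto δ atTop (𝓝 0) :=
    tendsto_const_nhds.div_atTop (tendsto_natCast_atTop_atTop.comp (tendsto_add_atTop_nat 1))
  refine .of_tendsto (l := atTop) (.of_forall fun n =>
    hconv (n + 1) n.succ_pos (δ n) (hδ n) (by linarith [hδ_mul n])) fun y => ?_
  simp only [hδ_mul, sub_eq_neg_add (driftGreen W _ y)]
  refine Tendsto.add ?_ (tendsto_driftGreen
    (B := fun x => |ρ x| * (|z t₂ x - z t₁ x| + |(t₂ - t₁) * (t₂ - t₁) / C|))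
    (fun n => by fun_prop) (by fun_prop) (fun n x => ?_) (fun x => ?_) y)
  · simp only [neg_mul]
    refine (tendsto_iff_dist_tendsto_zero.2 (squeeze_zero (fun _ => dist_nonneg) (fun n => ?_)
      (by simpa using hδ_lim.const_mul ((t₂ - t₁) * K)))).neg
    have hN : t₁ + (n + 1 : ℕ) * δ n = t₂ := by linarith [hδ_mul n]
    have hsum := abs_riemannSum_sub_integral_le (φ := fun s => z s y) (a := t₁) hK (hδ n).le (n + 1)
    rw [hN] at hsum
    exact (hsum (hlip y)).trans_eq (by linear_combination K * δ n * hδ_mul n)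
  · rw [abs_mul]
    gcongr
    refine (abs_add_le _ _).trans (add_le_add_right ?_ _)
    rw [abs_div, abs_div, abs_mul, abs_mul, abs_of_pos (hδ n), abs_of_pos (sub_pos.2 ht)]
    gcongr
    exact div_le_self (sub_pos.2 ht).le (by simp)
  · refine Tendsto.const_mul _ ?_
    simpa using ((hδ_lim.const_mul (t₂ - t₁)).div_const C).const_add (z t₂ x - z t₁ x)

theorem exists_seq_mul_lt_tendsto_zero {c : ℝ} (hc : 0 < c) :
    ∃ M ε : ℕ → ℝ, (∀ n, 0 ≤ M n) ∧ Tendsto M atTop atTop ∧ (∀ n, 0 < ε n) ∧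
      (∀ n, 2 * ε n * M n < c) ∧ Tendsto (fun n => 2 * ε n * M n) atTop (𝓝 0) := by
  have hmul (n : ℕ) : 2 * (c / 2 / (2 * ((n : ℝ) + 1) ^ 2)) * (n + 1) =
      c / 2 * (1 / ((n : ℝ) + 1)) := by field_simp
  refine ⟨fun n => n + 1, fun n => c / 2 / (2 * ((n : ℝ) + 1) ^ 2), fun n => by positivity,
    tendsto_natCast_atTop_atTop.atTop_add tendsto_const_nhds, fun n => by positivity,
    fun n => ?_, ?_⟩
  · have : 1 / ((n : ℝ) + 1) ≤ 1 := div_le_self zero_le_one (by simp)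
    nlinarith [hmul n]
  · simpa only [hmul, mul_zero] using tendsto_one_div_add_atTop_nhds_zero_nat.const_mul (c / 2)

namespace NonnegSolution

variable {ρ : ℝ → ℝ} {v : ℝ → ℝ → ℝ} {M t₁ t₂ t ε δ : ℝ}

theorem intervalIntegrable_time (h : NonnegSolution W ρ v) (ht₁ : 0 < t₁) (ht₂ : 0 < t₂) (y : ℝ) :
    IntervalIntegrable (fun s => v s y) volume t₁ t₂ :=
  ((h.continuousOn_time y).mono fun _ hs =>
    (lt_min ht₁ ht₂).trans_le hs.1).intervalIntegrable

theorem continuous_truncInfConv (h : NonnegSolution W ρ v) (hM : 0 ≤ M) (hε : 0 < ε) (ht₁ : 0 < t₁)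
    (hsmall : 2 * ε * M < (t₁ / 2) ^ 2) (ht : t ∈ Icc t₁ t₂) :
    Continuous (truncInfConv v M (t₁ / 2) (t₂ + t₁ / 2) ε t) := by
  obtain ⟨htl, htr⟩ := ht
  set z := truncInfConv v M (t₁ / 2) (t₂ + t₁ / 2) ε
  set p₀ := (t₂ + t₁ / 2 - t₁ / 2) / ε
  have hf : Continuous fun x => ρ x * p₀ := h.continuous_weight.mul_const _
  have hlsc : LowerSemicontinuous (z t) := lowerSemicontinuous_timeInfConv (by linarith)
    (fun s hs y => h.lowerSemicontinuousAt_min M (by linarith [hs.1]) y) ε t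
  have husc : UpperSemicontinuous fun y => -z t y := fun y c hc =>
    (hlsc y (-c) (neg_lt.1 hc)).mono fun _ => neg_lt.1
  have hconv : ScaleConvex W fun y => -z t y + driftGreen W (fun x => ρ x * p₀) y := by
    refine scaleConvex_add_driftGreen h.drift_nonneg husc hf fun y η hη => Eventually.frequently ?_
    obtain ⟨p, hp, -, hdiff⟩ := h.exists_eventually_driftDiff_truncInfConv_le (t := t)
      hM hε (half_pos ht₁) (T₂ := t₂ + t₁ / 2) (by nlinarith) (by nlinarith)
      ⟨by linarith, by linarith⟩ y
    filter_upwards [hdiff η hη] with k hk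
    rw [driftDiff_neg]
    have := mul_le_mul_of_nonneg_left hp (h.weight_pos y).le
    linarith [mul_le_mul_of_nonneg_right this (sq_nonneg k)]
  exact ((continuous_driftGreen (W := W) hf).sub hconv.continuous).congr fun y => by
    simp only [Pi.sub_apply]
    ring

/-- The superdifferentials at the grid points telescope. -/
theorem eventually_mul_sum_driftDiff_truncInfConv_le (h : NonnegSolution W ρ v) (hM : 0 ≤ M)
    (hε : 0 < ε) (ht₁ : 0 < t₁) (hsmall : 2 * ε * M < (t₁ / 2) ^ 2) (hδ : 0 < δ) {N : ℕ}
    (hN : 0 < N) (ht₂ : t₁ + N * δ = t₂) (y : ℝ) {η : ℝ} (hη : 0 < η) :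
    ∀ᶠ k in 𝓝[>] 0, δ * ∑ j ∈ Finset.range N,
        driftDiff W (truncInfConv v M (t₁ / 2) (t₂ + t₁ / 2) ε (t₁ + (j + 1 : ℕ) * δ)) y k ≤
      (ρ y * (truncInfConv v M (t₁ / 2) (t₂ + t₁ / 2) ε t₂ y -
        truncInfConv v M (t₁ / 2) (t₂ + t₁ / 2) ε t₁ y + N * δ * δ / (2 * ε)) + η) * k ^ 2 := by
  set z := truncInfConv v M (t₁ / 2) (t₂ + t₁ / 2) ε
  replace hN : 0 < (N : ℝ) := Nat.cast_pos.2 hN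
  have hstep (j : ℕ) (hj : j ∈ Finset.range N) : ∃ p,
      δ * p ≤ z (t₁ + (j + 1 : ℕ) * δ) y - z (t₁ + j * δ) y + δ ^ 2 / (2 * ε) ∧
      ∀ᶠ k in 𝓝[>] 0, driftDiff W (z (t₁ + (j + 1 : ℕ) * δ)) y k ≤
        (ρ y * p + η / (N * δ)) * k ^ 2 := by
    have hl : 0 ≤ (j + 1 : ℕ) * δ := by positivity
    have hr : (j + 1 : ℕ) * δ ≤ N * δ :=
      mul_le_mul_of_nonneg_right (by exact_mod_cast Finset.mem_range.1 hj) hδ.le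
    obtain ⟨p, -, hp, hdiff⟩ := h.exists_eventually_driftDiff_truncInfConv_le
      (t := t₁ + (j + 1 : ℕ) * δ) (T₂ := t₂ + t₁ / 2) hM hε (half_pos ht₁)
      (by nlinarith) (by nlinarith) ⟨by linarith, by linarith⟩ y
    refine ⟨p, ?_, hdiff _ (by positivity)⟩
    convert hp δ using 5
    push_cast
    ring
  choose! p hp hdiff using hstep
  filter_upwards [(Filter.eventually_all_finset _).2 hdiff] with k hk
  have htelescope : ∑ j ∈ Finset.range N, δ * p j ≤ z t₂ y - z t₁ y + N * (δ ^ 2 / (2 * ε)) := by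
    refine (Finset.sum_le_sum hp).trans_eq ?_
    rw [Finset.sum_add_distrib, Finset.sum_range_sub fun j : ℕ => z (t₁ + j * δ) y]
    simp [ht₂]
  have hsum : δ * ∑ j ∈ Finset.range N, driftDiff W (z (t₁ + (j + 1 : ℕ) * δ)) y k ≤
      (ρ y * ∑ j ∈ Finset.range N, δ * p j + η) * k ^ 2 := by
    refine (mul_le_mul_of_nonneg_left (Finset.sum_le_sum hk) hδ.le).trans_eq ?_
    rw [← Finset.sum_mul, Finset.sum_add_distrib, ← Finset.mul_sum, ← Finset.mul_sum,
      Finset.sum_const, Finset.card_range, nsmul_eq_mul]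
    field_simp
  linear_combination hsum + mul_le_mul_of_nonneg_right
    (mul_le_mul_of_nonneg_left htelescope (h.weight_pos y).le) (sq_nonneg k)

theorem scaleConvex_riemannSum_truncInfConv (h : NonnegSolution W ρ v) (hM : 0 ≤ M) (hε : 0 < ε)
    (ht₁ : 0 < t₁) (hsmall : 2 * ε * M < (t₁ / 2) ^ 2) (hδ : 0 < δ) {N : ℕ} (hN : 0 < N)
    (ht₂ : t₁ + N * δ = t₂) :
    ScaleConvex W fun y =>
      -δ * ∑ j ∈ Finset.range N,
        truncInfConv v M (t₁ / 2) (t₂ + t₁ / 2) ε (t₁ + (j + 1 : ℕ) * δ) y +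
      driftGreen W (fun x => ρ x * (truncInfConv v M (t₁ / 2) (t₂ + t₁ / 2) ε t₂ x -
        truncInfConv v M (t₁ / 2) (t₂ + t₁ / 2) ε t₁ x + N * δ * δ / (2 * ε))) y := by
  have hcont {j : ℕ} (hj : j ≤ N) :
      Continuous (truncInfConv v M (t₁ / 2) (t₂ + t₁ / 2) ε (t₁ + j * δ)) := by
    have : j * δ ≤ N * δ := mul_le_mul_of_nonneg_right (by exact_mod_cast hj) hδ.le
    exact h.continuous_truncInfConv hM hε ht₁ hsmall
      ⟨by nlinarith [mul_nonneg j.cast_nonneg hδ.le], by linarith⟩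
  have hf : Continuous fun x => ρ x * (truncInfConv v M (t₁ / 2) (t₂ + t₁ / 2) ε t₂ x -
      truncInfConv v M (t₁ / 2) (t₂ + t₁ / 2) ε t₁ x + N * δ * δ / (2 * ε)) := by
    have hcont₁ := hcont N.zero_le
    have hcont₂ := hcont le_rfl
    simp only [Nat.cast_zero, zero_mul, add_zero, ht₂] at hcont₁ hcont₂
    exact h.continuous_weight.mul ((hcont₂.sub hcont₁).add continuous_const)
  have hsum : Continuous fun y => -δ * ∑ j ∈ Finset.range N,
      truncInfConv v M (t₁ / 2) (t₂ + t₁ / 2) ε (t₁ + (j + 1 : ℕ) * δ) y :=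
    continuous_const.mul (continuous_finsetSum _ fun j hj => hcont (Finset.mem_range.1 hj))
  refine scaleConvex_add_driftGreen h.drift_nonneg hsum.upperSemicontinuous hf
    fun y η hη => Eventually.frequently ?_
  have hdiff := h.eventually_mul_sum_driftDiff_truncInfConv_le hM hε ht₁ hsmall hδ hN ht₂ y hη
  generalize truncInfConv v M (t₁ / 2) (t₂ + t₁ / 2) ε = z at hdiff ⊢
  filter_upwards [hdiff] with k hk
  rw [driftDiff_const_mul_sum]
  linarith

theorem scaleConvex_driftGreen_sub_integral_truncInfConv (h : NonnegSolution W ρ v) (hM : 0 ≤ M)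
    (hε : 0 < ε) (ht₁ : 0 < t₁) (ht₂ : t₁ < t₂) (hsmall : 2 * ε * M < (t₁ / 2) ^ 2) :
    ScaleConvex W fun y =>
      driftGreen W (fun x => ρ x * (truncInfConv v M (t₁ / 2) (t₂ + t₁ / 2) ε t₂ x -
        truncInfConv v M (t₁ / 2) (t₂ + t₁ / 2) ε t₁ x)) y -
      ∫ s in t₁..t₂, truncInfConv v M (t₁ / 2) (t₂ + t₁ / 2) ε s y := by
  refine scaleConvex_driftGreen_sub_integral (K := (t₂ + t₁ / 2 - t₁ / 2) / ε) ht₂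
    h.continuous_weight
    (h.continuous_truncInfConv hM hε ht₁ hsmall (left_mem_Icc.2 ht₂.le))
    (h.continuous_truncInfConv hM hε ht₁ hsmall (right_mem_Icc.2 ht₂.le))
    (div_nonneg (by linarith) hε.le) (fun y s hs t ht => ?_)
    fun N hN δ hδ hNδ => h.scaleConvex_riemannSum_truncInfConv hM hε ht₁ hsmall hδ hN hNδ
  refine abs_timeInfConv_sub_le hε (fun s hs y => h.lowerSemicontinuousAt_min M
    (by linarith [hs.1]) y) y ⟨?_, ?_⟩ ⟨?_, ?_⟩ <;> linarith [hs.1, hs.2, ht.1, ht.2]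

theorem truncInfConv_le (h : NonnegSolution W ρ v) {T₁ T₂ : ℝ} (hT₁ : 0 < T₁) (ht : t ∈ Icc T₁ T₂)
    (y : ℝ) : truncInfConv v M T₁ T₂ ε t y ≤ min (v t y) M := by
  obtain ⟨-, -, -, hle⟩ := h.exists_isLeast_truncInfConv hT₁ (ht.1.trans ht.2) M ε t y
  simpa using hle t ht

theorem exists_sq_sub_le_and_min_le_truncInfConv (h : NonnegSolution W ρ v) (hM : 0 ≤ M)
    (hε : 0 < ε) {T₁ T₂ : ℝ} (hT₁ : 0 < T₁) (ht : t ∈ Icc T₁ T₂) (y : ℝ) :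
    ∃ σ > 0, (t - σ) ^ 2 ≤ 2 * ε * M ∧ min (v σ y) M ≤ truncInfConv v M T₁ T₂ ε t y := by
  obtain ⟨σ, hσ, heq, hle⟩ := h.exists_isLeast_truncInfConv hT₁ (ht.1.trans ht.2) M ε t y
  have hσ₀ := hT₁.trans_le hσ.1
  refine ⟨σ, hσ₀, h.sq_sub_le_of_isLeast hM hε hσ₀ (by simpa [heq] using hle t ht), ?_⟩
  refine (le_add_of_nonneg_right ?_).trans_eq heq.symm
  positivity

theorem truncInfConv_nonneg (h : NonnegSolution W ρ v) (hM : 0 ≤ M) (hε : 0 < ε) {T₁ T₂ : ℝ}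
    (hT₁ : 0 < T₁) (ht : t ∈ Icc T₁ T₂) (y : ℝ) : 0 ≤ truncInfConv v M T₁ T₂ ε t y := by
  obtain ⟨σ, hσ, -, hle⟩ := h.exists_sq_sub_le_and_min_le_truncInfConv hM hε hT₁ ht y
  exact (le_min (h.nonneg σ hσ y) hM).trans hle

theorem tendsto_truncInfConv (h : NonnegSolution W ρ v) {M ε : ℕ → ℝ} (hM : ∀ n, 0 ≤ M n)
    (hM_lim : Tendsto M atTop atTop) (hε : ∀ n, 0 < ε n)
    (hlim : Tendsto (fun n => 2 * ε n * M n) atTop (𝓝 0)) {T₁ T₂ : ℝ} (hT₁ : 0 < T₁)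
    (ht : t ∈ Icc T₁ T₂) (y : ℝ) :
    Tendsto (fun n => truncInfConv v (M n) T₁ T₂ (ε n) t y) atTop (𝓝 (v t y)) := by
  choose σ _ hsq hle using fun n =>
    h.exists_sq_sub_le_and_min_le_truncInfConv (hM n) (hε n) hT₁ ht y
  have hσ_lim : Tendsto σ atTop (𝓝 t) := by
    have : Tendsto (fun n => (t - σ n) ^ 2) atTop (𝓝 0) :=
      squeeze_zero (fun _ => sq_nonneg _) hsq hlim
    have habs : Tendsto (fun n => |t - σ n|) atTop (𝓝 0) := by
      simpa [Real.sqrt_sq_eq_abs] using this.sqrt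
    simpa using (tendsto_const_nhds (x := t)).sub ((tendsto_zero_iff_abs_tendsto_zero _).2 habs)
  have hv : Tendsto (fun n => v (σ n) y) atTop (𝓝 (v t y)) :=
    (h.continuousAt_time (hT₁.trans_le ht.1) y).tendsto.comp hσ_lim
  have hmin : ∀ᶠ n in atTop, v (σ n) y = min (v (σ n) y) (M n) := by
    filter_upwards [hv.eventually_lt_const (lt_add_one _), hM_lim.eventually_ge_atTop (v t y + 1)]
      with n hn hMn
    exact (min_eq_left (hn.le.trans hMn)).symm
  exact tendsto_of_tendsto_of_tendsto_of_le_of_le (hv.congr' hmin) tendsto_const_nhds hle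
    fun n => (h.truncInfConv_le hT₁ ht y).trans (min_le_left _ _)

theorem continuousOn_truncInfConv_time (h : NonnegSolution W ρ v) (hε : 0 < ε) {T₁ T₂ : ℝ}
    (hT₁ : 0 < T₁) (y : ℝ) :
    ContinuousOn (fun t => truncInfConv v M T₁ T₂ ε t y) (Icc T₁ T₂) := by
  refine LipschitzOnWith.continuousOn (K := ((T₂ - T₁) / ε).toNNReal)
    (LipschitzOnWith.of_dist_le_mul fun t ht s hs => ?_)
  refine (abs_timeInfConv_sub_le hε (fun s hs y =>
    h.lowerSemicontinuousAt_min M (hT₁.trans_le hs.1) y) y hs ht).trans ?_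
  exact mul_le_mul_of_nonneg_right (Real.le_coe_toNNReal _) (abs_nonneg _)

theorem scaleConvex_driftGreen_sub_integral (h : NonnegSolution W ρ v) (ht₁ : 0 < t₁)
    (ht₂ : t₁ < t₂) :
    ScaleConvex W fun y =>
      driftGreen W (fun x => ρ x * (v t₂ x - v t₁ x)) y - ∫ s in t₁..t₂, v s y := by
  obtain ⟨M, ε, hM, hM_lim, hε, hsmall, hlim⟩ :=
    exists_seq_mul_lt_tendsto_zero (sq_pos_of_pos (half_pos ht₁))
  set z : ℕ → ℝ → ℝ → ℝ := fun n => truncInfConv v (M n) (t₁ / 2) (t₂ + t₁ / 2) (ε n)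
  have hsub : Icc t₁ t₂ ⊆ Icc (t₁ / 2) (t₂ + t₁ / 2) :=
    Icc_subset_Icc (by linarith) (by linarith)
  have hz_lim {t : ℝ} (ht : t ∈ Icc t₁ t₂) (y : ℝ) : Tendsto (z · t y) atTop (𝓝 (v t y)) :=
    h.tendsto_truncInfConv hM hM_lim hε hlim (half_pos ht₁) (hsub ht) y
  have hz_mem (n : ℕ) {t : ℝ} (ht : t ∈ Icc t₁ t₂) (y : ℝ) : z n t y ∈ Icc 0 (v t y) :=
    ⟨h.truncInfConv_nonneg (hM n) (hε n) (half_pos ht₁) (hsub ht) y,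
      (h.truncInfConv_le (half_pos ht₁) (hsub ht) y).trans (min_le_left _ _)⟩
  have hleft := left_mem_Icc.2 ht₂.le
  have hright := right_mem_Icc.2 ht₂.le
  have hρ := h.continuous_weight
  have hv₁ := h.continuous_space ht₁
  have hv₂ := h.continuous_space (ht₁.trans ht₂)
  refine .of_tendsto (l := atTop) (.of_forall fun n =>
    h.scaleConvex_driftGreen_sub_integral_truncInfConv (hM n) (hε n) ht₁ ht₂ (hsmall n))
    fun y => (tendsto_driftGreen (B := fun x => ρ x * (v t₂ x + v t₁ x)) (fun n => ?_)
      (by fun_prop) (fun n x => ?_) (fun x => ?_) y).sub ?_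
  · exact hρ.mul ((h.continuous_truncInfConv (hM n) (hε n) ht₁ (hsmall n) hright).sub
      (h.continuous_truncInfConv (hM n) (hε n) ht₁ (hsmall n) hleft))
  · rw [abs_mul, abs_of_pos (h.weight_pos x)]
    refine mul_le_mul_of_nonneg_left (abs_le.2 ⟨?_, ?_⟩) (h.weight_pos x).le <;>
    linarith [(hz_mem n hleft x).1, (hz_mem n hleft x).2, (hz_mem n hright x).1,
      (hz_mem n hright x).2]
  · exact ((hz_lim hright x).sub (hz_lim hleft x)).const_mul _
  · have hmem {s : ℝ} (hs : s ∈ uIoc t₁ t₂) : s ∈ Icc t₁ t₂ :=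
      Ioc_subset_Icc_self (uIoc_of_le ht₂.le ▸ hs)
    refine intervalIntegral.tendsto_integral_filter_of_dominated_convergence (fun s => v s y)
      (.of_forall fun n => ?_) (.of_forall fun n => .of_forall fun s hs => ?_)
      (h.intervalIntegrable_time ht₁ (ht₁.trans ht₂) y)
      (.of_forall fun s hs => hz_lim (hmem hs) y)
    · exact ((h.continuousOn_truncInfConv_time (hε n) (half_pos ht₁) y).mono fun s hs =>
        hsub (hmem hs)).aestronglyMeasurable measurableSet_uIoc
    · exact (abs_of_nonneg (hz_mem n (hmem hs) y).1).trans_le (hz_mem n (hmem hs) y).2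

end NonnegSolution

end ScaleConvexity

section AsymptoticallyLinear

variable {k F : ℝ → ℝ} {c : ℝ}

theorem convexOn_univ_of_exists_support_line
    (hk : ∀ y₀, ∃ m, ∀ y, k y₀ + m * (y - y₀) ≤ k y) : ConvexOn ℝ univ k := by
  refine ⟨convex_univ, fun x _ y _ a b ha hb hab => ?_⟩
  obtain ⟨m, hm⟩ := hk (a • x + b • y)
  simp only [smul_eq_mul] at hm ⊢
  have hb' : b = 1 - a := by linarith
  subst hb'
  linarith [mul_le_mul_of_nonneg_left (hm x) ha, mul_le_mul_of_nonneg_left (hm y) hb]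

theorem sub_le_of_convexOn_of_eventually_le (hk : ConvexOn ℝ univ k)
    (hle : ∀ ε > 0, ∀ᶠ y in atTop, k y ≤ (c + ε) * y) {x y : ℝ} (hxy : x < y) :
    k y - k x ≤ c * (y - x) := by
  by_contra! hlt
  obtain ⟨δ, hδ, hslope⟩ : ∃ δ > 0, k y - k x = (c + 2 * δ) * (y - x) := by
    refine ⟨(k y - k x - c * (y - x)) / (2 * (y - x)), by
      have := sub_pos.2 hxy; have := sub_pos.2 hlt; positivity, ?_⟩
    field_simp [(sub_pos.2 hxy).ne']
    ring
  obtain ⟨z, hz, hyz, hlarge⟩ := ((hle δ hδ).and ((eventually_gt_atTop y).and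
    (eventually_gt_atTop (((c + 2 * δ) * x - k x) / δ)))).exists
  have hsecant := hk.secant_mono_aux2 (mem_univ x) (mem_univ z) hxy hyz
  rw [hslope, mul_div_cancel_right₀ _ (sub_pos.2 hxy).ne',
    le_div_iff₀ (sub_pos.2 (hxy.trans hyz))] at hsecant
  rw [div_lt_iff₀ hδ] at hlarge
  linarith

theorem eq_add_mul_of_convexOn_of_eventually_le (hk : ConvexOn ℝ univ k)
    (htop : ∀ ε > 0, ∀ᶠ y in atTop, k y ≤ (c + ε) * y)
    (hbot : ∀ ε > 0, ∀ᶠ y in atTop, k (-y) ≤ (-c + ε) * y) (y : ℝ) : k y = k 0 + c * y := by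
  have hneg : ConvexOn ℝ univ fun y => k (-y) := hk.comp_linearMap (-LinearMap.id)
  have heq {x y : ℝ} (hxy : x < y) : k y - k x = c * (y - x) := by
    have hle := sub_le_of_convexOn_of_eventually_le hk htop hxy
    have hge := sub_le_of_convexOn_of_eventually_le hneg hbot (neg_lt_neg hxy)
    simp only [neg_neg] at hge
    linarith
  rcases lt_trichotomy y 0 with hy | rfl | hy
  · linarith [heq hy]
  · simp
  · linarith [heq hy]

theorem eventually_integral_le_of_tendsto (hF : Continuous F) (hlim : Tendsto F atTop (𝓝 c))
    {ε : ℝ} (hε : 0 < ε) : ∀ᶠ y in atTop, ∫ x in 0..y, F x ≤ (c + ε) * y := by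
  obtain ⟨A, hA⟩ := eventually_atTop.1 (hlim.eventually_le_const (show c < c + ε / 2 by linarith))
  filter_upwards [eventually_ge_atTop A,
    eventually_ge_atTop (((∫ x in 0..A, F x) - (c + ε / 2) * A) / (ε / 2))] with y hAy hlarge
  have htail : ∫ x in A..y, F x ≤ ∫ _ in A..y, (c + ε / 2) :=
    intervalIntegral.integral_mono_on hAy (hF.intervalIntegrable _ _)
      intervalIntegrable_const fun x hx => hA x hx.1
  rw [intervalIntegral.integral_const, smul_eq_mul] at htail
  rw [div_le_iff₀ (by positivity)] at hlarge
  rw [← intervalIntegral.integral_add_adjacent_intervals (hF.intervalIntegrable 0 A)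
    (hF.intervalIntegrable A y)]
  linarith

theorem exists_eventually_integral_integral_le {f : ℝ → ℝ} (hf : Continuous f)
    (hint : Integrable f) (hzero : ∫ x, f x = 0) : ∃ c, ∀ ε > 0,
      (∀ᶠ y in atTop, ∫ x in 0..y, ∫ z in 0..x, f z ≤ (c + ε) * y) ∧
      ∀ᶠ y in atTop, ∫ x in 0..-y, ∫ z in 0..x, f z ≤ (-c + ε) * y := by
  set F : ℝ → ℝ := fun x => ∫ z in 0..x, f z with hFdef
  have hF : Continuous F := intervalIntegral.continuous_primitive
    (fun a b => hf.intervalIntegrable a b) 0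
  have hright : Tendsto F atTop (𝓝 (∫ x in Ioi 0, f x)) :=
    intervalIntegral_tendsto_integral_Ioi 0 hint.integrableOn tendsto_id
  have hleft : Tendsto (fun x => -F (-x)) atTop (𝓝 (-∫ x in Ioi 0, f x)) := by
    have hsum : ∫ x in Iic 0, f x = -∫ x in Ioi 0, f x := by
      linarith [intervalIntegral.integral_Iic_add_Ioi (b := 0) hint.integrableOn hint.integrableOn]
    have hlim := intervalIntegral_tendsto_integral_Iic 0 hint.integrableOn tendsto_neg_atTop_atBot
    rw [hsum] at hlim
    refine hlim.congr fun x => ?_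
    rw [hFdef, ← intervalIntegral.integral_symm]
  refine ⟨_, fun ε hε => ⟨eventually_integral_le_of_tendsto hF hright hε, ?_⟩⟩
  filter_upwards [eventually_integral_le_of_tendsto (by fun_prop) hleft hε] with y hy
  refine le_of_eq_of_le ?_ hy
  rw [intervalIntegral.integral_neg, intervalIntegral.integral_comp_neg, neg_zero,
    ← intervalIntegral.integral_symm]

end AsymptoticallyLinear

section ScaleConvex

variable {W : ℝ} {g : ℝ → ℝ}

theorem ScaleConvex.mul_scale_sub_le (hg : ScaleConvex W g) {x y y₀ : ℝ} (hzero : g y₀ = 0)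
    (hx : x ∈ Icc y₀ y) :
    g x * (scale W y - scale W y₀) ≤ g y * (scale W x - scale W y₀) := by
  rcases hx.1.eq_or_lt with rfl | hx₁
  · simp [hzero]
  rcases hx.2.eq_or_lt with rfl | hx₂
  · rfl
  · have := hg hx₁ hx₂
    rw [hzero] at this
    linarith

theorem ScaleConvex.mul_integral_le (hg : ScaleConvex W g) (hW : 0 ≤ W) (hnonneg : ∀ y, 0 ≤ g y)
    {y₀ : ℝ} (hzero : g y₀ = 0) (y : ℝ) : W * ∫ x in y₀..y, g x ≤ g y := by
  rcases le_or_gt y y₀ with hy | hy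
  · have hint : 0 ≤ ∫ x in y..y₀, g x :=
      intervalIntegral.integral_nonneg hy fun x _ => hnonneg x
    rw [intervalIntegral.integral_symm]
    linarith [hnonneg y, mul_nonneg hW hint]
  have hgap : 0 < scale W y - scale W y₀ := sub_pos.2 (strictMono_scale W hy)
  have hchord (x : ℝ) (hx : x ∈ Icc y₀ y) :
      W * g x * (scale W y - scale W y₀) ≤
        g y * (Real.exp (W * x) - Real.exp (W * y₀)) := by
    have hscale : Real.exp (W * x) - Real.exp (W * y₀) = W * (scale W x - scale W y₀) := by
      linarith [mul_scale W x, mul_scale W y₀]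
    rw [hscale]
    linarith [mul_le_mul_of_nonneg_left (hg.mul_scale_sub_le hzero hx) hW]
  have hexp : Continuous fun x => Real.exp (W * x) := by fun_prop
  have hexp' : Continuous fun x => g y * (Real.exp (W * x) - Real.exp (W * y₀)) := by fun_prop
  have hmono := intervalIntegral.integral_mono_on (μ := volume) hy.le
    (((hg.continuous.const_mul W).mul_const _).intervalIntegrable y₀ y)
    (hexp'.intervalIntegrable y₀ y) hchord
  rw [intervalIntegral.integral_mul_const, intervalIntegral.integral_const_mul,
    intervalIntegral.integral_const_mul, intervalIntegral.integral_sub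
      (hexp.intervalIntegrable _ _) intervalIntegrable_const,
    intervalIntegral.integral_eq_sub_of_hasDerivAt (fun x _ => hasDerivAt_scale W x)
      (hexp.intervalIntegrable _ _), intervalIntegral.integral_const, smul_eq_mul] at hmono
  have hdrop : 0 ≤ g y * ((y - y₀) * Real.exp (W * y₀)) :=
    mul_nonneg (hnonneg y) (mul_nonneg (sub_nonneg.2 hy.le) (Real.exp_pos _).le)
  exact le_of_mul_le_mul_right (by linarith) hgap

theorem ScaleConvex.convexOn_sub_mul_integral (hg : ScaleConvex W g) (hW : 0 ≤ W) :
    ConvexOn ℝ univ fun y => g y - W * ∫ x in 0..y, g x := by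
  refine convexOn_univ_of_exists_support_line fun y₀ => ?_
  obtain ⟨m, hm⟩ := hg.exists_support_line y₀
  refine ⟨m * Real.exp (W * y₀) - W * g y₀, fun y => ?_⟩
  have hscale := continuous_scale W
  have hgc := hg.continuous
  have hdiff : ScaleConvex W fun x => g x - (g y₀ + m * (scale W x - scale W y₀)) :=
    fun a b c hab hbc => by linarith [hg hab hbc]
  have hle := hdiff.mul_integral_le hW (fun x => sub_nonneg.2 (hm x)) (y₀ := y₀) (by ring) y
  have hline : W * ∫ x in y₀..y, (g y₀ + m * (scale W x - scale W y₀)) =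
      W * g y₀ * (y - y₀) +
        m * (scale W y - scale W y₀ - Real.exp (W * y₀) * (y - y₀)) := by
    have hderiv (x : ℝ) : HasDerivAt
        (fun x => W * g y₀ * x + m * (scale W x - Real.exp (W * y₀) * x))
        (W * (g y₀ + m * (scale W x - scale W y₀))) x := by
      refine (((hasDerivAt_id x).const_mul _).add (((hasDerivAt_scale W x).sub
        ((hasDerivAt_id x).const_mul _)).const_mul m)).congr_deriv ?_
      linear_combination m * (mul_scale W y₀ - mul_scale W x)
    rw [← intervalIntegral.integral_const_mul, intervalIntegral.integral_eq_sub_of_hasDerivAt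
      (fun x _ => hderiv x) (Continuous.intervalIntegrable (by fun_prop) _ _)]
    ring
  rw [intervalIntegral.integral_sub (hgc.intervalIntegrable _ _)
    (Continuous.intervalIntegrable (by fun_prop) _ _), mul_sub, hline] at hle
  rw [← intervalIntegral.integral_add_adjacent_intervals (hgc.intervalIntegrable 0 y₀)
    (hgc.intervalIntegrable y₀ y)]
  linarith

theorem driftGreen_sub_sub_mul_integral {f V : ℝ → ℝ} (hf : Continuous f) (hV : Continuous V)
    (y : ℝ) :
    (driftGreen W f y - V y) - W * ∫ x in 0..y, (driftGreen W f x - V x) =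
      (∫ x in 0..y, ∫ z in 0..x, f z) + W * (∫ x in 0..y, V x) - V y := by
  rw [intervalIntegral.integral_sub ((continuous_driftGreen hf).intervalIntegrable _ _)
    (hV.intervalIntegrable _ _), ← driftGreen_sub_mul_integral hf]
  ring

end ScaleConvex

theorem intervalIntegral_le_integral {g : ℝ → ℝ} (hg : Integrable g) (hnonneg : ∀ x, 0 ≤ g x)
    (a b : ℝ) : ∫ x in a..b, g x ≤ ∫ x, g x := by
  have habs := intervalIntegral.norm_integral_le_integral_norm_uIoc (f := g) (μ := volume)
    (a := a) (b := b)
  simp only [Real.norm_of_nonneg (hnonneg _)] at habs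
  exact (le_abs_self _).trans (habs.trans (setIntegral_le_integral hg (.of_forall hnonneg)))

/-- Ellipticity of the weight in front of the time derivative. -/
structure EllipticWeight (Λ : ℝ) (ρ : ℝ → ℝ) : Prop where
  one_le : 1 ≤ Λ
  continuous_weight : Continuous ρ
  elliptic : Elliptic Λ ρ

/-- A `NonnegSolution` with an elliptic weight and unit mass at every time, like the fundamental
solution with its pole frozen. -/
structure NormalizedSolution (W Λ : ℝ) (ρ : ℝ → ℝ) (v : ℝ → ℝ → ℝ) : Prop
    extends NonnegSolution W ρ v, EllipticWeight Λ ρ where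
  mass : ∀ t, 0 < t → ∫ y, ρ y * v t y = 1

namespace EllipticWeight

variable {Λ : ℝ} {ρ g : ℝ → ℝ}

theorem pos (h : EllipticWeight Λ ρ) : 0 < Λ := one_pos.trans_le h.one_le

theorem le_weight (h : EllipticWeight Λ ρ) (y : ℝ) : 1 / Λ ≤ ρ y := (h.elliptic y).1

theorem weight_le (h : EllipticWeight Λ ρ) (y : ℝ) : ρ y ≤ Λ := (h.elliptic y).2

theorem weight_pos (h : EllipticWeight Λ ρ) (y : ℝ) : 0 < ρ y :=
  (one_div_pos.2 h.pos).trans_le (h.le_weight y)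

theorem one_le_mul (h : EllipticWeight Λ ρ) (y : ℝ) : 1 ≤ Λ * ρ y :=
  (div_le_iff₀' h.pos).1 (h.le_weight y)

theorem integrable_of_weight_mul (h : EllipticWeight Λ ρ) (hg : Integrable fun y => ρ y * g y) :
    Integrable g := by
  have hdiv : Integrable fun y => (ρ y)⁻¹ * (ρ y * g y) := by
    refine hg.bdd_mul (c := Λ)
      (h.continuous_weight.inv₀ fun y => (h.weight_pos y).ne').aestronglyMeasurable
      (.of_forall fun y => ?_)
    rw [Real.norm_eq_abs, abs_of_pos (inv_pos.2 (h.weight_pos y))]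
    exact inv_le_of_inv_le₀ h.pos (one_div Λ ▸ h.le_weight y)
  exact hdiv.congr (.of_forall fun y => inv_mul_cancel_left₀ (h.weight_pos y).ne' _)

theorem integral_le (h : EllipticWeight Λ ρ) (hg : Integrable fun y => ρ y * g y)
    (hnonneg : ∀ y, 0 ≤ g y) : ∫ y, g y ≤ Λ * ∫ y, ρ y * g y := by
  rw [← integral_const_mul]
  refine integral_mono (h.integrable_of_weight_mul hg) (hg.const_mul Λ) fun y => ?_
  rw [← mul_assoc]
  exact le_mul_of_one_le_left (hnonneg y) (h.one_le_mul y)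

end EllipticWeight

section Fubini

variable {f : ℝ → ℝ → ℝ} {C t₁ t₂ : ℝ}

-- Clamping the time to `[t₁, t₂]` makes separate continuity global, which gives measurability.
theorem integrable_prod_clamp (hspace : ∀ t, 0 < t → Continuous (f t))
    (htime : ∀ y, ContinuousOn (fun s => f s y) (Ioi 0))
    (hint : ∀ t, 0 < t → Integrable (f t)) (hC : ∀ t, 0 < t → ∫ y, |f t y| ≤ C) (ht₁ : 0 < t₁) :
    Integrable (Function.uncurry fun s y => f (max t₁ (min s t₂)) y)
      ((volume.restrict (Ioc t₁ t₂)).prod volume) := by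
  have hpos (s : ℝ) : 0 < max t₁ (min s t₂) := lt_max_of_lt_left ht₁
  have hmeas : Measurable (Function.uncurry fun s y : ℝ => f (max t₁ (min s t₂)) y) :=
    measurable_uncurry_of_continuous_of_measurable
      (fun y => (htime y).comp_continuous (by fun_prop) hpos)
      fun s => (hspace _ (hpos s)).measurable
  rw [integrable_prod_iff hmeas.aestronglyMeasurable]
  refine ⟨.of_forall fun s => hint _ (hpos s), ?_⟩
  refine (integrable_const C).mono' hmeas.norm.aestronglyMeasurable.integral_prod_right'
    (.of_forall fun s => ?_)
  rw [Real.norm_of_nonneg (integral_nonneg fun _ => norm_nonneg _)]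
  exact hC _ (hpos s)

theorem integral_intervalIntegral_swap (hspace : ∀ t, 0 < t → Continuous (f t))
    (htime : ∀ y, ContinuousOn (fun s => f s y) (Ioi 0))
    (hint : ∀ t, 0 < t → Integrable (f t)) (hC : ∀ t, 0 < t → ∫ y, |f t y| ≤ C) (ht₁ : 0 < t₁)
    (ht : t₁ ≤ t₂) :
    (Integrable fun y => ∫ s in t₁..t₂, f s y) ∧
      IntervalIntegrable (fun s => ∫ y, f s y) volume t₁ t₂ ∧
      ∫ y, ∫ s in t₁..t₂, f s y = ∫ s in t₁..t₂, ∫ y, f s y := by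
  have hprod := integrable_prod_clamp (t₂ := t₂) hspace htime hint hC ht₁
  have hclamp {s : ℝ} (hs : s ∈ Ioc t₁ t₂) : max t₁ (min s t₂) = s := by
    rw [min_eq_left hs.2, max_eq_right hs.1.le]
  have hinner (y : ℝ) : ∫ s in Ioc t₁ t₂, f (max t₁ (min s t₂)) y = ∫ s in t₁..t₂, f s y := by
    rw [intervalIntegral.integral_of_le ht]
    exact setIntegral_congr_fun measurableSet_Ioc fun s hs => by simp only [hclamp hs]
  have houter : EqOn (fun s => ∫ y, f (max t₁ (min s t₂)) y) (fun s => ∫ y, f s y) (Ioc t₁ t₂) :=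
    fun s hs => by simp only [hclamp hs]
  refine ⟨hprod.integral_prod_right.congr (.of_forall hinner), ?_, ?_⟩
  · rw [intervalIntegrable_iff_integrableOn_Ioc_of_le ht]
    exact IntegrableOn.congr_fun hprod.integral_prod_left houter measurableSet_Ioc
  · have hswap := integral_integral_swap hprod
    rw [setIntegral_congr_fun measurableSet_Ioc houter] at hswap
    simp only [hinner] at hswap
    rw [intervalIntegral.integral_of_le ht, hswap]

end Fubini

namespace NormalizedSolution

variable {W Λ : ℝ} {ρ : ℝ → ℝ} {v : ℝ → ℝ → ℝ} {t t₁ t₂ y : ℝ}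

theorem integrable_weight_mul (h : NormalizedSolution W Λ ρ v) (ht : 0 < t) :
    Integrable fun y => ρ y * v t y :=
  .of_integral_ne_zero (by simp [h.mass t ht])

theorem integral_weight_mul_integral (h : NormalizedSolution W Λ ρ v) (ht₁ : 0 < t₁)
    (ht : t₁ ≤ t₂) :
    (Integrable fun y => ρ y * ∫ s in t₁..t₂, v s y) ∧
      ∫ y, ρ y * ∫ s in t₁..t₂, v s y = t₂ - t₁ := by
  have habs (t : ℝ) (ht : 0 < t) : ∫ y, |ρ y * v t y| ≤ 1 := by
    simp only [abs_of_nonneg (mul_nonneg (h.weight_pos _).le (h.nonneg t ht _)), h.mass t ht,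
      le_refl]
  obtain ⟨hint, -, hswap⟩ := integral_intervalIntegral_swap (f := fun s y => ρ y * v s y)
    (fun t ht => h.continuous_weight.mul (h.continuous_space ht))
    (fun y => (h.continuousOn_time y).const_mul _) (fun t ht => h.integrable_weight_mul ht)
    habs ht₁ ht
  simp only [intervalIntegral.integral_const_mul] at hint hswap
  refine ⟨hint, hswap.trans ?_⟩
  have hone : ∀ s ∈ uIcc t₁ t₂, ∫ y, ρ y * v s y = 1 := fun s hs =>
    h.mass s (ht₁.trans_le (uIcc_of_le ht ▸ hs).1)
  simp [intervalIntegral.integral_congr hone]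

theorem integral_time_nonneg (h : NormalizedSolution W Λ ρ v) (ht₁ : 0 < t₁) (ht : t₁ ≤ t₂)
    (y : ℝ) : 0 ≤ ∫ s in t₁..t₂, v s y :=
  intervalIntegral.integral_nonneg ht fun s hs => h.nonneg s (ht₁.trans_le hs.1) y

theorem continuous_integral_time (h : NormalizedSolution W Λ ρ v) (ht₁ : 0 < t₁) (ht : t₁ < t₂) :
    Continuous fun y => ∫ s in t₁..t₂, v s y := by
  have hρ := h.continuous_weight
  have hv₁ := h.continuous_space ht₁
  have hv₂ := h.continuous_space (ht₁.trans ht)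
  have hG : Continuous (driftGreen W fun x => ρ x * (v t₂ x - v t₁ x)) :=
    continuous_driftGreen (by fun_prop)
  refine (hG.sub (h.scaleConvex_driftGreen_sub_integral ht₁ ht).continuous).congr fun y => ?_
  exact sub_sub_cancel _ _

theorem integral_weight_mul_sub (h : NormalizedSolution W Λ ρ v) (ht₁ : 0 < t₁) (ht₂ : 0 < t₂) :
    Integrable (fun y => ρ y * (v t₂ y - v t₁ y)) ∧ ∫ y, ρ y * (v t₂ y - v t₁ y) = 0 := by
  have hi₁ := h.integrable_weight_mul ht₁
  have hi₂ := h.integrable_weight_mul ht₂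
  simp only [mul_sub]
  exact ⟨hi₂.sub hi₁, by rw [integral_sub hi₂ hi₁, h.mass _ ht₁, h.mass _ ht₂, sub_self]⟩

theorem exists_integral_time_eq (h : NormalizedSolution W Λ ρ v) (ht₁ : 0 < t₁) (ht : t₁ < t₂) :
    ∃ c d : ℝ, ∀ y, ∫ s in t₁..t₂, v s y = W * (∫ x in 0..y, ∫ s in t₁..t₂, v s x) +
      (∫ x in 0..y, ∫ z in 0..x, ρ z * (v t₂ z - v t₁ z)) - c * y - d := by
  set V : ℝ → ℝ := fun y => ∫ s in t₁..t₂, v s y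
  set f : ℝ → ℝ := fun y => ρ y * (v t₂ y - v t₁ y)
  set k : ℝ → ℝ := fun y =>
    (driftGreen W f y - V y) - W * ∫ x in 0..y, (driftGreen W f x - V x)
  have hW := h.drift_nonneg
  have hV : Continuous V := h.continuous_integral_time ht₁ ht
  have hfc : Continuous f := h.continuous_weight.mul
    ((h.continuous_space (ht₁.trans ht)).sub (h.continuous_space ht₁))
  have hVint : Integrable V :=
    h.toEllipticWeight.integrable_of_weight_mul (h.integral_weight_mul_integral ht₁ ht.le).1
  have hV₀ (y : ℝ) : 0 ≤ V y := h.integral_time_nonneg ht₁ ht.le y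
  have hformula (y : ℝ) : k y = (∫ x in 0..y, ∫ z in 0..x, f z) + W * (∫ x in 0..y, V x) - V y :=
    driftGreen_sub_sub_mul_integral hfc hV y
  obtain ⟨hfint, hfzero⟩ := h.integral_weight_mul_sub ht₁ (ht₁.trans ht)
  obtain ⟨c, hc⟩ := exists_eventually_integral_integral_le hfc hfint hfzero
  have hle {ε a : ℝ} {e : ℝ → ℝ} (hε : 0 < ε)
      (hdouble : ∀ᶠ y in atTop, ∫ x in 0..e y, ∫ z in 0..x, f z ≤ (a + ε / 2) * y) :
      ∀ᶠ y in atTop, k (e y) ≤ (a + ε) * y := by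
    filter_upwards [hdouble, eventually_ge_atTop (W * (∫ x, V x) / (ε / 2))] with y hy hlarge
    rw [div_le_iff₀ (by positivity)] at hlarge
    rw [hformula]
    linarith [hV₀ (e y),
      mul_le_mul_of_nonneg_left (intervalIntegral_le_integral hVint hV₀ 0 (e y)) hW]
  have haffine := eq_add_mul_of_convexOn_of_eventually_le
    ((h.scaleConvex_driftGreen_sub_integral ht₁ ht).convexOn_sub_mul_integral hW)
    (fun ε hε => hle (e := id) hε (hc _ (half_pos hε)).1)
    (fun ε hε => hle hε (hc _ (half_pos hε)).2)
  exact ⟨c, k 0, fun y => by linarith [haffine y, hformula y]⟩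

/-- Time integration turns the pointwise equation into a classical one with continuous second
derivative, with no regularity of `∂ₜv` needed. -/
theorem exists_hasDerivAt_integral_time (h : NormalizedSolution W Λ ρ v) (ht₁ : 0 < t₁)
    (ht : t₁ < t₂) : ∃ Vx : ℝ → ℝ, ∀ y,
      HasDerivAt (fun y => ∫ s in t₁..t₂, v s y) (Vx y) y ∧
      HasDerivAt Vx (W * Vx y + ρ y * (v t₂ y - v t₁ y)) y := by
  obtain ⟨c, d, hVeq⟩ := h.exists_integral_time_eq ht₁ ht
  set V : ℝ → ℝ := fun y => ∫ s in t₁..t₂, v s y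
  set f : ℝ → ℝ := fun y => ρ y * (v t₂ y - v t₁ y)
  have hV : Continuous V := h.continuous_integral_time ht₁ ht
  have hf : Continuous f := h.continuous_weight.mul
    ((h.continuous_space (ht₁.trans ht)).sub (h.continuous_space ht₁))
  have hF : Continuous fun x => ∫ z in 0..x, f z :=
    intervalIntegral.continuous_primitive (fun a b => hf.intervalIntegrable a b) 0
  have hderiv (y : ℝ) : HasDerivAt V (W * V y + (∫ z in 0..y, f z) - c) y :=
    (((((hV.integral_hasStrictDerivAt 0 y).hasDerivAt.const_mul W).add
      (hF.integral_hasStrictDerivAt 0 y).hasDerivAt).sub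
        ((hasDerivAt_id y).const_mul c)).sub_const d).congr_of_eventuallyEq
          (.of_forall hVeq) |>.congr_deriv (by ring)
  exact ⟨_, fun y => ⟨hderiv y, (((hderiv y).const_mul W).add
    (hf.integral_hasStrictDerivAt 0 y).hasDerivAt).sub_const c⟩⟩

end NormalizedSolution

theorem exists_ge_lt_of_integrable {f : ℝ → ℝ} (hf : Integrable f) {η : ℝ} (hη : 0 < η) (A : ℝ) :
    ∃ x ≥ A, f x < η := by
  by_contra! hlarge
  have hconst : IntegrableOn (fun _ : ℝ => η) (Ici A) := by
    refine hf.integrableOn.mono' aestronglyMeasurable_const ?_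
    filter_upwards [ae_restrict_mem measurableSet_Ici] with x hx
    simpa only [Real.norm_of_nonneg hη.le] using hlarge x hx
  rw [integrableOn_const_iff] at hconst
  simp [hη.ne'] at hconst

theorem exists_seq_tendsto_zero_of_integrable {f : ℝ → ℝ} (hf : Integrable f)
    (hnonneg : ∀ x, 0 ≤ f x) :
    ∃ x : ℕ → ℝ, Tendsto x atTop atTop ∧ Tendsto (f ∘ x) atTop (𝓝 0) := by
  choose x hx hfx using fun n : ℕ =>
    exists_ge_lt_of_integrable hf (Nat.one_div_pos_of_nat (α := ℝ) (n := n)) n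
  exact ⟨x, tendsto_atTop_mono hx tendsto_natCast_atTop_atTop, squeeze_zero (fun n => hnonneg _)
    (fun n => (hfx n).le) tendsto_one_div_add_atTop_nhds_zero_nat⟩

/-- A time slice of a smooth solution: a nonnegative profile of unit mass solving
`u'' = W u' + ρ d`, where the source `d` plays the role of the time derivative. -/
structure ForcedProfile (W Λ K : ℝ) (ρ u u' d : ℝ → ℝ) : Prop extends EllipticWeight Λ ρ where
  drift_nonneg : 0 ≤ W
  nonneg : ∀ y, 0 ≤ u y
  mass : ∫ y, ρ y * u y = 1
  hasDerivAt : ∀ y, HasDerivAt u (u' y) y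
  hasDerivAt_deriv : ∀ y, HasDerivAt u' (W * u' y + ρ y * d y) y
  continuous_source : Continuous d
  integrable_source : Integrable fun y => ρ y * |d y|
  integral_source_le : ∫ y, ρ y * |d y| ≤ K

namespace ForcedProfile

variable {W Λ K : ℝ} {ρ u u' d β b b' : ℝ → ℝ}

theorem continuous (h : ForcedProfile W Λ K ρ u u' d) : Continuous u :=
  continuous_iff_continuousAt.2 fun y => (h.hasDerivAt y).continuousAt

theorem continuous_deriv (h : ForcedProfile W Λ K ρ u u' d) : Continuous u' :=
  continuous_iff_continuousAt.2 fun y => (h.hasDerivAt_deriv y).continuousAt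

theorem integrable_weight_mul (h : ForcedProfile W Λ K ρ u u' d) :
    Integrable fun y => ρ y * u y :=
  .of_integral_ne_zero (by simp [h.mass])

theorem integrable (h : ForcedProfile W Λ K ρ u u' d) : Integrable u :=
  h.integrable_of_weight_mul h.integrable_weight_mul

theorem bound_nonneg (h : ForcedProfile W Λ K ρ u u' d) : 0 ≤ K :=
  (integral_nonneg fun y => mul_nonneg (h.weight_pos y).le (abs_nonneg _)).trans
    h.integral_source_le

theorem exists_mem_Icc_le (h : ForcedProfile W Λ K ρ u u' d) (y : ℝ) :
    ∃ z ∈ Icc y (y + 1), u z ≤ Λ := by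
  by_contra! hlarge
  have hlt : ∫ _ in y..y + 1, Λ < ∫ z in y..y + 1, u z :=
    intervalIntegral.integral_lt_integral_of_continuousOn_of_le_of_exists_lt (by linarith)
      continuousOn_const h.continuous.continuousOn
      (fun x hx => (hlarge x ⟨hx.1.le, hx.2⟩).le)
      ⟨y, left_mem_Icc.2 (by linarith), hlarge y (left_mem_Icc.2 (by linarith))⟩
  have hle := intervalIntegral_le_integral h.integrable h.nonneg y (y + 1)
  have hmass := h.integral_le h.integrable_weight_mul h.nonneg
  rw [h.mass, mul_one] at hmass
  rw [intervalIntegral.integral_const, add_sub_cancel_left, one_smul] at hlt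
  linarith

theorem flux_sub_le (h : ForcedProfile W Λ K ρ u u' d) (y z : ℝ) :
    (u' y - W * u y) - (u' z - W * u z) ≤ K := by
  have hflux (x : ℝ) : HasDerivAt (fun x => u' x - W * u x) (ρ x * d x) x :=
    ((h.hasDerivAt_deriv x).sub ((h.hasDerivAt x).const_mul W)).congr_deriv (by ring)
  have habs (x : ℝ) : ‖ρ x * d x‖ = ρ x * |d x| := by
    rw [norm_mul, Real.norm_of_nonneg (h.weight_pos x).le, Real.norm_eq_abs]
  rw [← intervalIntegral.integral_eq_sub_of_hasDerivAt (fun x _ => hflux x)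
    ((h.continuous_weight.mul h.continuous_source).intervalIntegrable z y)]
  have hnorm := intervalIntegral.norm_integral_le_integral_norm_uIoc (μ := volume)
    (f := fun x => ρ x * d x) (a := z) (b := y)
  simp only [habs] at hnorm
  exact (le_abs_self _).trans <| hnorm.trans <| (setIntegral_le_integral h.integrable_source
    (.of_forall fun x => mul_nonneg (h.weight_pos x).le (abs_nonneg _))).trans h.integral_source_le

theorem exists_abs_deriv_le (h : ForcedProfile W Λ K ρ u u' d) : ∃ ξ, |u' ξ| ≤ Λ := by
  obtain ⟨p, hp, hup⟩ := h.exists_mem_Icc_le 0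
  obtain ⟨q, hq, huq⟩ := h.exists_mem_Icc_le 2
  have hpq : 1 ≤ q - p := by linarith [hp.2, hq.1]
  obtain ⟨ξ, -, hslope⟩ := exists_hasDerivAt_eq_slope u u' (show p < q by linarith)
    h.continuous.continuousOn fun x _ => h.hasDerivAt x
  refine ⟨ξ, ?_⟩
  rw [hslope, abs_div, abs_of_pos (show 0 < q - p by linarith)]
  refine (div_le_self (abs_nonneg _) hpq).trans (abs_le.2 ?_)
  constructor <;> linarith [h.nonneg p, h.nonneg q]

theorem flux_le (h : ForcedProfile W Λ K ρ u u' d) (y : ℝ) : u' y - W * u y ≤ Λ + K := by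
  obtain ⟨ξ, hξ⟩ := h.exists_abs_deriv_le
  linarith [h.flux_sub_le y ξ, (abs_le.1 hξ).2, mul_nonneg h.drift_nonneg (h.nonneg ξ)]

theorem le_exp_mul (h : ForcedProfile W Λ K ρ u u' d) (y : ℝ) :
    u y ≤ Real.exp W * (2 * Λ + K) := by
  obtain ⟨p, hp, hup⟩ := h.exists_mem_Icc_le (y - 1)
  have hW := h.drift_nonneg
  have hbound : 0 ≤ Λ + K := add_nonneg h.pos.le h.bound_nonneg
  have hpy : p ≤ y := by linarith [hp.2]
  have hderiv (z : ℝ) : HasDerivAt (fun z => u z * Real.exp (-(W * (z - p))))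
      ((u' z - W * u z) * Real.exp (-(W * (z - p)))) z :=
    ((h.hasDerivAt z).mul (((hasDerivAt_id' z).sub_const p).const_mul W).fun_neg.exp).congr_deriv
      (by ring)
  have hle : u y * Real.exp (-(W * (y - p))) - u p * Real.exp (-(W * (p - p))) ≤
      (Λ + K) * (y - p) := by
    refine (convex_Icc p y).image_sub_le_mul_sub_of_deriv_le
      (HasDerivAt.continuousOn fun z _ => hderiv z)
      (fun z _ => (hderiv z).differentiableAt.differentiableWithinAt) (fun z hz => ?_)
      p (left_mem_Icc.2 hpy) y (right_mem_Icc.2 hpy) hpy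
    rw [interior_Icc] at hz
    rw [(hderiv z).deriv]
    have hexp : Real.exp (-(W * (z - p))) ≤ 1 :=
      Real.exp_le_one_iff.2 (neg_nonpos.2 (mul_nonneg hW (sub_nonneg.2 hz.1.le)))
    exact (mul_le_mul_of_nonneg_right (h.flux_le z) (Real.exp_pos _).le).trans
      (mul_le_of_le_one_right hbound hexp)
  have hexp : Real.exp (-W) ≤ Real.exp (-(W * (y - p))) :=
    Real.exp_le_exp.2 (neg_le_neg (mul_le_of_le_one_right hW (by linarith [hp.1])))
  have hsum : u y * Real.exp (-W) ≤ 2 * Λ + K := by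
    rw [sub_self, mul_zero, neg_zero, Real.exp_zero, mul_one] at hle
    linarith [mul_le_mul_of_nonneg_left hexp (h.nonneg y),
      mul_le_of_le_one_right hbound (show y - p ≤ 1 by linarith [hp.1])]
  rwa [Real.exp_neg, ← div_eq_mul_inv, div_le_iff₀' (Real.exp_pos W)] at hsum

theorem exists_forall_abs_deriv_le (h : ForcedProfile W Λ K ρ u u' d) :
    ∃ B, ∀ y, |u' y| ≤ B := by
  obtain ⟨ξ, hξ⟩ := h.exists_abs_deriv_le
  have hW := h.drift_nonneg
  refine ⟨Λ + K + W * (Real.exp W * (2 * Λ + K)), fun y => abs_le.2 ?_⟩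
  have hy := mul_le_mul_of_nonneg_left (h.le_exp_mul y) hW
  have hξ' := mul_le_mul_of_nonneg_left (h.le_exp_mul ξ) hW
  constructor <;> linarith [h.flux_sub_le ξ y, h.flux_le y, abs_le.1 hξ,
    mul_nonneg hW (h.nonneg y)]

theorem mem_Icc (h : ForcedProfile W Λ K ρ u u' d) (y : ℝ) :
    u y ∈ Icc 0 (Real.exp W * (2 * Λ + K)) :=
  ⟨h.nonneg y, h.le_exp_mul y⟩

theorem integrable_comp_mul_source (h : ForcedProfile W Λ K ρ u u' d) (hb : Continuous b) {M : ℝ}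
    (hM : ∀ r ∈ Icc 0 (Real.exp W * (2 * Λ + K)), |b r| ≤ M) :
    (Integrable fun y => ρ y * (b (u y) * d y)) ∧ ∫ y, |ρ y * (b (u y) * d y)| ≤ M * K := by
  have hρ := h.continuous_weight
  have hu := h.continuous
  have hd := h.continuous_source
  have hle (y : ℝ) : |ρ y * (b (u y) * d y)| ≤ M * (ρ y * |d y|) := by
    rw [abs_mul, abs_mul, abs_of_pos (h.weight_pos y), mul_left_comm]
    exact mul_le_mul_of_nonneg_right (hM _ (h.mem_Icc y))
      (mul_nonneg (h.weight_pos y).le (abs_nonneg _))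
  have hint : Integrable fun y => ρ y * (b (u y) * d y) :=
    (h.integrable_source.const_mul M).mono' (Continuous.aestronglyMeasurable (by fun_prop))
      (.of_forall hle)
  refine ⟨hint, (integral_mono hint.abs (h.integrable_source.const_mul M) hle).trans ?_⟩
  rw [integral_const_mul]
  exact mul_le_mul_of_nonneg_left h.integral_source_le
    ((abs_nonneg _).trans (hM _ (h.mem_Icc 0)))

theorem integrable_comp (h : ForcedProfile W Λ K ρ u u' d)
    (hb : Continuous b) (hβ : ∀ r, HasDerivAt β (b r) r) (hβ₀ : β 0 = 0) :
    Integrable fun y => ρ y * β (u y) := by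
  have hρ := h.continuous_weight
  have hu := h.continuous
  have hβc : Continuous β := continuous_iff_continuousAt.2 fun r => (hβ r).continuousAt
  obtain ⟨M, hM⟩ := (isCompact_Icc (a := 0)
    (b := Real.exp W * (2 * Λ + K))).exists_bound_of_continuousOn hb.continuousOn
  refine (h.integrable_weight_mul.const_mul M).mono'
    (Continuous.aestronglyMeasurable (by fun_prop)) (.of_forall fun y => ?_)
  have hle := (convex_Icc 0 (Real.exp W * (2 * Λ + K))).norm_image_sub_le_of_norm_hasDerivWithin_le
    (fun r _ => (hβ r).hasDerivWithinAt) hM (left_mem_Icc.2 ((h.mem_Icc y).1.trans (h.mem_Icc y).2))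
    (h.mem_Icc y)
  rw [hβ₀, sub_zero, sub_zero, Real.norm_of_nonneg (h.nonneg y)] at hle
  rw [norm_mul, Real.norm_of_nonneg (h.weight_pos y).le]
  linarith [mul_le_mul_of_nonneg_left hle (h.weight_pos y).le]

theorem hasDerivAt_energyFlux (h : ForcedProfile W Λ K ρ u u' d)
    (hβ : ∀ r, HasDerivAt β (b r) r) (hb : ∀ r, HasDerivAt b (b' r) r) (y : ℝ) :
    HasDerivAt (fun y => b (u y) * u' y - W * β (u y))
      (b' (u y) * u' y ^ 2 + ρ y * (b (u y) * d y)) y :=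
  ((((hb (u y)).comp y (h.hasDerivAt y)).mul (h.hasDerivAt_deriv y)).sub
    (((hβ (u y)).comp y (h.hasDerivAt y)).const_mul W)).congr_deriv
      (by simp only [Function.comp_apply]; ring)

theorem tendsto_energyFlux (h : ForcedProfile W Λ K ρ u u' d) (hβ : ContinuousAt β 0)
    (hb : ContinuousAt b 0) (hβ₀ : β 0 = 0) (hb₀ : b 0 = 0) {x : ℕ → ℝ}
    (hx : Tendsto (u ∘ x) atTop (𝓝 0)) :
    Tendsto (fun n => b (u (x n)) * u' (x n) - W * β (u (x n))) atTop (𝓝 0) := by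
  obtain ⟨B, hB⟩ := h.exists_forall_abs_deriv_le
  have hb' : Tendsto (fun n => b (u (x n))) atTop (𝓝 0) := by
    simpa only [hb₀, Function.comp_def] using hb.tendsto.comp hx
  have hβ' : Tendsto (fun n => β (u (x n))) atTop (𝓝 0) := by
    simpa only [hβ₀, Function.comp_def] using hβ.tendsto.comp hx
  simpa using (hb'.zero_mul_isBoundedUnder_le
    (isBoundedUnder_of ⟨B, fun n => hB (x n)⟩)).sub (hβ'.const_mul W)

theorem exists_seq_atBot_tendsto_zero (h : ForcedProfile W Λ K ρ u u' d) :
    ∃ x : ℕ → ℝ, Tendsto x atTop atBot ∧ Tendsto (u ∘ x) atTop (𝓝 0) := by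
  obtain ⟨x, hx, hux⟩ := exists_seq_tendsto_zero_of_integrable h.integrable.comp_neg
    fun y => h.nonneg (-y)
  exact ⟨fun n => -x n, tendsto_neg_atTop_atBot.comp hx, hux⟩

theorem integral_dissipation_le (h : ForcedProfile W Λ K ρ u u' d) (hb' : Continuous b')
    (hβ : ∀ r, HasDerivAt β (b r) r) (hb : ∀ r, HasDerivAt b (b' r) r)
    (hconvex : ∀ r, 0 ≤ r → 0 ≤ b' r) (hβ₀ : β 0 = 0) (hb₀ : b 0 = 0) {p q : ℝ} (hpq : p ≤ q) :
    ∫ y in p..q, b' (u y) * u' y ^ 2 ≤ -∫ y, ρ y * (b (u y) * d y) := by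
  have hρ := h.continuous_weight
  have hu := h.continuous
  have hu' := h.continuous_deriv
  have hd := h.continuous_source
  have hbc : Continuous b := continuous_iff_continuousAt.2 fun r => (hb r).continuousAt
  have hdiss : Continuous fun y => b' (u y) * u' y ^ 2 := by fun_prop
  have hsource : Continuous fun y => ρ y * (b (u y) * d y) := by fun_prop
  obtain ⟨M, hM⟩ := (isCompact_Icc (a := 0)
    (b := Real.exp W * (2 * Λ + K))).exists_bound_of_continuousOn hbc.continuousOn
  obtain ⟨x, hx, hux⟩ := h.exists_seq_atBot_tendsto_zero
  obtain ⟨z, hz, huz⟩ := exists_seq_tendsto_zero_of_integrable h.integrable h.nonneg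
  have hlim : Tendsto (fun n => ∫ y in x n..z n, b' (u y) * u' y ^ 2) atTop
      (𝓝 (0 - 0 - ∫ y, ρ y * (b (u y) * d y))) := by
    refine Tendsto.congr (fun n => ?_)
      (((h.tendsto_energyFlux (hβ 0).continuousAt (hb 0).continuousAt hβ₀ hb₀ huz).sub
        (h.tendsto_energyFlux (hβ 0).continuousAt (hb 0).continuousAt hβ₀ hb₀ hux)).sub
        (intervalIntegral_tendsto_integral (h.integrable_comp_mul_source hbc hM).1 hx hz))
    rw [← intervalIntegral.integral_eq_sub_of_hasDerivAt
      (fun y _ => h.hasDerivAt_energyFlux hβ hb y) ((hdiss.add hsource).intervalIntegrable _ _),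
      intervalIntegral.integral_add (hdiss.intervalIntegrable _ _)
        (hsource.intervalIntegrable _ _), add_sub_cancel_right]
  rw [sub_self, zero_sub] at hlim
  refine ge_of_tendsto hlim ?_
  filter_upwards [hx.eventually_le_atBot p, hz.eventually_ge_atTop q] with n hxn hzn
  exact intervalIntegral.integral_mono_interval hxn hpq hzn
    (.of_forall fun y => mul_nonneg (hconvex _ (h.nonneg y)) (sq_nonneg _))
    (hdiss.intervalIntegrable _ _)

end ForcedProfile

theorem hasDerivAt_sq (r : ℝ) : HasDerivAt (fun r : ℝ => r ^ 2) (2 * r) r := by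
  simpa using hasDerivAt_pow 2 r

theorem hasDerivAt_two_mul (r : ℝ) : HasDerivAt (fun r : ℝ => 2 * r) 2 r := by
  simpa using (hasDerivAt_id r).const_mul 2

namespace ForcedProfile

variable {W Λ K : ℝ} {ρ u u' d : ℝ → ℝ}

theorem integrable_sq (h : ForcedProfile W Λ K ρ u u' d) : Integrable fun y => ρ y * u y ^ 2 :=
  h.integrable_comp (by fun_prop) hasDerivAt_sq (zero_pow two_ne_zero)

theorem integral_two_mul_deriv_sq_le (h : ForcedProfile W Λ K ρ u u' d) {p q : ℝ} (hpq : p ≤ q) :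
    ∫ y in p..q, 2 * u' y ^ 2 ≤ -∫ y, ρ y * (2 * u y * d y) :=
  h.integral_dissipation_le continuous_const hasDerivAt_sq hasDerivAt_two_mul
    (fun _ _ => zero_le_two) (zero_pow two_ne_zero) (mul_zero 2) hpq

theorem sq_le_add_div (h : ForcedProfile W Λ K ρ u u' d) (y : ℝ) {l : ℝ} (hl : 0 < l) :
    u y ^ 2 ≤ l * (Λ * ∫ y, ρ y * u y ^ 2) + (-∫ y, ρ y * (2 * u y * d y)) / (2 * l) := by
  have hu := h.continuous
  have hu' := h.continuous_deriv
  obtain ⟨x, hx, hux⟩ := h.exists_seq_atBot_tendsto_zero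
  have hlim : Tendsto (fun n => u y ^ 2 - u (x n) ^ 2) atTop (𝓝 (u y ^ 2 - 0 ^ 2)) :=
    tendsto_const_nhds.sub (hux.pow 2)
  rw [zero_pow two_ne_zero, sub_zero] at hlim
  refine le_of_tendsto hlim ?_
  filter_upwards [hx.eventually_le_atBot y] with n hn
  have hsq : Continuous fun z => l * u z ^ 2 := by fun_prop
  have hdsq : Continuous fun z => 2 * u' z ^ 2 / (2 * l) := by fun_prop
  have hderiv (z : ℝ) : HasDerivAt (fun z => u z ^ 2) (2 * u z * u' z) z :=
    (hasDerivAt_sq (u z)).comp z (h.hasDerivAt z)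
  have hcross : Continuous fun z => 2 * u z * u' z := by fun_prop
  calc u y ^ 2 - u (x n) ^ 2 = ∫ z in x n..y, 2 * u z * u' z :=
        (intervalIntegral.integral_eq_sub_of_hasDerivAt (fun z _ => hderiv z)
          (hcross.intervalIntegrable _ _)).symm
    _ ≤ ∫ z in x n..y, (l * u z ^ 2 + 2 * u' z ^ 2 / (2 * l)) := by
        refine intervalIntegral.integral_mono_on hn (hcross.intervalIntegrable _ _)
          ((hsq.add hdsq).intervalIntegrable _ _) fun z _ => sub_nonneg.1 ?_
        have hsquare : l * u z ^ 2 + 2 * u' z ^ 2 / (2 * l) - 2 * u z * u' z =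
            (l * u z - u' z) ^ 2 / l := by
          field_simp
          ring
        rw [hsquare]
        positivity
    _ = l * (∫ z in x n..y, u z ^ 2) + (∫ z in x n..y, 2 * u' z ^ 2) / (2 * l) := by
        rw [intervalIntegral.integral_add (hsq.intervalIntegrable _ _)
          (hdsq.intervalIntegrable _ _), intervalIntegral.integral_const_mul,
          intervalIntegral.integral_div]
    _ ≤ _ := by
        gcongr
        · exact (intervalIntegral_le_integral (h.integrable_of_weight_mul h.integrable_sq)
            (fun z => sq_nonneg _) _ _).trans (h.integral_le h.integrable_sq fun z => sq_nonneg _)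
        · exact h.integral_two_mul_deriv_sq_le hn

theorem integral_sq_le (h : ForcedProfile W Λ K ρ u u' d) {m : ℝ} (hm : ∀ y, u y ≤ m) :
    ∫ y, ρ y * u y ^ 2 ≤ m := by
  calc ∫ y, ρ y * u y ^ 2 ≤ ∫ y, m * (ρ y * u y) :=
        integral_mono h.integrable_sq (h.integrable_weight_mul.const_mul m) fun y => by
          have := mul_le_mul_of_nonneg_right (hm y) (mul_nonneg (h.weight_pos y).le (h.nonneg y))
          linarith
    _ = m := by rw [integral_const_mul, h.mass, mul_one]

theorem bddAbove_range (h : ForcedProfile W Λ K ρ u u' d) : BddAbove (range u) :=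
  ⟨_, forall_mem_range.2 h.le_exp_mul⟩

/-- Nash's inequality in the supremum norm. -/
theorem iSup_pow_three_le (h : ForcedProfile W Λ K ρ u u' d) :
    (⨆ y, u y) ^ 3 ≤ 2 * Λ * -∫ y, ρ y * (2 * u y * d y) := by
  have hle : ∀ y, u y ≤ ⨆ y, u y := le_ciSup h.bddAbove_range
  set S := ⨆ y, u y
  set D := -∫ y, ρ y * (2 * u y * d y)
  have hΛ := h.pos
  have hS₀ : 0 ≤ S := (h.nonneg 0).trans (hle 0)
  rcases hS₀.eq_or_lt with hS | hS
  · rw [← hS, zero_pow three_ne_zero]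
    have hD := h.integral_two_mul_deriv_sq_le le_rfl (p := 0)
    rw [intervalIntegral.integral_same] at hD
    positivity
  have hsq : S ^ 2 ≤ S / (2 * Λ) * (Λ * S) + D / (2 * (S / (2 * Λ))) := by
    have hbound (z : ℝ) : u z ^ 2 ≤ S / (2 * Λ) * (Λ * S) + D / (2 * (S / (2 * Λ))) := by
      refine (h.sq_le_add_div z (l := S / (2 * Λ)) (by positivity)).trans ?_
      gcongr
      exact h.integral_sq_le hle
    exact (Real.le_sqrt hS₀ ((sq_nonneg _).trans (hbound 0))).1
      (ciSup_le fun z => Real.le_sqrt_of_sq_le (hbound z))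
  have hsum : S / (2 * Λ) * (Λ * S) + D / (2 * (S / (2 * Λ))) = S ^ 2 / 2 + Λ * D / S := by
    field_simp
  have hdiv : S ^ 2 / 2 ≤ Λ * D / S := by linarith
  rw [le_div_iff₀ hS] at hdiv
  linarith

end ForcedProfile

/-- A solution of `ρ ∂ₜU - ∂ₓ²U + W ∂ₓU = 0` with `Ux = ∂ₓU` and continuous `d = ∂ₜU`; the bound
`K` on the mass of the time derivative only serves to justify integrations by parts. -/
structure RegularSolution (W Λ K : ℝ) (ρ : ℝ → ℝ) (U Ux d : ℝ → ℝ → ℝ) : Prop where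
  profile : ∀ t, 0 < t → ForcedProfile W Λ K ρ (U t) (Ux t) (d t)
  hasDerivAt_time : ∀ t, 0 < t → ∀ y, HasDerivAt (fun s => U s y) (d t y) t
  continuousOn_source : ∀ y, ContinuousOn (fun s => d s y) (Ioi 0)

theorem exists_convex_truncation {m : ℝ} (hm : 0 ≤ m) : ∃ β b b' : ℝ → ℝ, Continuous b' ∧
    (∀ r, HasDerivAt β (b r) r) ∧ (∀ r, HasDerivAt b (b' r) r) ∧ (∀ r, 0 ≤ b' r) ∧ b 0 = 0 ∧
    (∀ r ∈ Icc 0 m, β r = 0) ∧ ∀ r > m, 0 < β r := by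
  have hmax : Continuous fun s : ℝ => max (s - m) 0 := by fun_prop
  have hb : Continuous fun r => ∫ s in 0..r, max (s - m) 0 :=
    intervalIntegral.continuous_primitive (fun a b => hmax.intervalIntegrable a b) 0
  have hb_nonneg : ∀ r ≥ 0, 0 ≤ ∫ s in 0..r, max (s - m) 0 := fun r hr =>
    intervalIntegral.integral_nonneg hr fun s _ => le_max_right _ _
  have hb_pos : ∀ r > m, 0 < ∫ s in 0..r, max (s - m) 0 := fun r hr =>
    intervalIntegral.integral_pos (hm.trans_lt hr) hmax.continuousOn
      (fun s _ => le_max_right _ _)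
      ⟨r, right_mem_Icc.2 (hm.trans hr.le), lt_max_of_lt_left (sub_pos.2 hr)⟩
  have hzero {f : ℝ → ℝ} (hf : ∀ s ∈ Icc 0 m, f s = 0) (r : ℝ) (hr : r ∈ Icc 0 m) :
      ∫ s in 0..r, f s = 0 :=
    intervalIntegral.integral_zero_ae (.of_forall fun s hs => by
      rw [uIoc_of_le hr.1] at hs
      exact hf s ⟨hs.1.le, hs.2.trans hr.2⟩)
  refine ⟨fun r => ∫ s in 0..r, ∫ x in 0..s, max (x - m) 0, _, _, hmax,
    fun r => (hb.integral_hasStrictDerivAt 0 r).hasDerivAt,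
    fun r => (hmax.integral_hasStrictDerivAt 0 r).hasDerivAt, fun _ => le_max_right _ _,
    intervalIntegral.integral_same,
    hzero (hzero fun s hs => max_eq_right (sub_nonpos.2 hs.2)), fun r hr => ?_⟩
  exact intervalIntegral.integral_pos (hm.trans_lt hr) hb.continuousOn
    (fun s hs => hb_nonneg s hs.1.le) ⟨r, right_mem_Icc.2 (hm.trans hr.le), hb_pos r hr⟩

theorem pow_three_sSup_le {S : Set ℝ} {C : ℝ} (hS : S.Nonempty) (hbdd : BddAbove S)
    (hC : ∀ x ∈ S, x ^ 3 ≤ C) : sSup S ^ 3 ≤ C := by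
  obtain ⟨x, -, hlim, hx⟩ := exists_seq_tendsto_sSup hS hbdd
  exact le_of_tendsto (hlim.pow 3) (.of_forall fun n => hC _ (hx n))

theorem sqrt_pow_three_le {s : ℝ} (hs : 0 ≤ s) : √s ^ 3 ≤ 3 * √(s / 2) ^ 3 := by
  have hsq (x : ℝ) (hx : 0 ≤ x) : (√x ^ 3) ^ 2 = x ^ 3 := by
    rw [← pow_mul, mul_comm, pow_mul, Real.sq_sqrt hx]
  rw [← pow_le_pow_iff_left₀ (by positivity) (by positivity) two_ne_zero, mul_pow, hsq s hs,
    hsq _ (div_nonneg hs zero_le_two)]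
  linarith [pow_nonneg hs 3]

-- With `A` the supremum of `√s u s y` over `s ≤ t`, the step from `s / 2` to `s` gives
-- `A ^ 3 ≤ 2 √2 C A ≤ 3 C A`.
theorem le_sqrt_div_sqrt_of_pow_three_mul_sub_le {u : ℝ → ℝ → ℝ} {B C : ℝ}
    (hnonneg : ∀ t, 0 < t → ∀ y, 0 ≤ u t y) (hB : ∀ t, 0 < t → ∀ y, u t y ≤ B)
    (hstep : ∀ s t m, 0 < s → s < t → (∀ y, u s y ≤ m) → ∀ y, u t y ^ 3 * (t - s) ≤ C * m)
    {t : ℝ} (ht : 0 < t) (y : ℝ) : u t y ≤ √(3 * C) / √t := by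
  set S : Set ℝ := {x | ∃ s ∈ Ioc 0 t, ∃ z, √s * u s z = x}
  have hbdd : BddAbove S := by
    refine ⟨√t * B, ?_⟩
    rintro _ ⟨s, hs, z, rfl⟩
    exact mul_le_mul (Real.sqrt_le_sqrt hs.2) (hB s hs.1 z) (hnonneg s hs.1 z) (Real.sqrt_nonneg t)
  have hmem : √t * u t y ∈ S := ⟨t, ⟨ht, le_rfl⟩, y, rfl⟩
  have hA₀ : 0 ≤ sSup S :=
    (mul_nonneg (Real.sqrt_nonneg t) (hnonneg t ht y)).trans (le_csSup hbdd hmem)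
  have hcube : sSup S ^ 3 ≤ 3 * C * sSup S := by
    refine pow_three_sSup_le ⟨_, hmem⟩ hbdd ?_
    rintro _ ⟨s, hs, z, rfl⟩
    have hs₂ : 0 < s / 2 := half_pos hs.1
    have hhalf := hstep (s / 2) s (sSup S / √(s / 2)) hs₂ (half_lt_self hs.1) (fun x =>
      (le_div_iff₀' (Real.sqrt_pos.2 hs₂)).2
        (le_csSup hbdd ⟨s / 2, ⟨hs₂, (half_le_self hs.1.le).trans hs.2⟩, x, rfl⟩)) z
    have hr : 0 < √(s / 2) := Real.sqrt_pos.2 hs₂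
    rw [sub_half, ← mul_div_assoc C, le_div_iff₀ hr] at hhalf
    calc (√s * u s z) ^ 3 = √s ^ 3 * u s z ^ 3 := mul_pow _ _ _
      _ ≤ 3 * √(s / 2) ^ 3 * u s z ^ 3 := by
          gcongr
          · exact pow_nonneg (hnonneg s hs.1 z) 3
          · exact sqrt_pow_three_le hs.1.le
      _ = 3 * (u s z ^ 3 * (s / 2) * √(s / 2)) := by
          linear_combination 3 * u s z ^ 3 * √(s / 2) * Real.sq_sqrt hs₂.le
      _ ≤ 3 * C * sSup S := by linarith
  have hA : sSup S ≤ √(3 * C) := by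
    rcases hA₀.eq_or_lt with hA | hA
    · exact hA ▸ Real.sqrt_nonneg _
    · exact Real.le_sqrt_of_sq_le (le_of_mul_le_mul_right (by linarith) hA)
  exact (le_div_iff₀' (Real.sqrt_pos.2 ht)).2 ((le_csSup hbdd hmem).trans hA)

namespace RegularSolution

variable {W Λ K : ℝ} {ρ : ℝ → ℝ} {U Ux d : ℝ → ℝ → ℝ} {s t m : ℝ}

theorem intervalIntegral_comp_mul_source (h : RegularSolution W Λ K ρ U Ux d) {β b : ℝ → ℝ}
    (hb : Continuous b) (hβ : ∀ r, HasDerivAt β (b r) r) (hβ₀ : β 0 = 0) (hs : 0 < s)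
    (hst : s ≤ t) :
    IntervalIntegrable (fun τ => ∫ y, ρ y * (b (U τ y) * d τ y)) volume s t ∧
      ∫ τ in s..t, ∫ y, ρ y * (b (U τ y) * d τ y) =
        (∫ y, ρ y * β (U t y)) - ∫ y, ρ y * β (U s y) := by
  obtain ⟨M, hM⟩ := (isCompact_Icc (a := 0)
    (b := Real.exp W * (2 * Λ + K))).exists_bound_of_continuousOn hb.continuousOn
  have htime (y : ℝ) : ContinuousOn (fun τ => ρ y * (b (U τ y) * d τ y)) (Ioi 0) :=
    ((hb.comp_continuousOn (HasDerivAt.continuousOn fun τ hτ => h.hasDerivAt_time τ hτ y)).mul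
      (h.continuousOn_source y)).const_mul (ρ y)
  obtain ⟨-, hint, hswap⟩ := integral_intervalIntegral_swap
    (f := fun τ y => ρ y * (b (U τ y) * d τ y))
    (fun τ hτ => (h.profile τ hτ).continuous_weight.mul
      ((hb.comp (h.profile τ hτ).continuous).mul (h.profile τ hτ).continuous_source))
    htime (fun τ hτ => ((h.profile τ hτ).integrable_comp_mul_source hb hM).1)
    (fun τ hτ => ((h.profile τ hτ).integrable_comp_mul_source hb hM).2) hs hst
  have hsub : uIcc s t ⊆ Ioi 0 := fun τ hτ => hs.trans_le (uIcc_of_le hst ▸ hτ).1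
  refine ⟨hint, ?_⟩
  rw [← hswap, ← integral_sub ((h.profile t (hs.trans_le hst)).integrable_comp hb hβ hβ₀)
    ((h.profile s hs).integrable_comp hb hβ hβ₀)]
  refine integral_congr_ae (.of_forall fun y => ?_)
  exact intervalIntegral.integral_eq_sub_of_hasDerivAt
    (fun τ hτ => ((hβ (U τ y)).comp τ (h.hasDerivAt_time τ (hsub hτ) y)).const_mul (ρ y))
    ((htime y).mono hsub).intervalIntegrable

theorem le_of_forall_le (h : RegularSolution W Λ K ρ U Ux d) (hs : 0 < s) (hst : s ≤ t)
    (hm : ∀ y, U s y ≤ m) (y : ℝ) : U t y ≤ m := by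
  have hP := h.profile t (hs.trans_le hst)
  obtain ⟨β, b, b', hb', hβ, hb, hconvex, hb₀, hzero, hpos⟩ :=
    exists_convex_truncation (((h.profile s hs).nonneg 0).trans (hm 0))
  have hβ₀ : β 0 = 0 := hzero 0 (left_mem_Icc.2 (((h.profile s hs).nonneg 0).trans (hm 0)))
  have hbc : Continuous b := continuous_iff_continuousAt.2 fun r => (hb r).continuousAt
  have hβc : Continuous β := continuous_iff_continuousAt.2 fun r => (hβ r).continuousAt
  have hnonneg (z : ℝ) : 0 ≤ ρ z * β (U t z) := by
    refine mul_nonneg (hP.weight_pos z).le ?_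
    rcases le_or_gt (U t z) m with hz | hz
    · exact (hzero _ ⟨hP.nonneg z, hz⟩).ge
    · exact (hpos _ hz).le
  have hdecrease : ∫ τ in s..t, ∫ y, ρ y * (b (U τ y) * d τ y) ≤ 0 := by
    rw [intervalIntegral.integral_of_le hst]
    refine setIntegral_nonpos measurableSet_Ioc fun τ hτ => ?_
    have hdiss := (h.profile τ (hs.trans hτ.1)).integral_dissipation_le hb' hβ hb
      (fun r _ => hconvex r) hβ₀ hb₀ (le_refl 0)
    rw [intervalIntegral.integral_same] at hdiss
    exact neg_nonneg.1 hdiss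
  have hinitial : ∫ y, ρ y * β (U s y) = 0 := by
    simp [fun y => hzero _ ⟨(h.profile s hs).nonneg y, hm y⟩]
  rw [(h.intervalIntegral_comp_mul_source hbc hβ hβ₀ hs hst).2, hinitial, sub_zero] at hdecrease
  by_contra! hlt
  refine hdecrease.not_gt (integral_pos_of_integrable_nonneg_nonzero (x := y)
    (hP.continuous_weight.mul (hβc.comp hP.continuous)) (hP.integrable_comp hbc hβ hβ₀) hnonneg
    (mul_pos (hP.weight_pos y) (hpos _ hlt)).ne')

theorem pow_three_mul_sub_le (h : RegularSolution W Λ K ρ U Ux d) (hs : 0 < s) (hst : s < t)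
    (hm : ∀ y, U s y ≤ m) (y : ℝ) : U t y ^ 3 * (t - s) ≤ 2 * Λ * m := by
  obtain ⟨hint, henergy⟩ := h.intervalIntegral_comp_mul_source (b := fun r => 2 * r)
    (by fun_prop) hasDerivAt_sq (zero_pow two_ne_zero) hs hst.le
  have hlower (τ : ℝ) (hτ : τ ∈ Icc s t) :
      U t y ^ 3 ≤ 2 * Λ * -∫ y, ρ y * (2 * U τ y * d τ y) := by
    have hτ₀ := hs.trans_le hτ.1
    have hle := h.le_of_forall_le hτ₀ hτ.2 (le_ciSup (h.profile τ hτ₀).bddAbove_range) y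
    exact (pow_le_pow_left₀ ((h.profile t (hτ₀.trans_le hτ.2)).nonneg y) hle 3).trans
      (h.profile τ hτ₀).iSup_pow_three_le
  have hmono := intervalIntegral.integral_mono_on hst.le intervalIntegrable_const
    (hint.neg.const_mul (2 * Λ)) hlower
  simp only [intervalIntegral.integral_const, smul_eq_mul, intervalIntegral.integral_const_mul,
    Pi.neg_apply, intervalIntegral.integral_neg, henergy] at hmono
  have hΛ := (h.profile s hs).pos
  have hinitial := (h.profile s hs).integral_sq_le hm
  have hfinal : 0 ≤ ∫ y, ρ y * U t y ^ 2 := integral_nonneg fun y =>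
    mul_nonneg ((h.profile s hs).weight_pos y).le (sq_nonneg _)
  calc U t y ^ 3 * (t - s) ≤ 2 * Λ * -((∫ y, ρ y * U t y ^ 2) - ∫ y, ρ y * U s y ^ 2) := by
        rwa [mul_comm]
    _ ≤ 2 * Λ * m := by
        gcongr
        linarith

theorem le_sqrt_div_sqrt (h : RegularSolution W Λ K ρ U Ux d) (ht : 0 < t) (y : ℝ) :
    U t y ≤ √(6 * Λ) / √t := by
  have hle := le_sqrt_div_sqrt_of_pow_three_mul_sub_le (C := 2 * Λ)
    (fun τ hτ => (h.profile τ hτ).nonneg) (fun τ hτ => (h.profile τ hτ).le_exp_mul)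
    (fun σ τ m hσ hστ hm => h.pow_three_mul_sub_le hσ hστ hm) ht y
  rwa [← mul_assoc, show (3 * 2 : ℝ) = 6 by norm_num] at hle

end RegularSolution

namespace NormalizedSolution

variable {W Λ : ℝ} {ρ : ℝ → ℝ} {v : ℝ → ℝ → ℝ} {t k : ℝ}

theorem exists_forcedProfile (h : NormalizedSolution W Λ ρ v) (hk : 0 < k) (ht : 0 < t) :
    ∃ Ux, ForcedProfile W Λ (2 / k) ρ (fun y => (∫ s in t..t + k, v s y) / k) Ux
      (fun y => (v (t + k) y - v t y) / k) := by
  have htk : t < t + k := lt_add_of_pos_right t hk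
  have htk₀ : 0 < t + k := ht.trans htk
  obtain ⟨Vx, hVx⟩ := h.exists_hasDerivAt_integral_time ht htk
  have habs (y : ℝ) : ρ y * |(v (t + k) y - v t y) / k| ≤
      (ρ y * v (t + k) y + ρ y * v t y) / k := by
    rw [abs_div, abs_of_pos hk, ← mul_add, ← mul_div_assoc]
    gcongr
    · exact (h.weight_pos y).le
    · refine (abs_sub _ _).trans_eq ?_
      rw [abs_of_nonneg (h.nonneg _ htk₀ y), abs_of_nonneg (h.nonneg _ ht y)]
  have hdom : Integrable fun y => (ρ y * v (t + k) y + ρ y * v t y) / k :=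
    ((h.integrable_weight_mul htk₀).add (h.integrable_weight_mul ht)).div_const k
  have hsource : Continuous fun y => (v (t + k) y - v t y) / k :=
    ((h.continuous_space htk₀).sub (h.continuous_space ht)).div_const k
  have hint : Integrable fun y => ρ y * |(v (t + k) y - v t y) / k| :=
    hdom.mono' (h.continuous_weight.mul hsource.abs).aestronglyMeasurable (.of_forall fun y => by
      rw [Real.norm_of_nonneg (mul_nonneg (h.weight_pos y).le (abs_nonneg _))]
      exact habs y)
  refine ⟨fun y => Vx y / k, { h.toEllipticWeight with
    drift_nonneg := h.drift_nonneg
    nonneg := fun y => div_nonneg (h.integral_time_nonneg ht htk.le y) hk.le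
    mass := ?_
    hasDerivAt := fun y => (hVx y).1.div_const k
    hasDerivAt_deriv := fun y => ((hVx y).2.div_const k).congr_deriv (by ring)
    continuous_source := hsource
    integrable_source := hint
    integral_source_le := ?_ }⟩
  · simp only [← mul_div_assoc]
    rw [integral_div, (h.integral_weight_mul_integral ht htk.le).2, add_sub_cancel_left,
      div_self hk.ne']
  · refine (integral_mono hint hdom habs).trans_eq ?_
    rw [integral_div, integral_add (h.integrable_weight_mul htk₀) (h.integrable_weight_mul ht),
      h.mass _ htk₀, h.mass _ ht, one_add_one_eq_two]

theorem hasDerivAt_integral_time_add (h : NormalizedSolution W Λ ρ v) (hk : 0 ≤ k) (ht : 0 < t)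
    (y : ℝ) :
    HasDerivAt (fun t => ∫ s in t..t + k, v s y) (v (t + k) y - v t y) t := by
  have htk : 0 < t + k := add_pos_of_pos_of_nonneg ht hk
  have hmeas := (h.continuousOn_time y).stronglyMeasurableAtFilter (μ := volume) isOpen_Ioi
  have hfderiv := intervalIntegral.integral_hasFDerivAt (h.intervalIntegrable_time ht htk y)
    (hmeas t ht) (hmeas (t + k) htk) (h.continuousAt_time ht y) (h.continuousAt_time htk y)
  refine (hfderiv.comp_hasDerivAt t
    ((hasDerivAt_id t).prodMk ((hasDerivAt_id t).add_const k))).congr_deriv ?_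
  simp

theorem exists_regularSolution (h : NormalizedSolution W Λ ρ v) (hk : 0 < k) :
    ∃ Ux, RegularSolution W Λ (2 / k) ρ (fun t y => (∫ s in t..t + k, v s y) / k) Ux
      (fun t y => (v (t + k) y - v t y) / k) := by
  choose! Ux hUx using fun t (ht : 0 < t) => h.exists_forcedProfile hk ht
  refine ⟨Ux, hUx, fun t ht y => ?_, fun y => ?_⟩
  · exact (h.hasDerivAt_integral_time_add hk.le ht y).div_const k
  · exact (((h.continuousOn_time y).comp (by fun_prop) fun t (ht : 0 < t) => add_pos ht hk).sub
      (h.continuousOn_time y)).div_const k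

theorem le_sqrt_div_sqrt (h : NormalizedSolution W Λ ρ v) (ht : 0 < t) (y : ℝ) :
    v t y ≤ √(6 * Λ) / √t := by
  by_contra! hlt
  obtain ⟨c, hc, hcv⟩ := exists_between hlt
  obtain ⟨k, hk, hball⟩ := Metric.eventually_nhds_iff.1
    ((h.continuousAt_time ht y).eventually (lt_mem_nhds hcv))
  obtain ⟨Ux, hU⟩ := h.exists_regularSolution (half_pos hk)
  have hle := hU.le_sqrt_div_sqrt ht y
  have hlower : ∫ _ in t..t + k / 2, c ≤ ∫ s in t..t + k / 2, v s y := by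
    refine intervalIntegral.integral_mono_on (by linarith) intervalIntegrable_const
      (h.intervalIntegrable_time ht (by linarith) y) fun s hs => (hball ?_).le
    rw [Real.dist_eq, abs_of_nonneg (sub_nonneg.2 hs.1)]
    linarith [hs.2]
  rw [intervalIntegral.integral_const, add_sub_cancel_left, smul_eq_mul] at hlower
  rw [div_le_iff₀' (half_pos hk)] at hle
  exact (le_of_mul_le_mul_left (hlower.trans hle) (half_pos hk)).not_gt hc

end NormalizedSolution

section Comparison

variable {W : ℝ} {ρ : ℝ → ℝ} {v φ : ℝ → ℝ → ℝ} {t y : ℝ}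

/-- `φ` is twice differentiable in space and once in time at `(t, y)`, and is a strict subsolution
of `ρ ∂ₜφ = ∂²φ - W ∂φ` there. -/
def IsStrictSubsolutionAt (W : ℝ) (ρ : ℝ → ℝ) (φ : ℝ → ℝ → ℝ) (t y : ℝ) : Prop :=
  ∃ φt φxx : ℝ, ∃ φx : ℝ → ℝ, HasDerivAt (fun s => φ s y) φt t ∧
    (∀ x, HasDerivAt (φ t) (φx x) x) ∧ HasDerivAt φx φxx y ∧ ρ y * φt < φxx - W * φx y

theorem nonpos_of_hasDerivAt_of_eventually_le_left {f : ℝ → ℝ} {f' a : ℝ} (hf : HasDerivAt f f' a)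
    (hmin : ∀ᶠ x in 𝓝[<] a, f a ≤ f x) : f' ≤ 0 := by
  have hslope : Tendsto (slope f a) (𝓝[<] a) (𝓝 f') :=
    (hasDerivAt_iff_tendsto_slope.1 hf).mono_left (nhdsWithin_mono a fun _ hx => ne_of_lt hx)
  refine le_of_tendsto hslope ?_
  filter_upwards [hmin, self_mem_nhdsWithin] with x hx hxa
  rw [slope_def_field]
  exact div_nonpos_of_nonneg_of_nonpos (sub_nonneg.2 hx) (sub_nonpos.2 (le_of_lt hxa))

theorem nonneg_of_isLocalMin_of_hasDerivAt (W : ℝ) {f f' : ℝ → ℝ} {f'' : ℝ}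
    (hf : ∀ x, HasDerivAt f (f' x) x) (hf' : HasDerivAt f' f'' y) (hmin : IsLocalMin f y) :
    0 ≤ f'' - W * f' y := by
  refine ge_of_tendsto (tendsto_driftDiff_div_sq (.of_forall hf) hf') ?_
  have hplus : Tendsto (fun k => y + k) (𝓝[>] 0) (𝓝 y) := by
    simpa using (continuous_const_add y).tendsto 0 |>.mono_left nhdsWithin_le_nhds
  have hminus : Tendsto (fun k => y - k) (𝓝[>] 0) (𝓝 y) := by
    simpa using (continuous_sub_left y).tendsto 0 |>.mono_left nhdsWithin_le_nhds
  filter_upwards [hplus.eventually hmin, hminus.eventually hmin] with k hk hk'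
  exact div_nonneg (add_nonneg (mul_nonneg (Real.exp_pos _).le (sub_nonneg.2 hk))
    (mul_nonneg (Real.exp_pos _).le (sub_nonneg.2 hk'))) (sq_nonneg k)

theorem NonnegSolution.not_isStrictSubsolutionAt (h : NonnegSolution W ρ v) (ht : 0 < t)
    (htime : ∀ᶠ s in 𝓝[<] t, v t y - φ t y ≤ v s y - φ s y)
    (hspace : IsLocalMin (fun x => v t x - φ t x) y) : ¬IsStrictSubsolutionAt W ρ φ t y := by
  rintro ⟨φt, φxx, φx, hφt, hφx, hφxx, hlt⟩
  obtain ⟨vt, vx, vxx, hv⟩ := h.exists_deriv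
  obtain ⟨hvt, -, hvxx, heq⟩ := hv t ht y
  have hle := nonpos_of_hasDerivAt_of_eventually_le_left (hvt.sub hφt) htime
  have hnonneg := nonneg_of_isLocalMin_of_hasDerivAt W
    (fun x => (hv t ht x).2.1.sub (hφx x)) (hvxx.sub hφxx) hspace
  simp only [mul_sub] at hnonneg
  linarith [mul_le_mul_of_nonneg_left (sub_nonpos.1 hle) (h.weight_pos y).le]

theorem NonnegSolution.le_of_isStrictSubsolutionAt (h : NonnegSolution W ρ v) {K : Set (ℝ × ℝ)}
    (hK : IsCompact K) (hpos : ∀ p ∈ K, 0 < p.1)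
    (hφ : ContinuousOn (fun p : ℝ × ℝ => φ p.1 p.2) K)
    (hsub : ∀ s x, (s, x) ∈ K → v s x < φ s x → (∀ᶠ τ in 𝓝[<] s, (τ, x) ∈ K) ∧
      (∀ᶠ z in 𝓝 x, (s, z) ∈ K) ∧ IsStrictSubsolutionAt W ρ φ s x)
    (hy : (t, y) ∈ K) : φ t y ≤ v t y := by
  have hlsc : LowerSemicontinuousOn (fun p : ℝ × ℝ => v p.1 p.2 + -φ p.1 p.2) K :=
    LowerSemicontinuousOn.add
      (fun p hp => (h.lowerSemicontinuousAt p.1 (hpos p hp) p.2).lowerSemicontinuousWithinAt K)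
      hφ.neg.lowerSemicontinuousOn
  obtain ⟨⟨s, x⟩, hsx, hmin⟩ := hlsc.exists_isMinOn ⟨_, hy⟩ hK
  have hle {τ z : ℝ} (hτ : (τ, z) ∈ K) : v s x - φ s x ≤ v τ z - φ τ z := by
    simpa only [← sub_eq_add_neg] using isMinOn_iff.1 hmin _ hτ
  by_contra! hlt
  obtain ⟨htime, hspace, hstrict⟩ := hsub s x hsx (by linarith [hle hy])
  exact h.not_isStrictSubsolutionAt (hpos _ hsx) (htime.mono fun _ => hle)
    (hspace.mono fun _ => hle) hstrict

end Comparison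

section TravelingBump

variable {W Λ β c r t y : ℝ} {ρ : ℝ → ℝ} {v : ℝ → ℝ → ℝ}

/-- The bump `(r² - ζ²)²`, `ζ = y - c t`, moving at speed `c` and decaying at rate `β`; it is used
as a barrier on the tube `|ζ| ≤ r`. -/
noncomputable def travelingBump (β c r t y : ℝ) : ℝ :=
  Real.exp (-β * t) * (r ^ 2 - (y - c * t) ^ 2) ^ 2

/-- The tube of radius `r` around the segment of slope `c` issued from `(t₀, y₀)`, for times
`t₀ ≤ t ≤ T`. -/
def tube (t₀ y₀ c r T : ℝ) : Set (ℝ × ℝ) :=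
  {p | p.1 ∈ Icc t₀ T ∧ |p.2 - y₀ - c * (p.1 - t₀)| ≤ r}

theorem continuous_travelingBump (β c r : ℝ) :
    Continuous fun p : ℝ × ℝ => travelingBump β c r p.1 p.2 := by
  unfold travelingBump
  fun_prop

theorem isCompact_tube (t₀ y₀ c r T : ℝ) : IsCompact (tube t₀ y₀ c r T) := by
  have himage : tube t₀ y₀ c r T =
      (fun p : ℝ × ℝ => (p.1, p.2 + c * (p.1 - t₀) + y₀)) '' Icc t₀ T ×ˢ Icc (-r) r := by
    ext ⟨t, y⟩
    constructor
    · rintro ⟨ht, hy⟩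
      exact ⟨(t, y - y₀ - c * (t - t₀)), ⟨ht, abs_le.1 hy⟩, by simp⟩
    · rintro ⟨⟨s, ζ⟩, ⟨hs, hζ⟩, heq⟩
      obtain ⟨rfl, rfl⟩ := Prod.mk.inj heq
      exact ⟨hs, by simpa using abs_le.2 hζ⟩
  rw [himage]
  exact (isCompact_Icc.prod isCompact_Icc).image (by fun_prop)

theorem eventually_mem_tube_time {t₀ y₀ T : ℝ} (ht : t ∈ Ioc t₀ T)
    (hy : |y - y₀ - c * (t - t₀)| < r) : ∀ᶠ s in 𝓝[<] t, (s, y) ∈ tube t₀ y₀ c r T := by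
  have hcont : Continuous fun s => |y - y₀ - c * (s - t₀)| := by fun_prop
  filter_upwards [nhdsWithin_le_nhds (hcont.continuousAt.eventually_lt_const hy),
    nhdsWithin_le_nhds (lt_mem_nhds ht.1), self_mem_nhdsWithin] with s hs hs₀ (hst : s < t)
  exact ⟨⟨hs₀.le, hst.le.trans ht.2⟩, hs.le⟩

theorem eventually_mem_tube_space {t₀ y₀ T : ℝ} (ht : t ∈ Icc t₀ T)
    (hy : |y - y₀ - c * (t - t₀)| < r) : ∀ᶠ x in 𝓝 y, (t, x) ∈ tube t₀ y₀ c r T := by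
  have hcont : Continuous fun x => |x - y₀ - c * (t - t₀)| := by fun_prop
  exact (hcont.continuousAt.eventually_lt_const hy).mono fun x hx => ⟨ht, hx.le⟩

theorem hasDerivAt_travelingBump_time (β c r t y : ℝ) :
    HasDerivAt (fun s => travelingBump β c r s y)
      (Real.exp (-β * t) * (-β * (r ^ 2 - (y - c * t) ^ 2) ^ 2 +
        4 * c * (y - c * t) * (r ^ 2 - (y - c * t) ^ 2))) t := by
  have hexp : HasDerivAt (fun s => -β * s) (-β) t := by simpa using (hasDerivAt_id t).const_mul (-β)
  have hζ : HasDerivAt (fun s => y - c * s) (-c) t := by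
    simpa using ((hasDerivAt_id t).const_mul c).const_sub y
  refine (hexp.exp.fun_mul (((hζ.fun_pow 2).const_sub (r ^ 2)).fun_pow 2)).congr_deriv ?_
  simp only [Nat.cast_ofNat, Nat.reduceSub, pow_one]
  ring

theorem hasDerivAt_travelingBump_space (β c r t y : ℝ) :
    HasDerivAt (travelingBump β c r t)
      (Real.exp (-β * t) * (-4 * (y - c * t) * (r ^ 2 - (y - c * t) ^ 2))) y := by
  have hζ : HasDerivAt (fun x => x - c * t) 1 y := (hasDerivAt_id y).sub_const _
  refine (((hζ.fun_pow 2).const_sub (r ^ 2)).fun_pow 2 |>.const_mul _).congr_deriv ?_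
  simp only [Nat.cast_ofNat, Nat.reduceSub, pow_one]
  ring

theorem hasDerivAt_travelingBump_space_space (β c r t y : ℝ) :
    HasDerivAt (fun x => Real.exp (-β * t) * (-4 * (x - c * t) * (r ^ 2 - (x - c * t) ^ 2)))
      (Real.exp (-β * t) * (8 * r ^ 2 - 12 * (r ^ 2 - (y - c * t) ^ 2))) y := by
  have hζ : HasDerivAt (fun x => x - c * t) 1 y := (hasDerivAt_id y).sub_const _
  refine ((hζ.const_mul (-4)).fun_mul ((hζ.fun_pow 2).const_sub (r ^ 2))
    |>.const_mul _).congr_deriv ?_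
  simp only [Nat.cast_ofNat, Nat.reduceSub, pow_one]
  ring

/-- The decay rate that makes the bump of speed `c` and radius `r` a strict subsolution: it is
chosen so that the quadratic `8r² - A q + β ρ q²` has negative discriminant. -/
noncomputable def bumpRate (W Λ c r : ℝ) : ℝ :=
  (4 * (Λ * |c| + W) * r + 12) ^ 2 * Λ / (16 * r ^ 2)

theorem mul_bumpRate_add_lt {ζ q w : ℝ} (hW : 0 ≤ W) (hΛ : 0 < Λ) (hr : 0 < r) (hw : 1 / Λ ≤ w)
    (hw' : w ≤ Λ) (hq : 0 ≤ q) (hζ : |ζ| ≤ r) :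
    w * (-bumpRate W Λ c r * q ^ 2 + 4 * c * ζ * q) < (8 * r ^ 2 - 12 * q) - W * (-4 * ζ * q) := by
  have hw₀ : 0 < w := (one_div_pos.2 hΛ).trans_le hw
  set A := 4 * (Λ * |c| + W) * r + 12 with hA
  have hA₀ : 0 < A := by positivity
  have hβ : A ^ 2 / (16 * r ^ 2) ≤ w * bumpRate W Λ c r := by
    calc A ^ 2 / (16 * r ^ 2) = 1 / Λ * bumpRate W Λ c r := by
          rw [bumpRate, ← hA]
          field_simp
      _ ≤ w * bumpRate W Λ c r := by
          gcongr
          rw [bumpRate]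
          positivity
  have hquad : A * q < A ^ 2 / (16 * r ^ 2) * q ^ 2 + 8 * r ^ 2 := by
    have hsq : A ^ 2 / (16 * r ^ 2) * q ^ 2 + 8 * r ^ 2 - A * q =
        (A * q - 8 * r ^ 2) ^ 2 / (16 * r ^ 2) + 4 * r ^ 2 := by
      field_simp
      ring
    have : 0 < (A * q - 8 * r ^ 2) ^ 2 / (16 * r ^ 2) + 4 * r ^ 2 := by positivity
    linarith
  have hdrift : w * (c * ζ) ≤ Λ * (|c| * r) := by
    have : c * ζ ≤ |c| * r := (le_abs_self _).trans (by rw [abs_mul]; gcongr)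
    exact (mul_le_mul_of_nonneg_left this hw₀.le).trans (by gcongr)
  have hWζ : W * -ζ ≤ W * r := mul_le_mul_of_nonneg_left (by linarith [neg_abs_le ζ]) hW
  have : A * q = 4 * (Λ * (|c| * r)) * q + 4 * (W * r) * q + 12 * q := by
    rw [hA]
    ring
  linarith [mul_le_mul_of_nonneg_right hβ (sq_nonneg q), mul_le_mul_of_nonneg_right hdrift hq,
    mul_le_mul_of_nonneg_right hWζ hq]

theorem isStrictSubsolutionAt_travelingBump {κ s₀ x₀ : ℝ} (hW : 0 ≤ W) (hΛ : 0 < Λ) (hr : 0 < r)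
    (hκ : 0 < κ) (hρ : 1 / Λ ≤ ρ y) (hρ' : ρ y ≤ Λ) (hy : |y - x₀ - c * (t - s₀)| ≤ r) :
    IsStrictSubsolutionAt W ρ
      (fun s x => κ * travelingBump (bumpRate W Λ c r) c r (s - s₀) (x - x₀)) t y := by
  set β := bumpRate W Λ c r
  refine ⟨_, _, _, ((hasDerivAt_travelingBump_time β c r _ _).comp_sub_const t s₀).const_mul κ,
    fun x => ((hasDerivAt_travelingBump_space β c r _ _).comp_sub_const x x₀).const_mul κ,
    ((hasDerivAt_travelingBump_space_space β c r _ _).comp_sub_const y x₀).const_mul κ, ?_⟩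
  have hq : 0 ≤ r ^ 2 - (y - x₀ - c * (t - s₀)) ^ 2 := by
    rw [sub_nonneg, ← sq_abs]
    exact pow_le_pow_left₀ (abs_nonneg _) hy 2
  have := mul_lt_mul_of_pos_left (mul_bumpRate_add_lt (c := c) hW hΛ hr hρ hρ' hq hy)
    (mul_pos hκ (Real.exp_pos (-β * (t - s₀))))
  linarith

theorem travelingBump_zero_le (hy : |y| ≤ r) : travelingBump β c r 0 y ≤ r ^ 4 := by
  have hy₂ : y ^ 2 ≤ r ^ 2 := sq_le_sq.2 (hy.trans (le_abs_self r))
  calc travelingBump β c r 0 y = (r ^ 2 - y ^ 2) ^ 2 := by simp [travelingBump]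
    _ ≤ (r ^ 2) ^ 2 := pow_le_pow_left₀ (sub_nonneg.2 hy₂) (sub_le_self _ (sq_nonneg y)) 2
    _ = r ^ 4 := by ring

theorem travelingBump_eq_zero (hy : |y - c * t| = r) : travelingBump β c r t y = 0 := by
  simp [travelingBump, ← hy]

theorem travelingBump_mul_pos (hr : 0 < r) (β c t : ℝ) : 0 < travelingBump β c r t (c * t) := by
  rw [travelingBump, sub_self, zero_pow two_ne_zero, sub_zero]
  positivity

theorem NonnegSolution.pos_of_forall_le (h : NonnegSolution W ρ v) (hρ : EllipticWeight Λ ρ)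
    {t₀ y₀ η : ℝ} (ht₀ : 0 < t₀) (ht : t₀ < t) (hr : 0 < r) (hη : 0 < η)
    (hle : ∀ x, |x - y₀| ≤ r → η ≤ v t₀ x) (y : ℝ) : 0 < v t y := by
  set c := (y - y₀) / (t - t₀)
  have hend : y - y₀ = c * (t - t₀) := (div_mul_cancel₀ _ (sub_pos.2 ht).ne').symm
  have hκ : 0 < η / r ^ 4 := by positivity
  set φ : ℝ → ℝ → ℝ := fun s x =>
    η / r ^ 4 * travelingBump (bumpRate W Λ c r) c r (s - t₀) (x - y₀) with hφ
  have hφpos : 0 < φ t y := by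
    simp only [hφ, hend]
    exact mul_pos hκ (travelingBump_mul_pos hr _ c _)
  refine hφpos.trans_le (h.le_of_isStrictSubsolutionAt (isCompact_tube t₀ y₀ c r t)
    (fun p hp => ht₀.trans_le hp.1.1) ?_ ?_ ⟨⟨ht.le, le_rfl⟩, by simpa [hend] using hr.le⟩)
  · exact ((continuous_travelingBump _ c r).comp
      (by fun_prop : Continuous fun p : ℝ × ℝ => (p.1 - t₀, p.2 - y₀))).const_mul _ |>.continuousOn
  · rintro s x ⟨hs, hx : |x - y₀ - c * (s - t₀)| ≤ r⟩ hlt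
    have hx' : |x - y₀ - c * (s - t₀)| < r := by
      refine hx.lt_of_ne fun heq => (h.nonneg s (ht₀.trans_le hs.1) x).not_gt ?_
      simpa only [hφ, travelingBump_eq_zero heq, mul_zero] using hlt
    have hs₀ : t₀ < s := by
      refine hs.1.lt_of_ne ?_
      rintro rfl
      simp only [sub_self, mul_zero, sub_zero] at hx
      refine (hle x hx).not_gt (hlt.trans_le ?_)
      simp only [hφ, sub_self]
      rw [div_mul_eq_mul_div, div_le_iff₀ (by positivity)]
      exact mul_le_mul_of_nonneg_left (travelingBump_zero_le hx) hη.le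
    exact ⟨eventually_mem_tube_time ⟨hs₀, hs.2⟩ hx', eventually_mem_tube_space hs hx',
      isStrictSubsolutionAt_travelingBump h.drift_nonneg (one_pos.trans_le hρ.one_le) hr hκ
        (hρ.le_weight x) (hρ.weight_le x) hx⟩

end TravelingBump

namespace NormalizedSolution

variable {W Λ : ℝ} {ρ : ℝ → ℝ} {v : ℝ → ℝ → ℝ} {t : ℝ}

theorem exists_pos (h : NormalizedSolution W Λ ρ v) (ht : 0 < t) : ∃ y, 0 < v t y := by
  by_contra! hle
  have hzero (y : ℝ) : ρ y * v t y = 0 := by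
    rw [(hle y).antisymm (h.nonneg t ht y), mul_zero]
  simpa [hzero] using h.mass t ht

theorem pos (h : NormalizedSolution W Λ ρ v) (ht : 0 < t) (y : ℝ) : 0 < v t y := by
  obtain ⟨y₁, hy₁⟩ := h.exists_pos (half_pos ht)
  obtain ⟨r, hr, hball⟩ := Metric.nhds_basis_closedBall.eventually_iff.1
    ((h.continuous_space (half_pos ht)).continuousAt.eventually_const_lt (half_lt_self hy₁))
  exact h.pos_of_forall_le h.toEllipticWeight (half_pos ht) (half_lt_self ht) hr (half_pos hy₁)
    (fun x hx => (hball (Metric.mem_closedBall.2 hx)).le) y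

end NormalizedSolution

section SeparateContinuity

theorem integral_le_of_tendsto_of_integral_eq {α : Type*} [MeasurableSpace α] {μ : Measure α}
    {F : ℕ → α → ℝ} {f : α → ℝ} {d : ℝ} (hF : ∀ n, Integrable (F n) μ) (hnonneg : ∀ n z, 0 ≤ F n z)
    (hlim : ∀ z, Tendsto (fun n => F n z) atTop (𝓝 (f z))) (hd : ∀ n, ∫ z, F n z ∂μ = d) :
    ∫ z, f z ∂μ ≤ d := by
  have hf (z : α) : 0 ≤ f z := ge_of_tendsto' (hlim z) fun n => hnonneg n z
  have hd₀ : 0 ≤ d := hd 0 ▸ integral_nonneg (hnonneg 0)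
  have hmeas : AEStronglyMeasurable f μ :=
    aestronglyMeasurable_of_tendsto_ae atTop (fun n => (hF n).aestronglyMeasurable)
      (.of_forall hlim)
  rw [integral_eq_lintegral_of_nonneg_ae (.of_forall hf) hmeas]
  refine ENNReal.toReal_le_of_le_ofReal hd₀ ?_
  calc ∫⁻ z, ENNReal.ofReal (f z) ∂μ
      = ∫⁻ z, liminf (fun n => ENNReal.ofReal (F n z)) atTop ∂μ :=
        lintegral_congr fun z => (ENNReal.tendsto_ofReal (hlim z)).liminf_eq.symm
    _ ≤ liminf (fun n => ∫⁻ z, ENNReal.ofReal (F n z) ∂μ) atTop :=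
        lintegral_liminf_le' fun n => (hF n).aestronglyMeasurable.aemeasurable.ennreal_ofReal
    _ = ENNReal.ofReal d := by
        simp only [← ofReal_integral_eq_lintegral_ofReal (hF _) (.of_forall (hnonneg _)), hd,
          liminf_const]

variable {w : ℝ → ℝ → ℝ} {r t x : ℝ}

/-- By the intermediate value theorem in time, failure of lower semicontinuity is witnessed by
points of a single level set. -/
theorem lowerSemicontinuousAt_of_forall_level (hr : r < t)
    (htime : ∀ z, ContinuousOn (fun s => w s z) (Ioi r)) (hspace : ContinuousAt (w t) x)
    (hnonneg : ∀ s ∈ Ioi r, ∀ z, 0 ≤ w s z)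
    (hlevel : ∀ d > 0, ∀ s z : ℕ → ℝ, (∀ n, r < s n) → Tendsto s atTop (𝓝 t) →
      Tendsto z atTop (𝓝 x) → (∀ n, w (s n) (z n) = d) → w t x ≤ d) :
    LowerSemicontinuousAt (fun p : ℝ × ℝ => w p.1 p.2) (t, x) := by
  intro c hc
  have hfst : ∀ᶠ p in 𝓝 (t, x), r < p.1 := continuous_fst.continuousAt.eventually (lt_mem_nhds hr)
  rcases lt_or_ge c 0 with hc₀ | hc₀
  · exact hfst.mono fun p hp => hc₀.trans_le (hnonneg _ hp _)
  obtain ⟨d, hcd, hd⟩ := exists_between hc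
  by_contra hfail
  have hrow : ∀ᶠ p : ℝ × ℝ in 𝓝 (t, x), d < w t p.2 :=
    (hspace.tendsto.comp (continuous_snd.tendsto (t, x))).eventually_const_lt hd
  obtain ⟨p, hp, hlt⟩ := exists_seq_forall_of_frequently
    ((not_eventually.1 hfail).and_eventually (hrow.and hfst))
  have hcross (n : ℕ) : ∃ s ∈ uIcc (p n).1 t, r < s ∧ w s (p n).2 = d := by
    obtain ⟨hle, hgt, hrp⟩ := hlt n
    have hsub : uIcc (p n).1 t ⊆ Ioi r := ordConnected_Ioi.uIcc_subset hrp hr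
    obtain ⟨s, hs, hsd⟩ := intermediate_value_uIcc ((htime (p n).2).mono hsub)
      (Icc_subset_uIcc ⟨(not_lt.1 hle).trans hcd.le, hgt.le⟩)
    exact ⟨s, hs, hsub hs, hsd⟩
  choose s hs hrs hsd using hcross
  have hst : Tendsto s atTop (𝓝 t) := by
    refine tendsto_iff_dist_tendsto_zero.2 (squeeze_zero (fun _ => dist_nonneg)
      (fun n => ?_) (tendsto_iff_dist_tendsto_zero.1 ((continuous_fst.tendsto _).comp hp)))
    simpa [Real.dist_eq, abs_sub_comm] using abs_sub_right_of_mem_uIcc (hs n)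
  exact hd.not_ge (hlevel d (hc₀.trans_lt hcd) s (fun n => (p n).2) hrs hst
    ((continuous_snd.tendsto _).comp hp) hsd)

end SeparateContinuity

section AutonomousFlow

variable {m : ℝ → ℝ} {M : ℝ}

theorem surjective_integral_inv (hm : Continuous m) (hpos : ∀ x, 0 < m x) (hle : ∀ x, m x ≤ M) :
    Function.Surjective fun x => ∫ s in (0 : ℝ)..x, (m s)⁻¹ := by
  have hinv : Continuous fun x => (m x)⁻¹ := hm.inv₀ fun x => (hpos x).ne'
  have hM : 0 < M⁻¹ := inv_pos.2 ((hpos 0).trans_le (hle 0))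
  have hint (a b : ℝ) (hab : a ≤ b) : M⁻¹ * (b - a) ≤ ∫ s in a..b, (m s)⁻¹ := by
    have hmono := intervalIntegral.integral_mono_on (μ := volume) hab
      intervalIntegrable_const (hinv.intervalIntegrable a b) fun x _ => inv_anti₀ (hpos x) (hle x)
    rwa [intervalIntegral.integral_const, smul_eq_mul, mul_comm] at hmono
  refine (intervalIntegral.continuous_primitive (μ := volume)
    (fun a b => hinv.intervalIntegrable a b) 0).surjective ?_ ?_
  · refine tendsto_atTop_mono' atTop ?_ (tendsto_id.const_mul_atTop hM)
    filter_upwards [eventually_ge_atTop 0] with x hx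
    simpa using hint 0 x hx
  · refine tendsto_atBot_mono' atBot ?_ (tendsto_id.const_mul_atBot hM)
    filter_upwards [eventually_le_atBot 0] with x hx
    rw [intervalIntegral.integral_symm, id]
    linarith [hint x 0 hx]

theorem exists_bijective_hasDerivAt_comp_self (hm : Continuous m) (hpos : ∀ x, 0 < m x)
    (hle : ∀ x, m x ≤ M) :
    ∃ θ : ℝ → ℝ, Function.Bijective θ ∧ ∀ τ, HasDerivAt θ (m (θ τ)) τ := by
  have hinv : Continuous fun x => (m x)⁻¹ := hm.inv₀ fun x => (hpos x).ne'
  set T : ℝ → ℝ := fun x => ∫ s in (0 : ℝ)..x, (m s)⁻¹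
  have hT (x : ℝ) : HasDerivAt T (m x)⁻¹ x := hinv.integral_hasStrictDerivAt 0 x |>.hasDerivAt
  have hmono : StrictMono T :=
    strictMono_of_deriv_pos fun x => by simpa only [(hT x).deriv] using inv_pos.2 (hpos x)
  set e := hmono.orderIsoOfSurjective T (surjective_integral_inv hm hpos hle)
  refine ⟨e.symm, e.symm.bijective, fun τ => ?_⟩
  simpa using HasDerivAt.of_local_left_inverse e.symm.continuous.continuousAt (hT (e.symm τ))
    (inv_pos.2 (hpos _)).ne' (.of_forall e.apply_symm_apply)

end AutonomousFlow

end DriftHeat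

open DriftHeat Set Topology

variable {μ κ W t s : ℝ} {ν a f g : ℝ → ℝ} {P : ℝ → ℝ → ℝ → ℝ} {u : ℝ → ℝ → ℝ}

namespace Elliptic

theorem pos (h : Elliptic μ f) (hμ : 0 < μ) (x : ℝ) : 0 < f x := (one_div_pos.2 hμ).trans_le (h x).1

theorem mul (hf : Elliptic μ f) (hg : Elliptic κ g) (hμ : 0 < μ) (hκ : 0 < κ) :
    Elliptic (μ * κ) fun x => f x * g x := by
  refine fun x => ⟨?_, mul_le_mul (hf x).2 (hg x).2 (hg.pos hκ x).le hμ.le⟩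
  rw [← one_div_mul_one_div]
  exact mul_le_mul (hf x).1 (hg x).1 (one_div_pos.2 hκ).le (hf.pos hμ x).le

end Elliptic

/-- In the variable `τ` with `θ' = ν a ∘ θ`, the operator `∂ₓ (ν a ∂ₓ ·)` becomes
`(ν a)⁻¹ ∂_τ²`. -/
theorem IsCanonicalSolOn.nonnegSolution_comp {θ : ℝ → ℝ} (hu : IsCanonicalSolOn ν a W u (Ioi 0))
    (hW : 0 ≤ W) (hν : Continuous ν) (ha : Continuous a) (hνpos : ∀ x, 0 < ν x)
    (hapos : ∀ x, 0 < a x) (hθ : ∀ τ, HasDerivAt θ (ν (θ τ) * a (θ τ)) τ)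
    (hnonneg : ∀ t, 0 < t → ∀ x, 0 ≤ u t x)
    (hlsc : ∀ t, 0 < t → ∀ x, LowerSemicontinuousAt (fun p : ℝ × ℝ => u p.1 p.2) (t, x)) :
    NonnegSolution W (fun τ => ν (θ τ) * (ν (θ τ) * a (θ τ))) fun t τ => u t (θ τ) where
  drift_nonneg := hW
  continuous_weight := by
    have : Continuous θ := continuous_iff_continuousAt.2 fun τ => (hθ τ).continuousAt
    fun_prop
  weight_pos τ := mul_pos (hνpos _) (mul_pos (hνpos _) (hapos _))
  exists_deriv := by
    obtain ⟨ut, ux, q, hderiv⟩ := hu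
    refine ⟨fun t τ => ut t (θ τ), fun t τ => ν (θ τ) * a (θ τ) * ux t (θ τ),
      fun t τ => q t (θ τ) * (ν (θ τ) * a (θ τ)), fun t ht τ => ?_⟩
    obtain ⟨htime, hspace, hflux, heq⟩ := hderiv t ht (θ τ)
    refine ⟨htime, ?_, hflux.comp τ (hθ τ), ?_⟩
    · exact (hspace.comp τ (hθ τ)).congr_deriv (mul_comm _ _)
    · linear_combination ν (θ τ) * a (θ τ) * heq
  nonneg t ht τ := hnonneg t ht _
  lowerSemicontinuousAt t ht τ := by
    have hθc : ContinuousAt (fun p : ℝ × ℝ => (p.1, θ p.2)) (t, τ) :=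
      continuousAt_fst.prodMk ((hθ τ).continuousAt.comp (continuousAt_snd (p := (t, τ))))
    exact (hlsc t ht (θ τ)).comp (g := fun p : ℝ × ℝ => (p.1, θ p.2)) hθc

namespace IsFundSol

theorem nonneg (hP : IsFundSol ν a W P) (ht : 0 < t) (x y : ℝ) : 0 ≤ P t x y := hP.2.1 y t ht x

theorem continuous_space (hP : IsFundSol ν a W P) (ht : 0 < t) (y : ℝ) :
    Continuous fun x => P t x y := by
  obtain ⟨_, _, _, hderiv⟩ := hP.1 y
  exact continuous_iff_continuousAt.2 fun x => (hderiv t ht x).2.1.continuousAt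

theorem continuousAt_time (hP : IsFundSol ν a W P) (ht : 0 < t) (x y : ℝ) :
    ContinuousAt (fun s => P s x y) t := by
  obtain ⟨_, _, _, hderiv⟩ := hP.1 y
  exact (hderiv t ht x).1.continuousAt

theorem integral_mul_mul (hP : IsFundSol ν a W P) (hs : 0 < s) (ht : 0 < t) (x y : ℝ) :
    ∫ z, ν z * P t x z * P s z y = P (t + s) x y := (hP.2.2.2.2 s t hs ht x y).symm

theorem integrable_mul_mul (hP : IsFundSol ν a W P) (hs : 0 < s) (ht : 0 < t) {x y : ℝ}
    (hne : P (t + s) x y ≠ 0) : Integrable fun z => ν z * P t x z * P s z y := by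
  by_contra hint
  exact hne (by rw [← hP.integral_mul_mul hs ht, integral_undef hint])

/-- The equation only gives separate continuity in `t` and `x`; Chapman–Kolmogorov and Fatou's
lemma upgrade it to joint lower semicontinuity. -/
theorem lowerSemicontinuousAt (hP : IsFundSol ν a W P) (hν : ∀ x, 0 ≤ ν x) (ht : 0 < t)
    (x y : ℝ) : LowerSemicontinuousAt (fun p : ℝ × ℝ => P p.1 p.2 y) (t, x) := by
  have ht₂ : 0 < t / 2 := half_pos ht
  refine lowerSemicontinuousAt_of_forall_level (w := fun s x => P s x y) (half_lt_self ht)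
    (fun z s hs => (hP.continuousAt_time (ht₂.trans hs) z y).continuousWithinAt)
    (hP.continuous_space ht y).continuousAt
    (fun s hs z => hP.nonneg (ht₂.trans hs) z y) fun d hd s z hs hst hzx hsz => ?_
  have hs₂ (n : ℕ) : 0 < s n - t / 2 := sub_pos.2 (hs n)
  have heq (n : ℕ) : P (t / 2 + (s n - t / 2)) (z n) y = d := by rw [add_sub_cancel, hsz]
  have hle := integral_le_of_tendsto_of_integral_eq
    (F := fun n ζ => ν ζ * P (t / 2) (z n) ζ * P (s n - t / 2) ζ y)
    (f := fun ζ => ν ζ * P (t / 2) x ζ * P (t / 2) ζ y)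
    (fun n => hP.integrable_mul_mul (hs₂ n) ht₂ ((heq n).trans_ne hd.ne'))
    (fun n ζ => mul_nonneg (mul_nonneg (hν ζ) (hP.nonneg ht₂ _ _)) (hP.nonneg (hs₂ n) _ _))
    (fun ζ => ?_) (fun n => (hP.integral_mul_mul (hs₂ n) ht₂ _ _).trans (heq n))
  · rwa [hP.integral_mul_mul ht₂ ht₂, add_halves] at hle
  · have hst₂ : Tendsto (fun n => s n - t / 2) atTop (𝓝 (t / 2)) := by
      simpa only [sub_half] using hst.sub_const (t / 2)
    exact ((((hP.continuous_space ht₂ ζ).tendsto x).comp hzx).const_mul (ν ζ)).mul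
      ((hP.continuousAt_time ht₂ ζ y).tendsto.comp hst₂)

theorem exists_normalizedSolution (hP : IsFundSol ν a W P) (hμ : 1 ≤ μ) (hν : Continuous ν)
    (ha : Continuous a) (hνμ : Elliptic μ ν) (haμ : Elliptic μ a) (hW : 0 ≤ W) (x y : ℝ) :
    ∃ (θ ρ : ℝ → ℝ) (τ : ℝ), θ τ = x ∧
      NormalizedSolution W (μ * (μ * μ)) ρ fun t τ => P t (θ τ) y := by
  have hμ₀ : 0 < μ := one_pos.trans_le hμ
  have hνa := hνμ.mul haμ hμ₀ hμ₀
  have hνa₀ := hνa.pos (mul_pos hμ₀ hμ₀)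
  obtain ⟨θ, hbij, hθ⟩ := exists_bijective_hasDerivAt_comp_self
    (m := fun x => ν x * a x) (hν.mul ha) hνa₀ fun x => (hνa x).2
  obtain ⟨τ, hτ⟩ := hbij.2 x
  have hsol := (hP.1 y).nonnegSolution_comp hW hν ha (hνμ.pos hμ₀) (haμ.pos hμ₀) hθ
    (fun t ht x => hP.nonneg ht x y)
    (fun t ht x => hP.lowerSemicontinuousAt (fun z => (hνμ.pos hμ₀ z).le) ht x y)
  refine ⟨θ, fun τ => ν (θ τ) * (ν (θ τ) * a (θ τ)), τ, hτ, { hsol with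
    one_le := one_le_mul_of_one_le_of_one_le hμ (one_le_mul_of_one_le_of_one_le hμ hμ)
    elliptic := fun τ => hνμ.mul hνa hμ₀ (mul_pos hμ₀ hμ₀) (θ τ)
    mass := fun t ht => ?_ }⟩
  have hchange := integral_image_eq_integral_abs_deriv_smul MeasurableSet.univ
    (fun τ _ => (hθ τ).hasDerivWithinAt) hbij.1.injOn (fun x => ν x * P t x y)
  rw [image_univ, hbij.2.range_eq, setIntegral_univ, setIntegral_univ, hP.2.2.1 y t ht] at hchange
  rw [hchange]
  refine integral_congr_ae (.of_forall fun τ => ?_)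
  simp only [abs_of_pos (hνa₀ _), smul_eq_mul]
  ring

theorem pos (hP : IsFundSol ν a W P) (hμ : 1 ≤ μ) (hν : Continuous ν)
    (ha : Continuous a) (hνμ : Elliptic μ ν) (haμ : Elliptic μ a) (hW : 0 ≤ W) (ht : 0 < t)
    (x y : ℝ) : 0 < P t x y := by
  obtain ⟨θ, ρ, τ, rfl, hsol⟩ := hP.exists_normalizedSolution hμ hν ha hνμ haμ hW x y
  exact hsol.pos ht τ

theorem le_div_sqrt (hP : IsFundSol ν a W P) (hμ : 1 ≤ μ) (hν : Continuous ν)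
    (ha : Continuous a) (hνμ : Elliptic μ ν) (haμ : Elliptic μ a) (hW : 0 ≤ W) (ht : 0 < t)
    (x y : ℝ) : P t x y ≤ √(6 * (μ * (μ * μ))) / √t := by
  obtain ⟨θ, ρ, τ, rfl, hsol⟩ := hP.exists_normalizedSolution hμ hν ha hνμ haμ hW x y
  exact hsol.le_sqrt_div_sqrt ht τ

/-- The definition imposes no measurability of `P t x ·`; it follows from Chapman–Kolmogorov on
dividing by the continuous function `P s · y`. -/
theorem aestronglyMeasurable_mul (hP : IsFundSol ν a W P) (ht : 0 < t)
    (hpos : ∀ s, 0 < s → ∀ x y, 0 < P s x y) (x : ℝ) :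
    AEStronglyMeasurable fun z => ν z * P t x z := by
  have hint := hP.integrable_mul_mul one_pos ht (hpos (t + 1) (by positivity) x 0).ne'
  have hinv : Continuous fun z => (P 1 z 0)⁻¹ :=
    (hP.continuous_space one_pos 0).inv₀ fun z => (hpos 1 one_pos z 0).ne'
  refine (hint.aestronglyMeasurable.mul hinv.aestronglyMeasurable).congr (.of_forall fun z => ?_)
  exact mul_inv_cancel_right₀ (hpos 1 one_pos z 0).ne' _

end IsFundSol

namespace DriftHeat

/-- If `k * f` is not integrable then neither is `k * g`, and both integrals have the junk
value `0`. -/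
theorem abs_integral_mul_sub_integral_mul_le {α : Type*} [MeasurableSpace α] {m : Measure α}
    {k f g : α → ℝ} {C : ℝ} (hk : AEStronglyMeasurable k m) (hC : ∀ z, |k z| ≤ C)
    (hC₀ : 0 ≤ C) (hfg : Integrable (fun z => f z - g z) m) :
    |(∫ z, k z * f z ∂m) - ∫ z, k z * g z ∂m| ≤ C * ∫ z, |f z - g z| ∂m := by
  have hdiff : Integrable (fun z => k z * f z - k z * g z) m := by
    simpa only [mul_sub] using hfg.bdd_mul hk (.of_forall hC)
  by_cases hf : Integrable (fun z => k z * f z) m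
  · have hg : Integrable (fun z => k z * g z) m :=
      (hf.sub hdiff).congr (.of_forall fun z => sub_sub_cancel _ _)
    rw [← integral_sub hf hg, ← integral_const_mul]
    refine abs_integral_le_integral_abs.trans (integral_mono hdiff.abs (hfg.abs.const_mul C) ?_)
    intro z
    simp only [← mul_sub, abs_mul]
    gcongr
    exact hC z
  · have hg : ¬Integrable (fun z => k z * g z) m := fun hg =>
      hf ((hg.add hdiff).congr (.of_forall fun z => add_sub_cancel _ _))
    rw [integral_undef hf, integral_undef hg, sub_zero, abs_zero]
    exact mul_nonneg hC₀ (integral_nonneg fun _ => abs_nonneg _)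

end DriftHeat

theorem l1_linfty_estimate_general {p₀ q₀ : ℝ → ℝ} (hμ : 1 ≤ μ) (hν : Continuous ν)
    (ha : Continuous a) (hνμ : Elliptic μ ν) (haμ : Elliptic μ a) (hW : 0 ≤ W)
    (hP : IsFundSol ν a W P) (hpq : Integrable fun y => p₀ y - q₀ y) (ht : 0 < t) (x : ℝ) :
    |(∫ y, ν y * P t x y * p₀ y) - ∫ y, ν y * P t x y * q₀ y| ≤
      μ * √(6 * (μ * (μ * μ))) / √t * ∫ y, |p₀ y - q₀ y| := by
  have hμ₀ : 0 < μ := one_pos.trans_le hμ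
  have hmeas : AEStronglyMeasurable fun y => ν y * P t x y :=
    hP.aestronglyMeasurable_mul ht (fun s hs => hP.pos hμ hν ha hνμ haμ hW hs) x
  have hbound (y : ℝ) : |ν y * P t x y| ≤ μ * √(6 * (μ * (μ * μ))) / √t := by
    rw [abs_of_nonneg (mul_nonneg (hνμ.pos hμ₀ y).le (hP.nonneg ht x y)), mul_div_assoc]
    exact mul_le_mul (hνμ y).2 (hP.le_div_sqrt hμ hν ha hνμ haμ hW ht x y)
      (hP.nonneg ht x y) hμ₀.le
  exact abs_integral_mul_sub_integral_mul_le hmeas hbound (by positivity) hpq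

/-- Proposition 1.4 (L¹–L∞ continuity): for every `μ ≥ 1` there is `C > 0`,
independent of `W`, such that two solutions of the canonical equation with bounded data
`p₀, q₀` and `p₀ − q₀ ∈ L¹` satisfy
`sup_x |p(t,x) − q(t,x)| ≤ (C/√t)·‖p₀ − q₀‖_{L¹}` for every `t > 0`. -/
theorem l1_linfty_estimate (μ : ℝ) (hμ : 1 ≤ μ) :
    ∃ C : ℝ, 0 < C ∧ ∀ ν a : ℝ → ℝ, Continuous ν → Continuous a →
      Elliptic μ ν → Elliptic μ a →
      ∀ W : ℝ, 0 ≤ W →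
      ∀ P : ℝ → ℝ → ℝ → ℝ, IsFundSol ν a W P →
      ∀ p₀ q₀ : ℝ → ℝ, (∃ B : ℝ, ∀ x, |p₀ x| ≤ B) → (∃ B : ℝ, ∀ x, |q₀ x| ≤ B) →
      Integrable (fun y => p₀ y - q₀ y) →
      ∀ t : ℝ, 0 < t → ∀ x : ℝ,
        |(∫ y : ℝ, ν y * P t x y * p₀ y) - ∫ y : ℝ, ν y * P t x y * q₀ y| ≤
          C / Real.sqrt t * ∫ y : ℝ, |p₀ y - q₀ y| := by
  refine ⟨μ * √(6 * (μ * (μ * μ))), by positivity, fun ν a hν ha hνμ haμ W hW P hP p₀ q₀ _ _ => ?_⟩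
  exact fun hpq t ht => l1_linfty_estimate_general hμ hν ha hνμ haμ hW hP hpq ht
end

section
/- Two-sided bounds for the resolvent Green function (Proposition of Section 1.4): There exists, for every C₀ > 0, a constant C > 0 depending only on C₀ with the following property. Let W > 0, λ > 0, let T : ℝ → ℝ be any function, and let P : (0,∞) × ℝ × ℝ → ℝ be measurable in t and satisfy, for all t > 0 and x, y ∈ ℝ, (1/(C₀ t^{1/2}))·exp(−C₀|T(x) − T(y) − Wt|²/t) ≤ P(t,x,y) ≤ (C₀/t^{1/2})·exp(−|T(x) − T(y) − Wt|²/(C₀ t)). Define G_λ(x,y) := ∫₀^∞ e^{−λW²t} P(t,x,y) dt. Then for all x, y ∈ ℝ with T(x) ≥ T(y): (1/(W C √(λ+C)))·exp(−2W√C(√(λ+C) − √C)(T(x) − T(y))) ≤ G_λ(x,y) ≤ (C/(W√(λC+1)))·exp(−(2W/C)(√(λC+1) − 1)(T(x) − T(y))). -/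
open MeasureTheory

/-!
Completing the square turns the Laplace transform of a drifted Gaussian into an integral of
`t ^ (-1/2) * exp (-(a² t + b² / t))` over `t > 0`, which has an explicit antiderivative built from
the substitutions `a √t ± b / √t` in `∫ exp (-s²)`. With `k` the Gaussian constant and `D` the
displacement, the value is `√π / (W √(lam + k)) * exp (-2 W r(k) D)`, where
`r(k) = √k (√(lam + k) - √k)`. Both sides of the theorem are multiples of this expression, the lower
one at `k = C` and the upper one at `k = 1 / C`. It is antitone in `k`, since
`2 r(k) = lam - (√(lam + k) - √k)²` and `√(lam + k) - √k = lam / (√(lam + k) + √k)`. So any `C` that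
dominates `C₀`, `1 / C₀` and `π C₀²` works.
-/

section

open Real Set Filter Topology

theorem integral_Ioi_of_hasDerivAt_of_nonneg_of_tendsto {g g' : ℝ → ℝ} {a l m : ℝ}
    (hderiv : ∀ x ∈ Ioi a, HasDerivAt g (g' x) x) (hg' : ∀ x ∈ Ioi a, 0 ≤ g' x)
    (ha : Tendsto g (𝓝[>] a) (𝓝 m)) (htop : Tendsto g atTop (𝓝 l)) :
    ∫ x in Ioi a, g' x = l - m := by
  have hcont : ContinuousWithinAt (Function.update g a m) (Ici a) a := by
    rwa [continuousWithinAt_update_same, Ici_sdiff_left]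
  have heq : EqOn (Function.update g a m) g (Ioi a) :=
    fun x hx ↦ Function.update_of_ne (ne_of_gt hx) _ _
  have h := integral_Ioi_of_hasDerivAt_of_nonneg hcont
    (fun x hx ↦ (hderiv x hx).congr_of_eventuallyEq (heq.eventuallyEq_of_mem (Ioi_mem_nhds hx)))
    hg' (htop.congr' (heq.symm.eventuallyEq_of_mem (Ioi_mem_atTop a)))
  simpa using h

/-- The primitive of `exp (-s ^ 2)` vanishing at `0`, that is `√π / 2` times the error function. -/
noncomputable def gaussianPrimitive (x : ℝ) : ℝ :=
  ∫ s in (0 : ℝ)..x, exp (-s ^ 2)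

theorem gaussianPrimitive_zero : gaussianPrimitive 0 = 0 :=
  intervalIntegral.integral_same

theorem gaussianPrimitive_neg (x : ℝ) : gaussianPrimitive (-x) = -gaussianPrimitive x := by
  have h := intervalIntegral.integral_comp_neg (a := 0) (b := x) fun s : ℝ ↦ exp (-s ^ 2)
  simp only [even_two.neg_pow, neg_zero] at h
  rw [gaussianPrimitive, gaussianPrimitive, h, intervalIntegral.integral_symm]

theorem hasDerivAt_gaussianPrimitive (x : ℝ) :
    HasDerivAt gaussianPrimitive (exp (-x ^ 2)) x :=
  (show Continuous fun s : ℝ ↦ exp (-s ^ 2) by fun_prop).integral_hasStrictDerivAt 0 x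
    |>.hasDerivAt

theorem tendsto_gaussianPrimitive_atTop : Tendsto gaussianPrimitive atTop (𝓝 (√π / 2)) := by
  have hint : Integrable fun s : ℝ ↦ exp (-s ^ 2) := by
    simpa using integrable_exp_neg_mul_sq one_pos
  have hval : ∫ s in Ioi (0 : ℝ), exp (-s ^ 2) = √π / 2 := by
    simpa using integral_gaussian_Ioi 1
  rw [← hval]
  exact intervalIntegral_tendsto_integral_Ioi 0 hint.integrableOn tendsto_id

theorem tendsto_gaussianPrimitive_atBot : Tendsto gaussianPrimitive atBot (𝓝 (-(√π / 2))) :=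
  (tendsto_gaussianPrimitive_atTop.comp tendsto_neg_atBot_atTop).neg.congr fun x ↦ by
    rw [Function.comp_apply, gaussianPrimitive_neg, neg_neg]

/-- Half of an antiderivative of `a * t ^ (-1/2) * exp (-(a ^ 2 * t + b ^ 2 / t))`: the other half
is obtained by replacing `b` with `-b`. -/
noncomputable def glasserPrimitive (a b t : ℝ) : ℝ :=
  exp (-(2 * a * b)) * gaussianPrimitive (a * √t - b * (√t)⁻¹)

theorem hasDerivAt_glasserPrimitive (a b : ℝ) {t : ℝ} (ht : 0 < t) :
    HasDerivAt (glasserPrimitive a b)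
      ((a + b / t) / 2 * ((√t)⁻¹ * exp (-(a ^ 2 * t + b ^ 2 / t)))) t := by
  have hs : 0 < √t := sqrt_pos.2 ht
  have hts : √t ^ 2 = t := sq_sqrt ht.le
  have hsqrt := hasDerivAt_sqrt ht.ne'
  have hinner := (hsqrt.const_mul a).sub ((hsqrt.inv hs.ne').const_mul b)
  refine (((hasDerivAt_gaussianPrimitive _).comp t hinner).const_mul _).congr_deriv ?_
  have hexp : exp (-(2 * a * b)) * exp (-(a * √t - b * (√t)⁻¹) ^ 2) =
      exp (-(a ^ 2 * t + b ^ 2 / t)) := by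
    rw [← exp_add, ← hts, sqrt_sq hs.le]
    congr 1
    field_simp
    ring
  have hfactor : a * (1 / (2 * √t)) - b * (-(1 / (2 * √t)) / √t ^ 2) =
      (a + b / t) / 2 * (√t)⁻¹ := by
    rw [hts]
    field_simp
    ring
  simp only [Pi.sub_apply, Pi.inv_apply]
  rw [← mul_assoc, hexp, hfactor, mul_comm, mul_assoc]

theorem tendsto_sqrt_nhdsGT_zero : Tendsto (fun t : ℝ ↦ √t) (𝓝[>] 0) (𝓝[>] 0) := by
  refine tendsto_nhdsWithin_iff.2 ⟨?_, eventually_mem_of_tendsto_nhdsWithin tendsto_id |>.mono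
    fun t ht ↦ sqrt_pos.2 ht⟩
  simpa using (continuous_sqrt.tendsto 0).mono_left nhdsWithin_le_nhds

theorem tendsto_glasserPrimitive_atTop {a : ℝ} (ha : 0 < a) (b : ℝ) :
    Tendsto (glasserPrimitive a b) atTop (𝓝 (exp (-(2 * a * b)) * (√π / 2))) := by
  have hinv : Tendsto (fun t : ℝ ↦ -(b * (√t)⁻¹)) atTop (𝓝 0) := by
    simpa using ((tendsto_inv_atTop_zero.comp tendsto_sqrt_atTop).const_mul b).neg
  refine (tendsto_gaussianPrimitive_atTop.comp ?_).const_mul _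
  simpa only [sub_eq_add_neg] using (tendsto_sqrt_atTop.const_mul_atTop ha).atTop_add hinv

theorem tendsto_glasserPrimitive_nhdsGT_zero (a b : ℝ) :
    Tendsto (glasserPrimitive a b) (𝓝[>] 0)
      (𝓝 (exp (-(2 * a * b)) * (-b.sign * (√π / 2)))) := by
  refine Tendsto.const_mul _ ?_
  have hsqrt : Tendsto (fun t : ℝ ↦ a * √t) (𝓝[>] 0) (𝓝 0) := by
    simpa using (tendsto_nhds_of_tendsto_nhdsWithin tendsto_sqrt_nhdsGT_zero).const_mul a
  have hinv : Tendsto (fun t : ℝ ↦ (√t)⁻¹) (𝓝[>] 0) atTop :=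
    tendsto_inv_nhdsGT_zero.comp tendsto_sqrt_nhdsGT_zero
  rcases lt_trichotomy b 0 with hb | rfl | hb
  · have harg := hsqrt.add_atTop (hinv.const_mul_atTop (neg_pos.2 hb))
    simpa [sign_of_neg hb, Function.comp_def, sub_eq_add_neg] using
      tendsto_gaussianPrimitive_atTop.comp harg
  · have hcont := (hasDerivAt_gaussianPrimitive 0).continuousAt.tendsto
    simpa [gaussianPrimitive_zero, Function.comp_def] using hcont.comp hsqrt
  · have harg := hsqrt.add_atBot (hinv.const_mul_atTop_of_neg (neg_neg_of_pos hb))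
    simpa [sign_of_pos hb, Function.comp_def, sub_eq_add_neg] using
      tendsto_gaussianPrimitive_atBot.comp harg

theorem integral_inv_sqrt_mul_exp_neg_add_div {a : ℝ} (ha : 0 < a) (b : ℝ) :
    ∫ t in Ioi (0 : ℝ), (√t)⁻¹ * exp (-(a ^ 2 * t + b ^ 2 / t)) =
      √π / a * exp (-(2 * a * |b|)) := by
  have hderiv : ∀ t ∈ Ioi (0 : ℝ), HasDerivAt
      (fun t ↦ glasserPrimitive a b t + glasserPrimitive a (-b) t)
      (a * ((√t)⁻¹ * exp (-(a ^ 2 * t + b ^ 2 / t)))) t := fun t ht ↦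
    ((hasDerivAt_glasserPrimitive a b ht).add
      (hasDerivAt_glasserPrimitive a (-b) ht)).congr_deriv (by rw [neg_sq]; ring)
  have h := integral_Ioi_of_hasDerivAt_of_nonneg_of_tendsto hderiv (fun t _ ↦ by positivity)
    ((tendsto_glasserPrimitive_nhdsGT_zero a b).add (tendsto_glasserPrimitive_nhdsGT_zero a (-b)))
    ((tendsto_glasserPrimitive_atTop ha b).add (tendsto_glasserPrimitive_atTop ha (-b)))
  rw [integral_const_mul] at h
  rw [div_mul_eq_mul_div, eq_div_iff ha.ne', mul_comm, h]
  rcases lt_trichotomy b 0 with hb | rfl | hb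
  · rw [abs_of_neg hb, sign_of_neg hb, sign_of_pos (neg_pos.2 hb)]
    ring
  · simp
  · rw [abs_of_pos hb, sign_of_pos hb, sign_of_neg (neg_neg_of_pos hb)]
    ring

/-- The unnormalized Gaussian heat kernel with constant `k` and drift `W`, at time `t` and
displacement `D`. -/
noncomputable def driftGaussian (W k D t : ℝ) : ℝ :=
  (√t)⁻¹ * exp (-k * |D - W * t| ^ 2 / t)

/-- The rate of exponential decay, per unit of `2 * W * D`, of the Green function of
`driftGaussian W k`. -/
noncomputable def driftRate (lam k : ℝ) : ℝ :=
  √k * (√(lam + k) - √k)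

/-- The Green function of `driftGaussian W k` at level `lam * W ^ 2` for displacements `0 ≤ D`,
without its factor `√π`. -/
noncomputable def driftGreen (W lam k D : ℝ) : ℝ :=
  (W * √(lam + k))⁻¹ * exp (-(2 * W * driftRate lam k * D))

variable {W lam k k' D : ℝ}

theorem driftGreen_pos (hW : 0 < W) (hlk : 0 < lam + k) : 0 < driftGreen W lam k D := by
  have := sqrt_pos.2 hlk
  unfold driftGreen
  positivity

theorem integral_exp_mul_driftGaussian (hW : 0 < W) (hk : 0 ≤ k) (hlk : 0 < lam + k)
    (hD : 0 ≤ D) :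
    ∫ t in Ioi (0 : ℝ), exp (-lam * W ^ 2 * t) * driftGaussian W k D t =
      √π * driftGreen W lam k D := by
  have : 0 < √(lam + k) := sqrt_pos.2 hlk
  have hsk : √k ^ 2 = k := sq_sqrt hk
  have hsquare : ∀ t ∈ Ioi (0 : ℝ), exp (-lam * W ^ 2 * t) * driftGaussian W k D t =
      exp (2 * k * W * D) *
        ((√t)⁻¹ * exp (-((W * √(lam + k)) ^ 2 * t + (√k * D) ^ 2 / t))) := by
    intro t ht
    have ht : t ≠ 0 := ne_of_gt ht
    rw [driftGaussian, mul_left_comm, mul_left_comm (exp (2 * k * W * D)), ← exp_add, ← exp_add,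
      sq_abs, mul_pow, mul_pow, hsk, sq_sqrt hlk.le]
    congr 2
    field_simp
    ring
  rw [setIntegral_congr_fun measurableSet_Ioi hsquare, integral_const_mul,
    integral_inv_sqrt_mul_exp_neg_add_div (by positivity), abs_of_nonneg (by positivity),
    mul_left_comm, ← exp_add, driftGreen, driftRate, div_eq_mul_inv, mul_assoc]
  congr 3
  linear_combination (-2 * W * D) * hsk

theorem integrableOn_exp_mul_driftGaussian (hW : 0 < W) (hk : 0 ≤ k) (hlk : 0 < lam + k)
    (hD : 0 ≤ D) :
    IntegrableOn (fun t ↦ exp (-lam * W ^ 2 * t) * driftGaussian W k D t) (Ioi 0) := by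
  refine Integrable.of_integral_ne_zero ?_
  rw [integral_exp_mul_driftGaussian hW hk hlk hD]
  exact (mul_pos (sqrt_pos.2 pi_pos) (driftGreen_pos hW hlk)).ne'

theorem integral_exp_mul_mem_Icc_of_driftGaussian_bounds {k₁ k₂ c₁ c₂ : ℝ} {p : ℝ → ℝ}
    (hW : 0 < W) (hk₁ : 0 ≤ k₁) (hk₂ : 0 ≤ k₂) (hlk₁ : 0 < lam + k₁) (hlk₂ : 0 < lam + k₂)
    (hD : 0 ≤ D) (hp : AEStronglyMeasurable p (volume.restrict (Ioi 0)))
    (hbounds : ∀ t, 0 < t → p t ∈ Icc (c₁ * driftGaussian W k₁ D t) (c₂ * driftGaussian W k₂ D t)) :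
    ∫ t in Ioi (0 : ℝ), exp (-lam * W ^ 2 * t) * p t ∈
      Icc (c₁ * (√π * driftGreen W lam k₁ D)) (c₂ * (√π * driftGreen W lam k₂ D)) := by
  set μ : Measure ℝ := volume.restrict (Ioi 0)
  have hlower : (fun t ↦ c₁ * (exp (-lam * W ^ 2 * t) * driftGaussian W k₁ D t)) ≤ᵐ[μ]
      fun t ↦ exp (-lam * W ^ 2 * t) * p t :=
    ae_restrict_of_forall_mem measurableSet_Ioi fun t ht ↦ by
      simpa only [mul_left_comm c₁] using
        mul_le_mul_of_nonneg_left (hbounds t ht).1 (exp_pos _).le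
  have hupper : (fun t ↦ exp (-lam * W ^ 2 * t) * p t) ≤ᵐ[μ]
      fun t ↦ c₂ * (exp (-lam * W ^ 2 * t) * driftGaussian W k₂ D t) :=
    ae_restrict_of_forall_mem measurableSet_Ioi fun t ht ↦ by
      simpa only [mul_left_comm c₂] using
        mul_le_mul_of_nonneg_left (hbounds t ht).2 (exp_pos _).le
  have hint₁ := (integrableOn_exp_mul_driftGaussian hW hk₁ hlk₁ hD).const_mul c₁
  have hint₂ := (integrableOn_exp_mul_driftGaussian hW hk₂ hlk₂ hD).const_mul c₂
  have hmeas : AEStronglyMeasurable (fun t ↦ exp (-lam * W ^ 2 * t) * p t) μ :=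
    (Continuous.aestronglyMeasurable (by fun_prop)).mul hp
  have hint := integrable_of_le_of_le hmeas hlower hupper hint₁ hint₂
  rw [← integral_exp_mul_driftGaussian hW hk₁ hlk₁ hD,
    ← integral_exp_mul_driftGaussian hW hk₂ hlk₂ hD, ← integral_const_mul, ← integral_const_mul]
  exact ⟨integral_mono_ae hint₁ hint hlower, integral_mono_ae hint hint₂ hupper⟩

theorem driftRate_eq (hk : 0 < k) (hlk : 0 ≤ lam + k) :
    driftRate lam k = (lam - (lam / (√(lam + k) + √k)) ^ 2) / 2 := by
  have hsum : 0 < √(lam + k) + √k := by positivity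
  have hsk : √k ^ 2 = k := sq_sqrt hk.le
  have hslk : √(lam + k) ^ 2 = lam + k := sq_sqrt hlk
  have hdiff : lam / (√(lam + k) + √k) = √(lam + k) - √k := by
    rw [div_eq_iff hsum.ne']
    linear_combination hsk - hslk
  rw [hdiff, driftRate]
  linear_combination (hslk - hsk) / 2

theorem driftRate_mono (hk : 0 < k) (hlk : 0 ≤ lam + k) (h : k ≤ k') :
    driftRate lam k ≤ driftRate lam k' := by
  rw [driftRate_eq hk hlk, driftRate_eq (hk.trans_le h) (by linarith), div_pow, div_pow]
  gcongr

theorem driftGreen_anti (hW : 0 < W) (hk : 0 < k) (hlk : 0 < lam + k) (hD : 0 ≤ D)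
    (h : k ≤ k') : driftGreen W lam k' D ≤ driftGreen W lam k D := by
  have hrate := driftRate_mono hk hlk.le h
  have : 0 < √(lam + k) := sqrt_pos.2 hlk
  unfold driftGreen
  gcongr

theorem inv_mul_driftGreen :
    k⁻¹ * driftGreen W lam k D =
      1 / (W * k * √(lam + k)) * exp (-2 * W * √k * (√(lam + k) - √k) * D) := by
  rw [driftGreen, driftRate]
  ring_nf

theorem sqrt_mul_driftGreen_inv (hk : 0 < k) :
    √k * driftGreen W lam k⁻¹ D =
      k / (W * √(lam * k + 1)) * exp (-(2 * W / k) * (√(lam * k + 1) - 1) * D) := by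
  have : 0 < √k := sqrt_pos.2 hk
  have hsk : √k ^ 2 = k := sq_sqrt hk.le
  have hsqrt : √(lam + k⁻¹) = √(lam * k + 1) / √k := by
    rw [← sqrt_div' _ hk.le]
    congr 1
    field_simp
  have hrate : driftRate lam k⁻¹ = (√(lam * k + 1) - 1) / k := by
    calc driftRate lam k⁻¹ = (√(lam * k + 1) - 1) / √k ^ 2 := by
          rw [driftRate, hsqrt, sqrt_inv]
          field_simp
      _ = (√(lam * k + 1) - 1) / k := by rw [hsk]
  have hfactor : √k * (W * √(lam + k⁻¹))⁻¹ = k / (W * √(lam * k + 1)) := by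
    calc √k * (W * √(lam + k⁻¹))⁻¹ = √k ^ 2 / (W * √(lam * k + 1)) := by
          rw [hsqrt, mul_inv, inv_div]
          ring
      _ = k / (W * √(lam * k + 1)) := by rw [hsk]
  rw [driftGreen, ← mul_assoc, hfactor, hrate]
  congr 2
  ring

end

/-- Here `p t` stands for `P t x y` and `D` for `T x - T y`. -/
theorem green_function_bounds_general (C₀ : ℝ) (hC₀ : 0 < C₀) :
    ∃ C : ℝ, 0 < C ∧ ∀ W : ℝ, 0 < W → ∀ lam : ℝ, -1 < lam * C → ∀ D : ℝ, 0 ≤ D →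
      ∀ p : ℝ → ℝ, AEStronglyMeasurable p (volume.restrict (Set.Ioi 0)) →
      (∀ t : ℝ, 0 < t →
        1 / (C₀ * √t) * Real.exp (-C₀ * |D - W * t| ^ 2 / t) ≤ p t ∧
        p t ≤ C₀ / √t * Real.exp (-|D - W * t| ^ 2 / (C₀ * t))) →
      1 / (W * C * √(lam + C)) * Real.exp (-2 * W * √C * (√(lam + C) - √C) * D) ≤
          (∫ t in Set.Ioi (0 : ℝ), Real.exp (-lam * W ^ 2 * t) * p t) ∧
        (∫ t in Set.Ioi (0 : ℝ), Real.exp (-lam * W ^ 2 * t) * p t) ≤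
          C / (W * √(lam * C + 1)) *
            Real.exp (-(2 * W / C) * (√(lam * C + 1) - 1) * D) := by
  obtain ⟨C, hC, hC₀C, hinv, hpi⟩ :
      ∃ C : ℝ, 0 < C ∧ C₀ ≤ C ∧ C₀⁻¹ ≤ C ∧ (C₀ * √Real.pi) ^ 2 ≤ C := by
    have : 0 < C₀⁻¹ := inv_pos.2 hC₀
    have : 0 < (C₀ * √Real.pi) ^ 2 := by positivity
    exact ⟨C₀ + C₀⁻¹ + (C₀ * √Real.pi) ^ 2, by linarith, by linarith, by linarith, by linarith⟩
  refine ⟨C, hC, fun W hW lam hlam D hD p hp hbounds ↦ ?_⟩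
  have hCC₀ : C⁻¹ ≤ C₀⁻¹ := inv_anti₀ hC₀ hC₀C
  have hlC : 0 < lam + C⁻¹ := by
    rw [← mul_pos_iff_of_pos_right hC, add_mul, inv_mul_cancel₀ hC.ne']
    linarith
  have hlC₀ : 0 < lam + C₀ := by linarith [inv_le_of_inv_le₀ hC₀ hinv]
  obtain ⟨hlower, hupper⟩ := integral_exp_mul_mem_Icc_of_driftGaussian_bounds (c₁ := C₀⁻¹)
    (c₂ := C₀) hW hC₀.le (inv_pos.2 hC₀).le hlC₀ (by linarith) hD hp fun t ht ↦ by
      refine (hbounds t ht).imp (Eq.trans_le ?_) (Eq.trans_ge ?_) <;>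
        simp only [driftGaussian] <;> ring_nf
  have hone : 1 ≤ √Real.pi := Real.one_le_sqrt.2 (by linarith [Real.pi_gt_three])
  have hsqrt : C₀ * √Real.pi ≤ √C := Real.le_sqrt_of_sq_le hpi
  constructor
  · calc
      _ = C⁻¹ * (1 * driftGreen W lam C D) := by rw [one_mul, inv_mul_driftGreen]
      _ ≤ C₀⁻¹ * (√Real.pi * driftGreen W lam C₀ D) := by
        have := driftGreen_pos (D := D) hW (show 0 < lam + C by linarith)
        gcongr
        exact driftGreen_anti hW hC₀ hlC₀ hD hC₀C
      _ ≤ _ := hlower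
  · calc
      _ ≤ C₀ * (√Real.pi * driftGreen W lam C₀⁻¹ D) := hupper
      _ ≤ √C * driftGreen W lam C⁻¹ D := by
        rw [← mul_assoc]
        have := driftGreen_pos (D := D) hW (show 0 < lam + C₀⁻¹ by linarith)
        gcongr
        exact driftGreen_anti hW (inv_pos.2 hC) hlC hD hCC₀
      _ = _ := sqrt_mul_driftGreen_inv hC

/-- Two-sided bounds for the resolvent Green function
`G_λ(x,y) = ∫₀^∞ e^{−λW²t}P(t,x,y)dt` of a kernel `P` satisfying two-sided Gaussian
bounds with constant `C₀`: for every `C₀ > 0` there is `C > 0` depending only on `C₀`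
such that, whenever `T(x) ≥ T(y)`,
`(1/(WC√(λ+C)))e^{−2W√C(√(λ+C)−√C)(T(x)−T(y))} ≤ G_λ(x,y)
  ≤ (C/(W√(λC+1)))e^{−(2W/C)(√(λC+1)−1)(T(x)−T(y))}`. -/
theorem green_function_bounds (C₀ : ℝ) (hC₀ : 0 < C₀) :
    ∃ C : ℝ, 0 < C ∧ ∀ W : ℝ, 0 < W → ∀ lam : ℝ, 0 < lam →
      ∀ T : ℝ → ℝ, ∀ P : ℝ → ℝ → ℝ → ℝ,
      (∀ x y : ℝ, Measurable fun t => P t x y) →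
      (∀ t : ℝ, 0 < t → ∀ x y : ℝ,
        1 / (C₀ * Real.sqrt t) * Real.exp (-C₀ * |T x - T y - W * t| ^ 2 / t) ≤ P t x y ∧
        P t x y ≤ C₀ / Real.sqrt t * Real.exp (-|T x - T y - W * t| ^ 2 / (C₀ * t))) →
      ∀ x y : ℝ, T y ≤ T x →
        1 / (W * C * Real.sqrt (lam + C)) *
            Real.exp (-2 * W * Real.sqrt C * (Real.sqrt (lam + C) - Real.sqrt C) *
              (T x - T y)) ≤
          (∫ t in Set.Ioi (0 : ℝ), Real.exp (-lam * W ^ 2 * t) * P t x y) ∧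
        (∫ t in Set.Ioi (0 : ℝ), Real.exp (-lam * W ^ 2 * t) * P t x y) ≤
          C / (W * Real.sqrt (lam * C + 1)) *
            Real.exp (-(2 * W / C) * (Real.sqrt (lam * C + 1) - 1) * (T x - T y)) := by
  obtain ⟨C, hC, h⟩ := green_function_bounds_general C₀ hC₀
  exact ⟨C, hC, fun W hW lam hlam T P hP hbounds x y hxy ↦
    h W hW lam (by linarith [mul_pos hlam hC]) (T x - T y) (sub_nonneg.2 hxy) (fun t ↦ P t x y)
      (hP x y).aestronglyMeasurable fun t ht ↦ hbounds t ht x y⟩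
end
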